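/- arXiv:2002.07925 — 3 statements merged into one kernel-verified Lean document; each statement's English description precedes it below -/
import Mathlib

section
/- Let G be a planar triangulation on n vertices with no separating triangle, and let H be the planar triangulation obtained from G by adding, for each facial triangle t of G, a new vertex v_t adjacent to the three vertices of t. Then ν(H) ≤ 2n − 4. -/
open SimpleGraph

variable {V : Type*}

/-- A triangle transversal of `G`: a set of edges of `G` meeting every triangle of `G`
(so that its removal leaves a triangle-free graph). -/
def IsTriangleTransversal (G : SimpleGraph V) (X : Finset (Sym2 V)) : Prop :=
  ↑X ⊆ G.edgeSet ∧
    ∀ t : Finset V, G.IsNClique 3 t → ∃ e ∈ X, ∀ v ∈ e, v ∈ t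

/-- A triangle packing of `G`: a set of pairwise edge-disjoint triangles of `G`. -/
def IsTrianglePacking (G : SimpleGraph V) (Y : Finset (Finset V)) : Prop :=
  (∀ t ∈ Y, G.IsNClique 3 t) ∧
    ∀ s ∈ Y, ∀ t ∈ Y, s ≠ t →
      ∀ e ∈ G.edgeSet, ¬ ((∀ v ∈ e, v ∈ s) ∧ (∀ v ∈ e, v ∈ t))

/-- `tau G` is the minimum size of a triangle transversal of `G`. -/
noncomputable def tau (G : SimpleGraph V) : ℕ :=
  sInf {n | ∃ X : Finset (Sym2 V), IsTriangleTransversal G X ∧ X.card = n}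

/-- `nu G` is the maximum size of a triangle packing of `G`. -/
noncomputable def nu (G : SimpleGraph V) : ℕ :=
  sSup {n | ∃ Y : Finset (Finset V), IsTrianglePacking G Y ∧ Y.card = n}

/-- A drawing of the graph `G` in the plane (identified with `ℂ`): vertices are mapped to
distinct points, each edge is realized by a simple continuous arc joining the images of its
endpoints, arcs of distinct edges meet only in common endpoints, and no arc passes through
the image of any other vertex. -/
structure PlaneEmbedding (G : SimpleGraph V) where
  vtx : V → ℂ
  arc : V → V → Set ℂ
  vtx_inj : Function.Injective vtx
  arc_symm : ∀ u v : V, arc u v = arc v u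
  arc_curve : ∀ ⦃u v : V⦄, G.Adj u v → ∃ γ : ℝ → ℂ,
    ContinuousOn γ (Set.Icc 0 1) ∧ Set.InjOn γ (Set.Icc 0 1) ∧
    γ 0 = vtx u ∧ γ 1 = vtx v ∧ arc u v = γ '' Set.Icc 0 1
  arc_inter : ∀ ⦃u v x y : V⦄, G.Adj u v → G.Adj x y → s(u, v) ≠ s(x, y) →
    arc u v ∩ arc x y ⊆ ({vtx u, vtx v} : Set ℂ) ∩ ({vtx x, vtx y} : Set ℂ)
  arc_vtx : ∀ ⦃u v : V⦄, G.Adj u v → ∀ w : V, vtx w ∈ arc u v → w = u ∨ w = v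

/-- The set of points of the plane used by a plane embedding. -/
def PlaneEmbedding.drawing {G : SimpleGraph V} (E : PlaneEmbedding G) : Set ℂ :=
  Set.range E.vtx ∪ ⋃ (u : V) (v : V) (_ : G.Adj u v), E.arc u v

/-- A graph is planar if it admits a plane embedding. -/
def PlanarGraph (G : SimpleGraph V) : Prop := Nonempty (PlaneEmbedding G)

/-- A maximal planar graph (planar triangulation): a planar graph such that adding any
edge between nonadjacent vertices destroys planarity. -/
def MaximalPlanar (G : SimpleGraph V) : Prop :=
  PlanarGraph G ∧ ∀ u v : V, u ≠ v → ¬ G.Adj u v →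
    ¬ PlanarGraph (G ⊔ SimpleGraph.fromEdgeSet {s(u, v)})

/-- `G` has no separating triangle: removing the vertex set of any triangle leaves a
(pre)connected graph.  (In a planar triangulation, the separating triangles are exactly
the non-facial ones.) -/
def NoSeparatingTriangle (G : SimpleGraph V) : Prop :=
  ∀ t : Finset V, G.IsNClique 3 t → (G.induce ((↑t : Set V)ᶜ)).Preconnected

/-- The graph obtained from `G` by adding, for each (facial) triangle `t` of `G`,
a new vertex adjacent exactly to the three vertices of `t`. -/
def stackTriangles (G : SimpleGraph V) :
    SimpleGraph (V ⊕ {t : Finset V // G.IsNClique 3 t}) :=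
  SimpleGraph.fromRel fun a b =>
    (∃ u v : V, a = Sum.inl u ∧ b = Sum.inl v ∧ G.Adj u v) ∨
    (∃ (u : V) (t : {t : Finset V // G.IsNClique 3 t}),
      (a = Sum.inl u ∧ b = Sum.inr t ∨ a = Sum.inr t ∧ b = Sum.inl u) ∧ u ∈ t.1)

/-!
Let `α`, `β` be disjoint paths in the plane. Since `α s - β t` has a continuous logarithm on the
whole square, the numbers of times that `α` and `β`, seen from the ends of the other path, cross
the branch cut of the principal logarithm satisfy a linear relation. If `K₅` were drawn with
disjoint edges on disjoint paths, then adding up the relations of the three splittings of four of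
the points into pairs would give an odd total, but each crossing number occurs twice in the sum
over the five quadruples. So a planar graph contains no five vertices with walks between them
that are disjoint for disjoint pairs.

Graphs without such a configuration have at most `3n - 6` edges: in a minimal counterexample,
deleting a vertex and contracting an edge show that some vertex has at least one and at most five
neighbours and that each of these shares three neighbours with it, which yields the
configuration. Without separating triangles no edge lies in three triangles either, since the
third vertices together with the ends of the edge would form the configuration. Hence `G` has at
most `2(3n - 6) / 3 = 2n - 4` triangles.

Finally, each triangle of `H` lies in the `K₄` formed by a triangle `t` of `G` and the vertex
stacked on it, and two triangles in a `K₄` share an edge, so a packing of `H` is no larger than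
the number of triangles of `G`.
-/

/-! ### Crossings of the branch cut of the logarithm -/

theorem exists_continuousMap_exp_eq {A : Type*} [TopologicalSpace A] [SimplyConnectedSpace A]
    [LocallyPathConnectedSpace A] {f : A → ℂ} (hf : Continuous f) (h0 : ∀ a, f a ≠ 0) :
    ∃ L : C(A, ℂ), ∀ a, Complex.exp (L a) = f a := by
  obtain ⟨a₀⟩ : Nonempty A := inferInstance
  obtain ⟨L, ⟨-, hL⟩, -⟩ := Complex.isCoveringMapOn_exp.existsUnique_continuousMap_lifts
    ⟨f, hf⟩ (Complex.exp_log (h0 a₀)) h0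
  exact ⟨L, congrFun hL⟩

theorem sub_eq_sub_of_exp_eq {A : Type*} [TopologicalSpace A] [PreconnectedSpace A] {L M : C(A, ℂ)}
    (h : ∀ a, Complex.exp (L a) = Complex.exp (M a)) (a b : A) : L a - M a = L b - M b :=
  Complex.isCoveringMap_exp.const_of_comp (L - M).continuous
    (fun a b => Subtype.ext (by simp [Complex.exp_sub, h])) a b

/-- The signed number of times a path `f` in `ℂ \ {0}`, parametrized by `[0, 1]`, crosses the
branch cut of `Complex.log`: a continuous logarithm of `f` gains `2πi` times this number over the
increment of `Complex.log`. It is arbitrary if `f` has no continuous logarithm on `ℝ`. -/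
noncomputable def branchCrossings (f : ℝ → ℂ) : ℤ :=
  Classical.epsilon fun n => ∃ L : C(ℝ, ℂ), (∀ s, Complex.exp (L s) = f s) ∧
    L 1 - L 0 = Complex.log (f 1) - Complex.log (f 0) + 2 * n * (Real.pi * Complex.I)

theorem sub_eq_log_sub_log_add_branchCrossings {f : ℝ → ℂ} {L : C(ℝ, ℂ)}
    (hL : ∀ s, Complex.exp (L s) = f s) :
    L 1 - L 0 =
      Complex.log (f 1) - Complex.log (f 0) + 2 * branchCrossings f * (Real.pi * Complex.I) := by
  have branch (s : ℝ) : ∃ n : ℤ, L s = Complex.log (f s) + n * (2 * Real.pi * Complex.I) := by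
    rw [← Complex.exp_eq_exp_iff_exists_int, ← hL s, Complex.exp_log (Complex.exp_ne_zero _)]
  obtain ⟨m, hm⟩ := branch 1
  obtain ⟨n, hn⟩ := branch 0
  obtain ⟨M, hM, hM_sub⟩ := Classical.epsilon_spec (p := fun n : ℤ => ∃ L : C(ℝ, ℂ),
    (∀ s, Complex.exp (L s) = f s) ∧
    L 1 - L 0 = Complex.log (f 1) - Complex.log (f 0) + 2 * n * (Real.pi * Complex.I))
    ⟨m - n, L, hL, by rw [hm, hn]; push_cast; ring⟩
  have hLM := sub_eq_sub_of_exp_eq (fun s => (hL s).trans (hM s).symm) 1 0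
  rw [branchCrossings, ← hM_sub]
  linear_combination hLM

/-- The sign in `log z - log (-z) = ±πi`, the jump between the principal logarithms of `z` and
`-z`. -/
noncomputable def branchSign (z : ℂ) : ℤ := if 0 < z.arg then 1 else -1

theorem odd_branchSign (z : ℂ) : Odd (branchSign z) := by
  unfold branchSign
  split_ifs <;> decide

theorem arg_sub_arg_neg {z : ℂ} (hz : z ≠ 0) : z.arg - (-z).arg = branchSign z * Real.pi := by
  unfold branchSign
  split_ifs with h
  · have hneg : (-z).arg = z.arg - Real.pi := by
      rw [Complex.arg_neg_eq_arg_sub_pi_iff]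
      have him := Complex.arg_nonneg_iff.mp h.le
      have hre := mt Complex.arg_eq_zero_iff.mpr h.ne'
      grind
    simp [hneg]
  · have hneg : (-z).arg = z.arg + Real.pi := by
      rw [Complex.arg_neg_eq_arg_add_pi_iff]
      rw [Ne, Complex.ext_iff, Complex.zero_re, Complex.zero_im] at hz
      obtain h | h := (not_lt.mp h).lt_or_eq
      · exact .inl (Complex.arg_neg_iff.mp h)
      · grind [Complex.arg_eq_zero_iff]
    simp [hneg]

theorem log_sub_log_neg {z : ℂ} (hz : z ≠ 0) :
    Complex.log z - Complex.log (-z) = branchSign z * (Real.pi * Complex.I) := by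
  simp only [Complex.log, norm_neg]
  rw [add_sub_add_left_eq_sub, ← sub_mul, ← Complex.ofReal_sub, arg_sub_arg_neg hz]
  push_cast
  ring

theorem branchSign_neg {z : ℂ} (hz : z ≠ 0) : branchSign (-z) = -branchSign z := by
  have h := log_sub_log_neg (neg_ne_zero.mpr hz)
  rw [neg_neg, ← neg_sub, log_sub_log_neg hz, ← neg_mul] at h
  have hpi : (Real.pi * Complex.I : ℂ) ≠ 0 := by simp [Real.pi_ne_zero]
  exact_mod_cast (mul_right_cancel₀ hpi h).symm

theorem branchCrossings_square {α β : ℝ → ℂ} (hα : Continuous α) (hβ : Continuous β)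
    (hαβ : ∀ s t, α s ≠ β t) :
    branchSign (α 1 - β 1) - branchSign (α 0 - β 1) - branchSign (α 1 - β 0)
        + branchSign (α 0 - β 0) =
      2 * (branchCrossings (fun t => β t - α 1) - branchCrossings (fun t => β t - α 0)
        - branchCrossings (fun s => α s - β 1) + branchCrossings (fun s => α s - β 0)) := by
  obtain ⟨F, hF⟩ := exists_continuousMap_exp_eq (A := ℝ × ℝ) (f := fun q => α q.1 - β q.2)
    (by fun_prop) (fun q => sub_ne_zero.mpr (hαβ _ _))
  have row (t : ℝ) := sub_eq_log_sub_log_add_branchCrossings (f := fun s => α s - β t)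
    (L := ⟨fun s => F (s, t), by fun_prop⟩) fun s => hF (s, t)
  have column (s : ℝ) := sub_eq_log_sub_log_add_branchCrossings (f := fun t => β t - α s)
    (L := ⟨fun t => F (s, t) + Real.pi * Complex.I, by fun_prop⟩) fun t => by
      simp [Complex.exp_add, hF (s, t)]
  have flip (s t : ℝ) : Complex.log (α s - β t) - Complex.log (β t - α s) =
      branchSign (α s - β t) * (Real.pi * Complex.I) := by
    rw [← log_sub_log_neg (sub_ne_zero.mpr (hαβ s t)), neg_sub]
  have hpi : (Real.pi * Complex.I : ℂ) ≠ 0 := by simp [Real.pi_ne_zero]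
  have row₀ := row 0
  have row₁ := row 1
  have column₀ := column 0
  have column₁ := column 1
  simp only [ContinuousMap.coe_mk] at row₀ row₁ column₀ column₁
  rw [← Int.cast_inj (α := ℂ), ← mul_left_inj' hpi]
  push_cast
  linear_combination row₀ - row₁ + column₁ - column₀ - flip 1 1 + flip 0 1 + flip 1 0 - flip 0 0

/-- The signed number of times the path `γ i j`, seen from the point `p k`, crosses the branch cut
of `Complex.log`. -/
noncomputable def edgeCrossings {ι : Type*} {p : ι → ℂ} (γ : ∀ i j, Path (p i) (p j))
    (i j k : ι) : ℤ :=
  branchCrossings fun s => (γ i j).extend s - p k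

/-- The almost-embedding condition on a drawing of the complete graph on `ι`: the paths of two
edges without a common end are disjoint. Edges are drawn once in each direction, and the two paths
need not be related. -/
def PairwiseAvoiding {ι : Type*} {p : ι → ℂ} (γ : ∀ i j, Path (p i) (p j)) : Prop :=
  ∀ a b c d, [a, b, c, d].Nodup → Disjoint (Set.range (γ a b)) (Set.range (γ c d))

theorem PairwiseAvoiding.branchSign_eq {ι : Type*} {p : ι → ℂ} {γ : ∀ i j, Path (p i) (p j)}
    (hγ : PairwiseAvoiding γ) {a b c d : ι} (h : [a, b, c, d].Nodup) :
    branchSign (p b - p d) - branchSign (p a - p d) - branchSign (p b - p c)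
        + branchSign (p a - p c) =
      2 * (edgeCrossings γ c d b - edgeCrossings γ c d a
        - edgeCrossings γ a b d + edgeCrossings γ a b c) := by
  have hdisj (s t : ℝ) : (γ a b).extend s ≠ (γ c d).extend t := by
    refine (hγ a b c d h).ne_of_mem ?_ ?_ <;> rw [← Path.extend_range] <;> exact ⟨_, rfl⟩
  simpa [edgeCrossings] using
    branchCrossings_square (γ a b).continuous_extend (γ c d).continuous_extend hdisj

theorem PairwiseAvoiding.odd_sum_edgeCrossings {ι : Type*} {p : ι → ℂ}
    {γ : ∀ i j, Path (p i) (p j)} (hγ : PairwiseAvoiding γ) {a b c d : ι}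
    (h : [a, b, c, d].Nodup) :
    Odd ((edgeCrossings γ a b c + edgeCrossings γ a b d
        + edgeCrossings γ c d a + edgeCrossings γ c d b)
      + (edgeCrossings γ a c b + edgeCrossings γ a c d
        + edgeCrossings γ b d a + edgeCrossings γ b d c)
      + (edgeCrossings γ a d b + edgeCrossings γ a d c
        + edgeCrossings γ b c a + edgeCrossings γ b c d)) := by
  have ne_of_nodup {i j k l : ι} (hijkl : [i, j, k, l].Nodup) : p i - p k ≠ 0 := by
    refine sub_ne_zero.mpr ((hγ i j k l hijkl).ne_of_mem ?_ ?_)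
    · exact ⟨0, (γ i j).source⟩
    · exact ⟨0, (γ k l).source⟩
  have hab_cd := hγ.branchSign_eq h
  have hac_bd := hγ.branchSign_eq (show [a, c, b, d].Nodup by grind)
  have had_bc := hγ.branchSign_eq (show [a, d, b, c].Nodup by grind)
  have flip_bc := branchSign_neg (ne_of_nodup (show [b, a, c, d].Nodup by grind))
  have flip_bd := branchSign_neg (ne_of_nodup (show [b, a, d, c].Nodup by grind))
  have flip_cd := branchSign_neg (ne_of_nodup (show [c, a, d, b].Nodup by grind))
  rw [neg_sub] at flip_bc flip_bd flip_cd
  have odd_ab := odd_branchSign (p a - p b)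
  have odd_ad := odd_branchSign (p a - p d)
  have odd_bd := odd_branchSign (p b - p d)
  rw [Int.odd_iff] at *
  omega

theorem not_pairwiseAvoiding_fin_five {p : Fin 5 → ℂ} (γ : ∀ i j, Path (p i) (p j)) :
    ¬ PairwiseAvoiding γ := by
  intro hγ
  have h₀ := hγ.odd_sum_edgeCrossings (show [(1 : Fin 5), 2, 3, 4].Nodup by decide)
  have h₁ := hγ.odd_sum_edgeCrossings (show [(0 : Fin 5), 2, 3, 4].Nodup by decide)
  have h₂ := hγ.odd_sum_edgeCrossings (show [(0 : Fin 5), 1, 3, 4].Nodup by decide)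
  have h₃ := hγ.odd_sum_edgeCrossings (show [(0 : Fin 5), 1, 2, 4].Nodup by decide)
  have h₄ := hγ.odd_sum_edgeCrossings (show [(0 : Fin 5), 1, 2, 3].Nodup by decide)
  -- Every summand `edgeCrossings γ i j k` occurs for exactly two of the five quadruples.
  rw [Int.odd_iff] at *
  omega

/-! ### Weak clique minors -/

/-- Two vertices are joined by a walk that avoids `X`. -/
def JoinedOff (G : SimpleGraph V) (X : Set V) (a b : V) : Prop :=
  ∃ p : G.Walk a b, ∀ z ∈ p.support, z ∉ X

theorem JoinedOff.of_adj {G : SimpleGraph V} {X : Set V} {a b : V} (h : G.Adj a b) (ha : a ∉ X)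
    (hb : b ∉ X) : JoinedOff G X a b :=
  ⟨h.toWalk, by simp [ha, hb]⟩

theorem JoinedOff.mono {G : SimpleGraph V} {X Y : Set V} {a b : V} (h : JoinedOff G Y a b)
    (hXY : X ⊆ Y) : JoinedOff G X a b :=
  h.imp fun _ hp z hz hzX => hp z hz (hXY hzX)

theorem JoinedOff.trans {G : SimpleGraph V} {X : Set V} {a b c : V} (hab : JoinedOff G X a b)
    (hbc : JoinedOff G X b c) : JoinedOff G X a c := by
  obtain ⟨p, hp⟩ := hab
  obtain ⟨q, hq⟩ := hbc
  exact ⟨p.append q, fun z hz => ((Walk.mem_support_append_iff p q).mp hz).elim (hp z) (hq z)⟩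

theorem exists_walk_of_walk_map {W : Type*} {G : SimpleGraph V} {f : V → W}
    (hf : ∀ u v, f u = f v → ∃ w : G.Walk u v, ∀ z ∈ w.support, f z = f u)
    {a b : W} (p : (G.map f).Walk a b) (u v : V) (hu : f u = a) (hv : f v = b) :
    ∃ w : G.Walk u v, ∀ z ∈ w.support, f z ∈ p.support := by
  induction p generalizing u with
  | nil =>
    obtain ⟨w, hw⟩ := hf u v (hu.trans hv.symm)
    exact ⟨w, fun z hz => by simp [hw z hz, hu]⟩
  | cons h p ih =>
    obtain ⟨-, u', v', huv, hu', hv'⟩ := id h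
    obtain ⟨w₁, h₁⟩ := hf u u' (hu.trans hu'.symm)
    obtain ⟨w₂, h₂⟩ := ih v' hv' hv
    refine ⟨w₁.append (Walk.cons huv w₂), fun z hz => ?_⟩
    rw [Walk.mem_support_append_iff, Walk.support_cons, List.mem_cons] at hz
    rw [Walk.support_cons, List.mem_cons]
    rcases hz with hz | rfl | hz
    · exact .inl ((h₁ z hz).trans hu)
    · exact .inl hu'
    · exact .inr (h₂ z hz)

theorem adj_sumElim_of_isLeft {ι : Type*} {G : SimpleGraph V} {u v : V} (huv : G.Adj u v)
    {w : ι → V} (hw : ∀ k, w k ∈ G.commonNeighbors u v) {i j : Fin 2 ⊕ ι} (hij : i ≠ j)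
    (h : i.isLeft ∨ j.isLeft) : G.Adj (Sum.elim ![u, v] w i) (Sum.elim ![u, v] w j) := by
  have hubs : ∀ i j, i ≠ j → G.Adj (![u, v] i) (![u, v] j) := by
    simp [Fin.forall_fin_two, huv, huv.symm]
  have spokes (k : ι) : ∀ i, G.Adj (![u, v] i) (w k) := Fin.forall_fin_two.mpr (hw k)
  rcases i with i | i <;> rcases j with j | j
  · exact hubs i j fun h => hij (congrArg _ h)
  · exact spokes j i
  · exact (spokes i j).symm
  · simp at h

/-- A weak form of a complete minor on `ι`: branch vertices `x i` and walks between any two of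
them such that the walks of disjoint pairs are disjoint. Walks of pairs that share an index may
meet anywhere, so this is the combinatorial counterpart of an almost embedding. -/
def HasWeakCliqueMinor (ι : Type*) (G : SimpleGraph V) : Prop :=
  ∃ (x : ι → V) (p : ∀ i j, G.Walk (x i) (x j)),
    ∀ a b c d, [a, b, c, d].Nodup → (p a b).support.Disjoint (p c d).support

namespace HasWeakCliqueMinor

variable {ι W : Type*} {G : SimpleGraph V}

theorem map {H : SimpleGraph W} (φ : G →g H) (hφ : Function.Injective φ)
    (h : HasWeakCliqueMinor ι G) : HasWeakCliqueMinor ι H := by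
  obtain ⟨x, p, hp⟩ := h
  refine ⟨φ ∘ x, fun i j => (p i j).map φ, fun a b c d hnodup => ?_⟩
  simpa only [Walk.support_map] using List.disjoint_map hφ (hp a b c d hnodup)

theorem of_map {f : V → W} (hsurj : Function.Surjective f)
    (hf : ∀ u v, f u = f v → ∃ w : G.Walk u v, ∀ z ∈ w.support, f z = f u)
    (h : HasWeakCliqueMinor ι (G.map f)) : HasWeakCliqueMinor ι G := by
  obtain ⟨x, p, hp⟩ := h
  obtain ⟨g, hg⟩ := hsurj.hasRightInverse
  choose q hq using fun i j => exists_walk_of_walk_map hf (p i j) (g (x i)) (g (x j)) (hg _) (hg _)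
  exact ⟨g ∘ x, q, fun a b c d hnodup z hz hz' =>
    hp a b c d hnodup (hq a b z hz) (hq c d z hz')⟩

theorem of_adj_or {x : ι → V} (hx : Function.Injective x)
    (hjoin : ∀ i j, i ≠ j → ¬ G.Adj (x i) (x j) → JoinedOff G (x '' {i, j}ᶜ) (x i) (x j))
    (hadj : ∀ a b c d, [a, b, c, d].Nodup → G.Adj (x a) (x b) ∨ G.Adj (x c) (x d)) :
    HasWeakCliqueMinor ι G := by
  have hwalk (i j : ι) : ∃ p : G.Walk (x i) (x j),
      (G.Adj (x i) (x j) → p.support = [x i, x j]) ∧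
      (i ≠ j → ∀ k, k ≠ i → k ≠ j → x k ∉ p.support) := by
    by_cases h : G.Adj (x i) (x j)
    · exact ⟨h.toWalk, fun _ => rfl, by simp +contextual [hx.eq_iff]⟩
    · obtain rfl | hij := eq_or_ne i j
      · exact ⟨.nil, (absurd · h), by simp⟩
      · obtain ⟨p, hp⟩ := hjoin i j hij h
        exact ⟨p, (absurd · h), fun _ k hi hj hk => hp _ hk ⟨k, by simp [hi, hj], rfl⟩⟩
  choose p hp_adj hp using hwalk
  refine ⟨x, p, fun a b c d h => ?_⟩
  simp only [List.nodup_cons, List.mem_cons, List.not_mem_nil, or_false, not_or] at h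
  obtain hab | hcd := hadj a b c d (by simp [h])
  · rw [hp_adj a b hab]
    simp [hp c d, h]
  · rw [hp_adj c d hcd, List.disjoint_comm]
    simp [hp a b, h, Ne.symm]

theorem reindex {κ : Type*} (e : κ ↪ ι) (h : HasWeakCliqueMinor ι G) :
    HasWeakCliqueMinor κ G := by
  obtain ⟨x, p, hp⟩ := h
  exact ⟨x ∘ e, fun i j => p (e i) (e j), fun a b c d hnodup =>
    hp _ _ _ _ (hnodup.map e.injective)⟩

theorem of_commonNeighbors {u v : V} (huv : G.Adj u v) (w : Fin 3 ↪ G.commonNeighbors u v)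
    (hjoin : ∀ i j k, [i, j, k].Nodup → JoinedOff G {u, v, ↑(w k)} (w i) (w j)) :
    HasWeakCliqueMinor (Fin 5) G := by
  let x : Fin 2 ⊕ Fin 3 → V := Sum.elim ![u, v] fun k => w k
  have hadj (i j) (hij : i ≠ j) (h : i.isLeft ∨ j.isLeft) : G.Adj (x i) (x j) :=
    adj_sumElim_of_isLeft huv (fun k => (w k).2) hij h
  have hx : Function.Injective x := by
    refine .sumElim (fun i j hij => ?_) (Subtype.val_injective.comp w.injective)
      fun i k => (hadj (.inl i) (.inr k) Sum.inl_ne_inr (.inl rfl)).ne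
    by_contra h
    exact (hadj (.inl i) (.inl j) (Sum.inl_injective.ne h) (.inl rfl)).ne hij
  refine (of_adj_or hx (fun i j hij hn => ?_) fun a b c d h => ?_).reindex
    (finSumFinEquiv (m := 2) (n := 3)).symm.toEmbedding
  · obtain ⟨i, rfl⟩ := Sum.isRight_iff.mp (by grind : i.isRight)
    obtain ⟨j, rfl⟩ := Sum.isRight_iff.mp (by grind : j.isRight)
    obtain ⟨k, hk⟩ : ∃ k, [i, j, k].Nodup := by
      have hij : i ≠ j := fun h => hij (congrArg _ h)
      clear hn hjoin
      decide +revert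
    refine (hjoin i j k hk).mono ?_
    rintro _ ⟨l | l, hl, rfl⟩
    · revert l
      simp [Fin.forall_fin_two, x]
    · have : l = k := by grind
      simp [this, x]
  · have exists_left : ∀ a b c d : Fin 2 ⊕ Fin 3, [a, b, c, d].Nodup →
        (a.isLeft ∨ b.isLeft) ∨ (c.isLeft ∨ d.isLeft) := by decide
    have hne : a ≠ b ∧ c ≠ d := by simp_all [List.nodup_cons]
    exact (exists_left a b c d h).imp (hadj a b hne.1) (hadj c d hne.2)

end HasWeakCliqueMinor

/-! ### Planar drawings -/

namespace PlaneEmbedding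

variable {G : SimpleGraph V} (E : PlaneEmbedding G)

/-- The part of the drawing spanned by a set of vertices: their points and the arcs between them.
-/
def region (S : Set V) : Set ℂ :=
  {z | (∃ v ∈ S, z = E.vtx v) ∨ ∃ u ∈ S, ∃ v ∈ S, G.Adj u v ∧ z ∈ E.arc u v}

theorem region_mono {S T : Set V} (h : S ⊆ T) : E.region S ⊆ E.region T := by
  rintro z (⟨v, hv, hz⟩ | ⟨u, hu, v, hv, hz⟩)
  · exact .inl ⟨v, h hv, hz⟩
  · exact .inr ⟨u, h hu, v, h hv, hz⟩

theorem disjoint_arc {u v x y : V} (huv : G.Adj u v) (hxy : G.Adj x y)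
    (h : Disjoint ({u, v} : Set V) {x, y}) : Disjoint (E.arc u v) (E.arc x y) := by
  have hne : s(u, v) ≠ s(x, y) := by
    intro he
    have hu : u ∈ s(x, y) := he ▸ Sym2.mem_mk_left u v
    exact Set.disjoint_left.mp h (.inl rfl) (Sym2.mem_iff.mp hu)
  rw [← Set.disjoint_image_iff E.vtx_inj, Set.image_pair, Set.image_pair,
    Set.disjoint_iff] at h
  exact Set.disjoint_iff.mpr ((E.arc_inter huv hxy hne).trans h)

theorem disjoint_region {S T : Set V} (h : Disjoint S T) :
    Disjoint (E.region S) (E.region T) := by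
  rw [Set.disjoint_left]
  rintro z (⟨v, hv, rfl⟩ | ⟨u, hu, v, hv, huv, hz⟩) (⟨x, hx, hzx⟩ | ⟨x, hx, y, hy, hxy, hzx⟩)
  · exact h.ne_of_mem hv hx (E.vtx_inj hzx)
  · exact (E.arc_vtx hxy v hzx).elim (h.ne_of_mem hv hx) (h.ne_of_mem hv hy)
  · exact (E.arc_vtx huv x (hzx ▸ hz)).elim (h.ne_of_mem hu hx).symm (h.ne_of_mem hv hx).symm
  · have huv_xy : Disjoint ({u, v} : Set V) {x, y} :=
      h.mono (Set.pair_subset hu hv) (Set.pair_subset hx hy)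
    exact Set.disjoint_left.mp (E.disjoint_arc huv hxy huv_xy) hz hzx

theorem exists_path_of_walk {u v : V} (w : G.Walk u v) :
    ∃ γ : Path (E.vtx u) (E.vtx v), Set.range γ ⊆ E.region {z | z ∈ w.support} := by
  induction w with
  | nil => exact ⟨Path.refl _, by rintro _ ⟨t, rfl⟩; exact .inl ⟨_, by simp, rfl⟩⟩
  | @cons a b c h p ih =>
    obtain ⟨γ, hγ⟩ := ih
    obtain ⟨δ, hδ, -, h0, h1, harc⟩ := E.arc_curve h
    let ε : Path (E.vtx a) (E.vtx b) :=
      ⟨⟨fun t => δ t, hδ.comp_continuous continuous_subtype_val fun t => t.2⟩,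
        by simpa using h0, by simpa using h1⟩
    refine ⟨ε.trans γ, ?_⟩
    rw [Path.trans_range]
    refine Set.union_subset ?_ (hγ.trans (E.region_mono fun z hz => by simp_all))
    rintro _ ⟨t, rfl⟩
    exact .inr ⟨a, by simp, b, by simp, h, harc ▸ ⟨t, t.2, rfl⟩⟩

end PlaneEmbedding

theorem PlanarGraph.not_hasWeakCliqueMinor {G : SimpleGraph V} (hG : PlanarGraph G) :
    ¬ HasWeakCliqueMinor (Fin 5) G := by
  obtain ⟨E⟩ := hG
  rintro ⟨x, p, hp⟩
  choose γ hγ using fun i j => E.exists_path_of_walk (p i j)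
  refine not_pairwiseAvoiding_fin_five γ fun a b c d h => ?_
  exact (E.disjoint_region (Set.disjoint_left.mpr (hp a b c d h))).mono (hγ a b) (hγ c d)

/-! ### The number of edges -/

theorem commonNeighbors_eq_sdiff_of_not_adj {G : SimpleGraph V} {v a b : V}
    [Fintype (G.neighborSet v)] (h5 : G.degree v ≤ 5) (ha : G.Adj v a) (hb : G.Adj v b)
    (hab : a ≠ b) (hn : ¬ G.Adj a b) (h3 : 3 ≤ (G.commonNeighbors v a).ncard) :
    G.commonNeighbors v a = G.neighborSet v \ {a, b} := by
  have hfin : (G.neighborSet v).Finite := Set.toFinite _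
  rw [← G.card_neighborSet_eq_degree, ← Nat.card_eq_fintype_card, Nat.card_coe_set_eq] at h5
  refine Set.eq_of_subset_of_ncard_le ?_ ?_ hfin.sdiff
  · rintro z ⟨hvz, haz⟩
    exact ⟨hvz, by rintro (rfl | rfl); exacts [haz.ne rfl, hn haz]⟩
  · rw [Set.ncard_sdiff (Set.pair_subset (s := G.neighborSet v) ha hb), Set.ncard_pair hab]
    omega

theorem nonempty_fin_embedding_of_le_ncard {s : Set V} {n : ℕ} (h : n ≤ s.ncard) :
    Nonempty (Fin n ↪ s) := by
  obtain rfl | hn := n.eq_zero_or_pos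
  · exact ⟨.ofIsEmpty⟩
  · have := (Set.finite_of_ncard_pos (hn.trans_le h)).fintype
    refine Function.Embedding.nonempty_of_card_le ?_
    rwa [Fintype.card_fin, ← Nat.card_eq_fintype_card, Nat.card_coe_set_eq]

theorem HasWeakCliqueMinor.of_degree_le_five {G : SimpleGraph V} {v : V}
    [Fintype (G.neighborSet v)] (hpos : 0 < G.degree v) (h5 : G.degree v ≤ 5)
    (h3 : ∀ u, G.Adj v u → 3 ≤ (G.commonNeighbors v u).ncard) :
    HasWeakCliqueMinor (Fin 5) G := by
  obtain ⟨u, hu⟩ := (G.degree_pos_iff_exists_adj v).mp hpos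
  obtain ⟨w⟩ := nonempty_fin_embedding_of_le_ncard (h3 u hu)
  refine .of_commonNeighbors hu w fun i j k hijk => ?_
  have hne {l m : Fin 3} (h : l ≠ m) : (w l : V) ≠ w m :=
    fun he => h (w.injective (Subtype.ext he))
  obtain ⟨hij, hik, hjk⟩ : i ≠ j ∧ i ≠ k ∧ j ≠ k := by simp_all [List.nodup_cons]
  have havoid {z : V} (hz : G.Adj v z) (hzu : z ≠ u) (hzk : z ≠ w k) :
      z ∉ ({v, u, ↑(w k)} : Set V) := by simp [hz.ne', hzu, hzk]
  have hw (l : Fin 3) (hl : l ≠ k) : (w l : V) ∉ ({v, u, ↑(w k)} : Set V) :=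
    havoid (w l).2.1 (w l).2.2.ne' (hne hl)
  by_cases hadj : G.Adj (w i) (w j)
  · exact .of_adj hadj (hw i hik) (hw j hjk)
  have hi := commonNeighbors_eq_sdiff_of_not_adj h5 (w i).2.1 (w j).2.1 (hne hij) hadj
    (h3 _ (w i).2.1)
  have hj := commonNeighbors_eq_sdiff_of_not_adj h5 (w j).2.1 (w i).2.1 (hne hij.symm)
    (fun h => hadj h.symm) (h3 _ (w j).2.1)
  obtain ⟨t, ht, htuk⟩ := Set.exists_mem_notMem_of_ncard_lt_ncard
    (s := {u, ↑(w k)}) (t := G.commonNeighbors v (w i))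
    ((Set.ncard_insert_le _ _).trans_lt (by simpa using Nat.lt_of_succ_le (h3 _ (w i).2.1)))
  have htj : t ∈ G.commonNeighbors v (w j) := by rwa [hj, Set.pair_comm, ← hi]
  simp only [Set.mem_insert_iff, Set.mem_singleton_iff, not_or] at htuk
  have ht_avoid := havoid ht.1 htuk.1 htuk.2
  exact (JoinedOff.of_adj ht.2 (hw i hik) ht_avoid).trans (.of_adj htj.2.symm ht_avoid (hw j hjk))

theorem exists_surjective_identifying {x y : V} (hxy : x ≠ y) :
    ∃ f : V → {v // v ≠ y}, Function.Surjective f ∧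
      ∀ u v, f u = f v → u = v ∨ s(u, v) = s(x, y) := by
  classical
  refine ⟨fun v => if h : v = y then ⟨x, hxy⟩ else ⟨v, h⟩, fun v => ⟨v, dif_neg v.2⟩,
    fun u v huv => ?_⟩
  have := congrArg Subtype.val huv
  grind [Sym2.eq_iff]

theorem ncard_edgeSet_le_ncard_edgeSet_map_add [Finite V] {W : Type*} (G : SimpleGraph V)
    {f : V → W} {x y : V} (hf : ∀ u v, f u = f v → u = v ∨ s(u, v) = s(x, y)) :
    G.edgeSet.ncard ≤ (G.map f).edgeSet.ncard + (G.commonNeighbors x y).ncard + 1 := by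
  let B : Set (Sym2 V) := insert s(x, y) ((fun z => s(y, z)) '' G.commonNeighbors x y)
  have hB : B.ncard ≤ (G.commonNeighbors x y).ncard + 1 :=
    (Set.ncard_insert_le _ _).trans (Nat.succ_le_succ (Set.ncard_image_le))
  have hmaps : ∀ e ∈ G.edgeSet \ B, Sym2.map f e ∈ (G.map f).edgeSet := by
    rintro ⟨a, b⟩ ⟨hab, hB⟩
    exact ⟨fun h => (hf a b h).elim hab.ne fun h => hB (.inl h), a, b, hab, rfl, rfl⟩
  -- Two edges that `f` merges are `s(x, z)` and `s(y, z)`, and the latter lies in `B`.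
  have hinj : Set.InjOn (Sym2.map f) (G.edgeSet \ B) := by
    rintro ⟨a, b⟩ ⟨hab, hB⟩ ⟨c, d⟩ ⟨hcd, hB'⟩ he
    simp only [mem_edgeSet, B, Set.mem_insert_iff, Set.mem_image, mem_commonNeighbors,
      not_or, not_exists, not_and, Sym2.eq_iff] at hab hB hcd hB'
    simp only [Sym2.map_mk, Sym2.eq_iff] at he hf
    have hab' := hab.symm
    have hcd' := hcd.symm
    have hne := hab.ne
    have hne' := hcd.ne
    change s(a, b) = s(c, d)
    rw [Sym2.eq_iff]
    rcases he with ⟨h₁, h₂⟩ | ⟨h₁, h₂⟩ <;>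
      have h₁ := hf _ _ h₁ <;> have h₂ := hf _ _ h₂ <;> grind
  have hfin : (G.map f).edgeSet.Finite := by
    refine (Set.toFinite (Sym2.map f '' G.edgeSet)).subset ?_
    rintro ⟨-, -⟩ ⟨-, u, v, huv, rfl, rfl⟩
    exact ⟨s(u, v), huv, rfl⟩
  have hle := Set.ncard_le_ncard_of_injOn (Sym2.map f) hmaps hinj hfin
  have := Set.ncard_le_ncard_sdiff_add_ncard G.edgeSet B
  omega

theorem exists_le_ncard_edgeSet_eq {G : SimpleGraph V} {k : ℕ} (hk : k ≤ G.edgeSet.ncard) :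
    ∃ H ≤ G, H.edgeSet.ncard = k := by
  obtain ⟨X, hXG, hXk⟩ := Set.exists_subset_card_eq hk
  have hX : (fromEdgeSet X).edgeSet = X := by
    rw [edgeSet_fromEdgeSet, sdiff_eq_left, ← Set.subset_compl_iff_disjoint_right]
    exact hXG.trans G.edgeSet_subset_compl_diagSet
  exact ⟨fromEdgeSet X, edgeSet_subset_edgeSet.mp (hX.symm ▸ hXG), hX.symm ▸ hXk⟩

theorem exists_degree_lt_of_two_mul_ncard_edgeSet_lt [Fintype V] {G : SimpleGraph V}
    [DecidableRel G.Adj] {k : ℕ} (h : 2 * G.edgeSet.ncard < k * Fintype.card V) :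
    ∃ v, G.degree v < k := by
  by_contra! hk
  rw [← coe_edgeFinset, Set.ncard_coe_finset, ← sum_degrees_eq_twice_card_edges] at h
  have := Finset.card_nsmul_le_sum Finset.univ _ k fun v _ => hk v
  rw [Finset.card_univ, smul_eq_mul, mul_comm] at this
  omega

theorem ncard_edgeSet_induce_compl_singleton_add_degree [Fintype V] (G : SimpleGraph V)
    [DecidableRel G.Adj] (v : V) :
    (G.induce {v}ᶜ).edgeSet.ncard + G.degree v = G.edgeSet.ncard := by
  classical
  simp only [← coe_edgeFinset, Set.ncard_coe_finset]
  rw [card_edgeFinset_induce_compl_singleton, card_edgeFinset_deleteIncidenceSet]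
  exact Nat.sub_add_cancel (G.degree_le_card_edgeFinset v)

theorem ncard_edgeSet_add_six_le [Fintype V] {G : SimpleGraph V}
    (hG : ¬ HasWeakCliqueMinor (Fin 5) G) (hV : 3 ≤ Fintype.card V) :
    G.edgeSet.ncard + 6 ≤ 3 * Fintype.card V := by
  classical
  obtain ⟨n, hn⟩ : ∃ n, Fintype.card V = n := ⟨_, rfl⟩
  rw [hn] at hV ⊢
  induction n, hV using Nat.le_induction generalizing V with
  | base =>
    have := G.card_edgeFinset_le_card_choose_two
    rw [hn, show Nat.choose 3 2 = 3 from rfl] at this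
    rw [← coe_edgeFinset, Set.ncard_coe_finset]
    omega
  | succ n h3n ih =>
    by_contra! hlt
    obtain ⟨H, hHG, hH⟩ := exists_le_ncard_edgeSet_eq (G := G) (k := 3 * n - 2) (by omega)
    have card_ne (y : V) : Fintype.card {v // v ≠ y} = n := by
      rw [Fintype.card_subtype_compl, hn, Fintype.card_subtype_eq, Nat.add_sub_cancel]
    refine hG (HasWeakCliqueMinor.map (Hom.ofLE hHG) (fun _ _ h => h) ?_)
    by_contra hH_minor
    obtain ⟨v, hv⟩ : ∃ v, H.degree v < 6 :=
      exists_degree_lt_of_two_mul_ncard_edgeSet_lt (by omega)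
    have hdeg : 0 < H.degree v := by
      have := ih (G := H.induce {v}ᶜ)
        (fun h => hH_minor (h.map (Embedding.induce _).toHom Subtype.val_injective)) (card_ne v)
      have := ncard_edgeSet_induce_compl_singleton_add_degree H v
      omega
    refine hH_minor (.of_degree_le_five hdeg (by omega) fun u huv => ?_)
    obtain ⟨f, hsurj, hf⟩ := exists_surjective_identifying huv.ne
    have hfib : ∀ a b, f a = f b → ∃ p : H.Walk a b, ∀ z ∈ p.support, f z = f a := by
      intro a b hab
      obtain rfl | h := hf a b hab
      · exact ⟨.nil, by simp⟩
      · have hadj : H.Adj a b := by rwa [← mem_edgeSet, h]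
        exact ⟨hadj.toWalk, by simp [hab]⟩
    have := ih (G := H.map f) (fun h => hH_minor (.of_map hsurj hfib h)) (card_ne u)
    have := ncard_edgeSet_le_ncard_edgeSet_map_add H hf
    omega

/-! ### Triangles -/

theorem NoSeparatingTriangle.joinedOff {G : SimpleGraph V} (h : NoSeparatingTriangle G)
    {a b c u v : V} (hab : G.Adj a b) (hac : G.Adj a c) (hbc : G.Adj b c)
    (hu : u ∉ ({a, b, c} : Set V)) (hv : v ∉ ({a, b, c} : Set V)) :
    JoinedOff G {a, b, c} u v := by
  classical
  have ht : G.IsNClique 3 {a, b, c} := is3Clique_triple_iff.mpr ⟨hab, hac, hbc⟩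
  obtain ⟨p⟩ := h _ ht ⟨u, by simpa using hu⟩ ⟨v, by simpa using hv⟩
  refine ⟨p.map (Embedding.induce _).toHom, fun z hz => ?_⟩
  obtain ⟨y, -, rfl⟩ := List.mem_map.mp (Walk.support_map .. ▸ hz)
  simpa using y.2

theorem NoSeparatingTriangle.ncard_commonNeighbors_le_two {G : SimpleGraph V}
    (h : NoSeparatingTriangle G) (hG : ¬ HasWeakCliqueMinor (Fin 5) G) {u v : V}
    (huv : G.Adj u v) : (G.commonNeighbors u v).ncard ≤ 2 := by
  by_contra! h2
  obtain ⟨w⟩ := nonempty_fin_embedding_of_le_ncard (Nat.succ_le_of_lt h2)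
  refine hG (.of_commonNeighbors huv w fun i j k hijk => ?_)
  have hw (l : Fin 3) (hl : l ≠ k) : (w l : V) ∉ ({u, v, ↑(w k)} : Set V) := by
    simp [(w l).2.1.ne', (w l).2.2.ne', Subtype.val_inj, hl]
  exact h.joinedOff huv (w k).2.1 (w k).2.2 (hw i (by grind)) (hw j (by grind))

theorem exists_mem_commonNeighbors_eq [DecidableEq V] {G : SimpleGraph V} {t : Finset V} {u v : V}
    (ht : G.IsNClique 3 t) (hu : u ∈ t) (hv : v ∈ t) (huv : u ≠ v) :
    ∃ w ∈ G.commonNeighbors u v, t = {u, v, w} := by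
  obtain ⟨w, hw, hwuv⟩ := Finset.exists_mem_notMem_of_card_lt_card
    (s := {u, v}) (t := t) (by rw [Finset.card_pair huv, ht.card_eq]; decide)
  obtain ⟨hwu, hwv⟩ : w ≠ u ∧ w ≠ v := by simpa using hwuv
  have hsub : {u, v, w} ⊆ t := by simp [Finset.insert_subset_iff, hu, hv, hw]
  refine ⟨w, ⟨ht.isClique hu hw hwu.symm, ht.isClique hv hw hwv.symm⟩,
    (Finset.eq_of_subset_of_card_le hsub ?_).symm⟩
  rw [ht.card_eq, Finset.card_eq_three.mpr ⟨u, v, w, huv, hwu.symm, hwv.symm, rfl⟩]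

open Finset in
theorem ncard_cliqueSet_three_mul_le [Finite V] {G : SimpleGraph V} {k : ℕ}
    (hk : ∀ u v, G.Adj u v → (G.commonNeighbors u v).ncard ≤ k) :
    (G.cliqueSet 3).ncard * 3 ≤ G.edgeSet.ncard * k := by
  classical
  have := Fintype.ofFinite V
  rw [← coe_cliqueFinset, ← coe_edgeFinset, Set.ncard_coe_finset, Set.ncard_coe_finset]
  refine card_mul_le_card_mul (fun t e => ∀ v ∈ e, v ∈ t) (fun t ht => ?_) fun e he => ?_
  · rw [mem_cliqueFinset_iff] at ht
    have hpairs : #(t.offDiag.image Sym2.mk.uncurry) = 3 := by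
      rw [Sym2.card_image_offDiag, ht.card_eq]
      rfl
    rw [← hpairs]
    refine card_le_card (image_subset_iff.mpr fun ⟨a, b⟩ hab => ?_)
    obtain ⟨ha, hb, hne⟩ := mem_offDiag.mp hab
    simpa [mem_bipartiteAbove, ha, hb] using ht.isClique ha hb hne
  · induction e using Sym2.ind with | _ u v =>
    rw [mem_edgeFinset, mem_edgeSet] at he
    have hsub : ↑((G.cliqueFinset 3).bipartiteBelow (fun t e => ∀ v ∈ e, v ∈ t) s(u, v)) ⊆
        (fun w => ({u, v, w} : Finset V)) '' G.commonNeighbors u v := by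
      intro t ht
      rw [mem_coe, mem_bipartiteBelow, mem_cliqueFinset_iff] at ht
      obtain ⟨w, hw, rfl⟩ := exists_mem_commonNeighbors_eq ht.1
        (ht.2 u (Sym2.mem_mk_left u v)) (ht.2 v (Sym2.mem_mk_right u v)) he.ne
      exact ⟨w, hw, rfl⟩
    have := Set.ncard_le_ncard hsub
    rw [Set.ncard_coe_finset] at this
    exact this.trans (le_trans Set.ncard_image_le (hk u v he))

theorem IsTrianglePacking.eq_of_subset {G : SimpleGraph V} {Y : Finset (Finset V)}
    (hY : IsTrianglePacking G Y) {K y z : Finset V} (hK : K.card ≤ 4) (hy : y ∈ Y) (hz : z ∈ Y)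
    (hyK : y ⊆ K) (hzK : z ⊆ K) : y = z := by
  classical
  have hinter : 1 < (y ∩ z).card := by
    have := Finset.card_le_card (Finset.union_subset hyK hzK)
    have := Finset.card_union_add_card_inter y z
    have := (hY.1 y hy).card_eq
    have := (hY.1 z hz).card_eq
    omega
  obtain ⟨a, ha, b, hb, hab⟩ := Finset.one_lt_card.mp hinter
  rw [Finset.mem_inter] at ha hb
  by_contra hne
  refine hY.2 y hy z hz hne s(a, b) ((hY.1 y hy).isClique ha.1 hb.1 hab) ?_
  simp [ha, hb]

theorem stackTriangles_adj_inl_inl {G : SimpleGraph V} {u v : V} :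
    (stackTriangles G).Adj (Sum.inl u) (Sum.inl v) ↔ G.Adj u v := by
  have := G.adj_comm u v
  have := G.ne_of_adj (a := u) (b := v)
  simp only [stackTriangles, fromRel_adj]
  grind

theorem stackTriangles_adj_inr_inl {G : SimpleGraph V} {u : V}
    {t : {t : Finset V // G.IsNClique 3 t}} :
    (stackTriangles G).Adj (Sum.inr t) (Sum.inl u) ↔ u ∈ t.1 := by
  simp [stackTriangles, fromRel_adj]

theorem stackTriangles_not_adj_inr_inr {G : SimpleGraph V}
    {s t : {t : Finset V // G.IsNClique 3 t}} :
    ¬ (stackTriangles G).Adj (Sum.inr s) (Sum.inr t) := by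
  simp [stackTriangles, fromRel_adj]

theorem exists_subset_disjSum_of_isNClique_stackTriangles {G : SimpleGraph V}
    {y : Finset (V ⊕ {t : Finset V // G.IsNClique 3 t})}
    (hy : (stackTriangles G).IsNClique 3 y) :
    ∃ t : {t : Finset V // G.IsNClique 3 t}, y ⊆ t.1.disjSum {t} := by
  by_cases h : ∃ t, Sum.inr t ∈ y
  · obtain ⟨t, ht⟩ := h
    refine ⟨t, ?_⟩
    rintro (u | s) ha
    · exact Finset.inl_mem_disjSum.mpr
        (stackTriangles_adj_inr_inl.mp (hy.isClique ht ha Sum.inr_ne_inl))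
    · refine Finset.inr_mem_disjSum.mpr (Finset.mem_singleton.mpr ?_)
      by_contra hne
      exact stackTriangles_not_adj_inr_inr (hy.isClique ha ht fun h => hne (Sum.inr_injective h))
  · have hright : y.toRight = ∅ := by
      ext t
      simpa using fun ht => h ⟨t, ht⟩
    have hleft : G.IsNClique 3 y.toLeft := by
      refine ⟨fun u hu v hv huv => ?_, ?_⟩
      · refine stackTriangles_adj_inl_inl.mp (hy.isClique ?_ ?_ (Sum.inl_injective.ne huv))
        · simpa using hu
        · simpa using hv
      · have := y.card_toLeft_add_card_toRight
        rwa [hright, Finset.card_empty, add_zero, hy.card_eq] at this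
    refine ⟨⟨y.toLeft, hleft⟩, ?_⟩
    rintro (u | t) ha
    · simpa using ha
    · exact (h ⟨t, ha⟩).elim

theorem IsTrianglePacking.card_le_ncard_cliqueSet [Finite V] {G : SimpleGraph V}
    {Y : Finset (Finset (V ⊕ {t : Finset V // G.IsNClique 3 t}))}
    (hY : IsTrianglePacking (stackTriangles G) Y) : Y.card ≤ (G.cliqueSet 3).ncard := by
  have := Fintype.ofFinite {t : Finset V // G.IsNClique 3 t}
  rw [← Nat.card_coe_set_eq]
  change _ ≤ Nat.card {t : Finset V // G.IsNClique 3 t}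
  rw [Nat.card_eq_fintype_card]
  refine Finset.card_le_card_of_forall_subsingleton (fun y t => y ⊆ t.1.disjSum {t})
    (fun y hy => ?_) fun t _ y hy z hz => ?_
  · simpa using exists_subset_disjSum_of_isNClique_stackTriangles (hY.1 y hy)
  · refine hY.eq_of_subset ?_ hy.1 hz.1 hy.2 hz.2
    rw [Finset.card_disjSum, t.2.card_eq, Finset.card_singleton]

theorem nu_stackTriangles_le [Finite V] (G : SimpleGraph V) :
    nu (stackTriangles G) ≤ (G.cliqueSet 3).ncard := by
  refine csSup_le ⟨0, ∅, by simp [IsTrianglePacking], rfl⟩ ?_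
  rintro _ ⟨Y, hY, rfl⟩
  exact hY.card_le_ncard_cliqueSet

theorem nu_stack_le_general [Fintype V] {G : SimpleGraph V}
    (hG : ¬ HasWeakCliqueMinor (Fin 5) G) (hsep : NoSeparatingTriangle G) :
    nu (stackTriangles G) ≤ 2 * Fintype.card V - 4 := by
  refine (nu_stackTriangles_le G).trans ?_
  obtain h | ⟨t, ht⟩ := (G.cliqueSet 3).eq_empty_or_nonempty
  · simp [h]
  · have hV : 3 ≤ Fintype.card V := ht.card_eq ▸ t.card_le_univ
    have hedges := ncard_edgeSet_add_six_le hG hV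
    have htriangles := ncard_cliqueSet_three_mul_le fun u v huv =>
      hsep.ncard_commonNeighbors_le_two hG huv
    omega

/-- Let `G` be a planar triangulation on `n` vertices with no separating triangle
(so that every triangle of `G` is facial), and let `H` be the planar triangulation
obtained from `G` by adding, for each facial triangle `t`, a new vertex adjacent to the
three vertices of `t`.  Then `ν(H) ≤ 2n - 4`. -/
theorem nu_stack_le (V : Type) [Fintype V] (G : SimpleGraph V)
    (hG : MaximalPlanar G) (hsep : NoSeparatingTriangle G) :
    nu (stackTriangles G) ≤ 2 * Fintype.card V - 4 :=
  nu_stack_le_general hG.1.not_hasWeakCliqueMinor hsep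
end

section
/- For an arbitrary planar embedding of a restricted planar 3-tree G with f facial triangles, there exists a set 𝒫 of pairwise edge-disjoint facial triangles of G that contains the external facial triangle and satisfies |𝒫| ≥ ⌈f/3⌉; moreover, if G is super restricted, then such a 𝒫 exists with |𝒫| = 5. -/
open SimpleGraph

variable {V : Type*}

/-- A face of a plane embedding: a connected component of the complement of the drawing. -/
def PlaneEmbedding.IsFace {G : SimpleGraph V} (E : PlaneEmbedding G) (F : Set ℂ) : Prop :=
  ∃ z ∈ E.drawingᶜ, F = connectedComponentIn E.drawingᶜ z

/-- The union of the arcs of the edges of `G` joining vertices of `t`. -/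
def PlaneEmbedding.triBoundary {G : SimpleGraph V} (E : PlaneEmbedding G)
    (t : Finset V) : Set ℂ :=
  ⋃ (u : V) (_ : u ∈ t) (v : V) (_ : v ∈ t) (_ : G.Adj u v), E.arc u v

/-- `t` is a facial triangle of the embedding `E`: it is a triangle of `G` and some face
of `E` has the drawing of `t` as its boundary. -/
def PlaneEmbedding.IsFacialTriangle {G : SimpleGraph V} (E : PlaneEmbedding G)
    (t : Finset V) : Prop :=
  G.IsNClique 3 t ∧ ∃ F : Set ℂ, E.IsFace F ∧ frontier F = E.triBoundary t

/-- `t` is the external facial triangle of the embedding `E`: it is a triangle of `G`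
bounding the unbounded face of `E`. -/
def PlaneEmbedding.IsExternalFacialTriangle {G : SimpleGraph V} (E : PlaneEmbedding G)
    (t : Finset V) : Prop :=
  G.IsNClique 3 t ∧ ∃ F : Set ℂ, E.IsFace F ∧ ¬ Bornology.IsBounded F ∧
    frontier F = E.triBoundary t

/-- `F` is a face of the plane set `S`: a connected component of its complement. -/
def IsFaceOf (S F : Set ℂ) : Prop := ∃ z ∈ Sᶜ, F = connectedComponentIn Sᶜ z

/-- The sub-drawing of an embedding induced by the vertices in `K` (and the edges
of `G` joining them). -/
def PlaneEmbedding.subDrawing {G : SimpleGraph V} (E : PlaneEmbedding G)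
    (K : Finset V) : Set ℂ :=
  (E.vtx '' ↑K) ∪
    ⋃ (u : V) (_ : u ∈ K) (v : V) (_ : v ∈ K) (_ : G.Adj u v), E.arc u v

/-- The number of vertices of `G` drawn inside the plane region `F`. -/
noncomputable def PlaneEmbedding.insideCount {G : SimpleGraph V} (E : PlaneEmbedding G)
    (F : Set ℂ) : ℕ :=
  {v : V | E.vtx v ∈ F}.ncard

/-- `G` is a 3-tree: it can be built from `K₃` by repeatedly adding a new vertex adjacent
to the three vertices of an existing triangle.  This is expressed via a construction
ordering `e : Fin (n+3) ≃ V`: the first three vertices form a triangle, and every later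
vertex is adjacent, among earlier vertices, to exactly the vertices of a triangle. -/
def Is3Tree (G : SimpleGraph V) : Prop :=
  ∃ (n : ℕ) (e : Fin (n + 3) ≃ V),
    (∀ i j : Fin (n + 3), (i : ℕ) < 3 → (j : ℕ) < 3 → i ≠ j → G.Adj (e i) (e j)) ∧
    ∀ j : Fin (n + 3), 3 ≤ (j : ℕ) →
      ∃ s : Finset V, G.IsNClique 3 s ∧
        (∀ v ∈ s, ∃ i : Fin (n + 3), (i : ℕ) < (j : ℕ) ∧ e i = v) ∧
        ∀ i : Fin (n + 3), (i : ℕ) < (j : ℕ) → (G.Adj (e j) (e i) ↔ e i ∈ s)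

/-! Plane topology enters only through continuous logarithms. Two points `p`, `q` off a compact
set `D ⊆ ℂ` lie in the same component of `Dᶜ` exactly when `(z - p) / (z - q)` has a continuous
logarithm on `D`. Gluing logarithms along two arcs with common endpoints leaves a single integer
obstruction, and this gives the Jordan curve theorem and the fact that a crosscut divides a Jordan
domain into two.

Let `R` be a region bounded by a triangle `t` of a plane 3-tree, with a vertex inside. In a
construction ordering, some vertex of `R` is adjacent to all three corners of `t`, and its three
spokes divide `R` into three smaller regions of the same kind. By induction a region with `n`
vertices contains at most `2 * n + 1` facial triangles.

The fourth vertex `x` of the root clique splits the region opposite to the face bounded by `t` into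
three regions. A region with one vertex inside contains a facial triangle through any prescribed
side. A region with two vertices inside contains two edge-disjoint facial triangles using only one
of its sides, which can be taken to be one of its two spokes at `x`, but not an arbitrary one. If
the regions use different spokes, all these triangles together with `t` are edge-disjoint. When all
three regions contain two vertices and two of them want the same spoke, one of these two settles
for a single triangle that uses none of its sides: six triangles already exceed a third of the at
most fourteen. -/

section ContinuousLogarithms

variable {X Y : Type*} [TopologicalSpace X] [TopologicalSpace Y] {f : X → ℂ} {S T : Set X}

/-- `f` admits a continuous logarithm on `S`. The existence of such logarithms for quotients
`(z - p) / (z - q)` detects whether `S` separates `p` from `q` in the plane, which replaces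
winding numbers throughout. -/
def HasLogOn (f : X → ℂ) (S : Set X) : Prop :=
  ∃ g : X → ℂ, ContinuousOn g S ∧ ∀ x ∈ S, Complex.exp (g x) = f x

/-- Every nowhere vanishing continuous function on `S` has a continuous logarithm. Compact plane
sets with this property do not separate the plane. -/
def LogSimple (S : Set X) : Prop :=
  ∀ f : X → ℂ, ContinuousOn f S → (∀ x ∈ S, f x ≠ 0) → HasLogOn f S

lemma HasLogOn.mono (h : HasLogOn f T) (hST : S ⊆ T) : HasLogOn f S := by
  obtain ⟨g, hg, hgf⟩ := h
  exact ⟨g, hg.mono hST, fun x hx => hgf x (hST hx)⟩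

lemma HasLogOn.congr {f' : X → ℂ} (h : HasLogOn f S) (hf : Set.EqOn f f' S) : HasLogOn f' S := by
  obtain ⟨g, hg, hgf⟩ := h
  exact ⟨g, hg, fun x hx => (hgf x hx).trans (hf hx)⟩

lemma sub_eq_sub_of_exp_eq_s16 (hS : IsPreconnected S) {g h : X → ℂ} (hg : ContinuousOn g S)
    (hh : ContinuousOn h S) (hgh : ∀ x ∈ S, Complex.exp (g x) = Complex.exp (h x)) {x y : X}
    (hx : x ∈ S) (hy : y ∈ S) : g x - h x = g y - h y := by
  have hexp : Complex.exp (g y - h y) = 1 := by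
    rw [Complex.exp_sub, hgh y hy, div_self (Complex.exp_ne_zero _)]
  have hlift := Complex.isCoveringMap_exp.eqOn_of_comp_eqOn hS hg
    (hh.add (continuousOn_const (c := g y - h y)))
    (fun z hz => Subtype.ext (by simp [Complex.exp_add, hexp, hgh z hz])) hy (by simp) hx
  rw [hlift, Pi.add_apply, add_sub_cancel_left]

/-- Homotopy lifting for the exponential covering. -/
lemma hasLogOn_of_homotopy (F : ℝ → X → ℂ)
    (hF : ContinuousOn (fun x : ℝ × X => F x.1 x.2) (Set.Icc 0 1 ×ˢ S))
    (hne : ∀ t ∈ Set.Icc (0 : ℝ) 1, ∀ x ∈ S, F t x ≠ 0) (h0 : HasLogOn (F 0) S) :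
    HasLogOn (F 1) S := by
  classical
  obtain ⟨g, hg, hgF⟩ := h0
  let H : C(unitInterval × S, {z : ℂ // z ≠ 0}) :=
    ⟨fun x => ⟨F x.1 x.2, hne _ x.1.2 _ x.2.2⟩, Continuous.subtype_mk
      (hF.comp_continuous (f := fun x : unitInterval × S => ((x.1 : ℝ), (x.2 : X)))
        (by fun_prop) fun x => ⟨x.1.2, x.2.2⟩) _⟩
  let g₀ : C(S, ℂ) := ⟨fun x => g x, continuousOn_iff_continuous_domRestrict.1 hg⟩
  have hg₀ : ∀ x, H (0, x) = (⟨_, (g₀ x).exp_ne_zero⟩ : {z : ℂ // z ≠ 0}) := fun x =>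
    Subtype.ext (hgF x x.2).symm
  let L := Complex.isCoveringMap_exp.liftHomotopy H g₀ hg₀
  have hL := Complex.isCoveringMap_exp.liftHomotopy_lifts H g₀ hg₀
  refine ⟨fun x => if hx : x ∈ S then L (1, ⟨x, hx⟩) else 0, ?_, fun x hx => ?_⟩
  · have hcont : Continuous fun x : S => L (1, x) := by fun_prop
    rw [continuousOn_iff_continuous_domRestrict]
    exact hcont.congr fun x => by simp [Set.domRestrict]
  · simp only [dif_pos hx]
    exact congrArg Subtype.val (congrFun hL (1, ⟨x, hx⟩))

lemma LogSimple.of_starConvex {E : Type*} [AddCommGroup E] [Module ℝ E] [TopologicalSpace E]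
    [IsTopologicalAddGroup E] [ContinuousSMul ℝ E] {S : Set E} {c : E} (hS : StarConvex ℝ c S)
    (hc : c ∈ S) : LogSimple S := by
  intro f hf hne
  have hmem : ∀ t ∈ Set.Icc (0 : ℝ) 1, ∀ x ∈ S, c + t • (x - c) ∈ S := fun t ht x hx =>
    hS.add_smul_sub_mem hx ht.1 ht.2
  have hcontract := hasLogOn_of_homotopy (fun t x => f (c + t • (x - c)))
    (hf.comp (by fun_prop) fun x hx => hmem _ hx.1 _ hx.2)
    (fun t ht x hx => hne _ (hmem t ht x hx))
    ⟨fun _ => Complex.log (f c), continuousOn_const, fun x _ => by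
      simp [Complex.exp_log (hne c hc)]⟩
  simpa using hcontract

lemma LogSimple.image [T2Space Y] {φ : X → Y} (hS : LogSimple S) (hSc : IsCompact S)
    (hφ : ContinuousOn φ S) (hinj : Set.InjOn φ S) : LogSimple (φ '' S) := by
  intro f hf hne
  obtain ⟨g, hg, hgf⟩ := hS (f ∘ φ) (hf.comp hφ (Set.mapsTo_image φ S))
    fun x hx => hne _ (Set.mem_image_of_mem φ hx)
  rcases S.eq_empty_or_nonempty with rfl | ⟨x₀, -⟩
  · exact ⟨fun _ => 0, by simp, by simp⟩
  have : Nonempty X := ⟨x₀⟩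
  have : CompactSpace S := isCompact_iff_compactSpace.1 hSc
  let e : S → φ '' S := Set.imageFactorization φ S
  have he : Topology.IsQuotientMap e :=
    .of_surjective_continuous Set.imageFactorization_surjective
      ((continuousOn_iff_continuous_domRestrict.1 hφ).subtype_mk _)
  refine ⟨g ∘ Function.invFunOn φ S, ?_, ?_⟩
  · rw [continuousOn_iff_continuous_domRestrict, he.continuous_iff]
    refine (continuousOn_iff_continuous_domRestrict.1 hg).congr fun x => ?_
    exact congrArg g (hinj.leftInvOn_invFunOn x.2).symm
  · rintro _ ⟨x, hx, rfl⟩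
    simpa [hinj.leftInvOn_invFunOn hx] using hgf x hx

lemma continuousOn_piecewise_union [∀ x, Decidable (x ∈ S)] {g h : X → Y}
    (hST : (IsClosed S ∧ IsClosed T) ∨ (IsOpen S ∧ IsOpen T)) (hg : ContinuousOn g S)
    (hh : ContinuousOn h T) (hgh : Set.EqOn g h (S ∩ T)) :
    ContinuousOn (S.piecewise g h) (S ∪ T) := by
  have hS : ContinuousOn (S.piecewise g h) S := hg.congr (S.piecewise_eqOn g h)
  have hT : ContinuousOn (S.piecewise g h) T := hh.congr fun x hx => by
    by_cases hxS : x ∈ S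
    · simpa [hxS] using hgh ⟨hxS, hx⟩
    · simp [hxS]
  rcases hST with ⟨hSc, hTc⟩ | ⟨hSo, hTo⟩
  · exact hS.union_of_isClosed hT hSc hTc
  · exact hS.union_of_isOpen hT hSo hTo

lemma hasLogOn_union_of_eqOn {g h : X → ℂ}
    (hST : (IsClosed S ∧ IsClosed T) ∨ (IsOpen S ∧ IsOpen T)) (hg : ContinuousOn g S)
    (hh : ContinuousOn h T) (hgh : Set.EqOn g h (S ∩ T))
    (hgf : ∀ x ∈ S, Complex.exp (g x) = f x) (hhf : ∀ x ∈ T, Complex.exp (h x) = f x) :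
    HasLogOn f (S ∪ T) := by
  classical
  refine ⟨S.piecewise g h, continuousOn_piecewise_union hST hg hh hgh, fun x hx => ?_⟩
  by_cases hxS : x ∈ S
  · simp [hxS, hgf x hxS]
  · simp [hxS, hhf x (hx.resolve_left hxS)]

lemma HasLogOn.union (hST : (IsClosed S ∧ IsClosed T) ∨ (IsOpen S ∧ IsOpen T))
    (hconn : IsPreconnected (S ∩ T)) (hS : HasLogOn f S) (hT : HasLogOn f T) :
    HasLogOn f (S ∪ T) := by
  obtain ⟨g, hg, hgf⟩ := hS
  obtain ⟨h, hh, hhf⟩ := hT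
  rcases (S ∩ T).eq_empty_or_nonempty with hempty | ⟨w, hw⟩
  · exact hasLogOn_union_of_eqOn hST hg hh (by simp [hempty]) hgf hhf
  have hexp : Complex.exp (g w - h w) = 1 := by
    rw [Complex.exp_sub, hgf w hw.1, ← hhf w hw.2, div_self (Complex.exp_ne_zero _)]
  refine hasLogOn_union_of_eqOn (h := fun x => h x + (g w - h w)) hST hg
    (hh.add continuousOn_const) (fun x hx => ?_) hgf
    fun x hx => by rw [Complex.exp_add, hexp, mul_one, hhf x hx]
  have hconst := sub_eq_sub_of_exp_eq_s16 hconn (hg.mono Set.inter_subset_left)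
    (hh.mono Set.inter_subset_right) (fun y hy => (hgf y hy.1).trans (hhf y hy.2).symm) hx hw
  simp only [← hconst, add_sub_cancel]

lemma LogSimple.union (hS : LogSimple S) (hT : LogSimple T) (hSc : IsClosed S) (hTc : IsClosed T)
    (hconn : IsPreconnected (S ∩ T)) : LogSimple (S ∪ T) := fun f hf hne =>
  HasLogOn.union (.inl ⟨hSc, hTc⟩) hconn
    (hS f (hf.mono Set.subset_union_left) fun x hx => hne x (.inl hx))
    (hT f (hf.mono Set.subset_union_right) fun x hx => hne x (.inr hx))

/-- Two pieces `S` and `T` of a space carry logarithms of `f` that agree at `b` and differ by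
`n` periods at `a`: for two arcs with common endpoints `a` and `b`, this says that `f` winds
`n` times around `0` along the closed curve `S ∪ T`. -/
def HasMonodromy (f : X → ℂ) (S T : Set X) (a b : X) (n : ℤ) : Prop :=
  ∃ g h : X → ℂ, ContinuousOn g S ∧ ContinuousOn h T ∧
    (∀ x ∈ S, Complex.exp (g x) = f x) ∧ (∀ x ∈ T, Complex.exp (h x) = f x) ∧
    g b = h b ∧ g a = h a + n * (2 * Real.pi * Complex.I)

lemma exists_hasMonodromy {a b : X} (hS : LogSimple S) (hT : LogSimple T) (ha : a ∈ S ∩ T)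
    (hb : b ∈ S ∩ T) (hf : ContinuousOn f (S ∪ T)) (hne : ∀ x ∈ S ∪ T, f x ≠ 0) :
    ∃ n : ℤ, HasMonodromy f S T a b n := by
  obtain ⟨g, hg, hgf⟩ := hS f (hf.mono Set.subset_union_left) fun x hx => hne x (.inl hx)
  obtain ⟨h, hh, hhf⟩ := hT f (hf.mono Set.subset_union_right) fun x hx => hne x (.inr hx)
  have hexp : Complex.exp (g b - h b) = 1 := by
    rw [Complex.exp_sub, hgf b hb.1, ← hhf b hb.2, div_self (Complex.exp_ne_zero _)]
  have hhf' : ∀ x ∈ T, Complex.exp (h x + (g b - h b)) = f x := fun x hx => by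
    rw [Complex.exp_add, hexp, mul_one, hhf x hx]
  obtain ⟨n, hn⟩ := Complex.exp_eq_exp_iff_exists_int.1
    ((hgf a ha.1).trans (hhf' a ha.2).symm)
  exact ⟨n, g, fun x => h x + (g b - h b), hg, by fun_prop, hgf, hhf', by ring, hn⟩

lemma HasMonodromy.zpow_mul_zpow {f' : X → ℂ} {a b : X} {m n : ℤ} (hf : HasMonodromy f S T a b m)
    (hf' : HasMonodromy f' S T a b n) (k l : ℤ) :
    HasMonodromy (fun x => f x ^ k * f' x ^ l) S T a b (k * m + l * n) := by
  obtain ⟨g, h, hg, hh, hgf, hhf, hb, ha⟩ := hf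
  obtain ⟨g', h', hg', hh', hgf', hhf', hb', ha'⟩ := hf'
  refine ⟨fun x => k * g x + l * g' x, fun x => k * h x + l * h' x, by fun_prop, by fun_prop,
    fun x hx => ?_, fun x hx => ?_, by simp only [hb, hb'], ?_⟩
  · rw [Complex.exp_add, Complex.exp_int_mul, Complex.exp_int_mul, hgf x hx, hgf' x hx]
  · rw [Complex.exp_add, Complex.exp_int_mul, Complex.exp_int_mul, hhf x hx, hhf' x hx]
  · simp only [ha, ha']
    push_cast
    ring

lemma HasMonodromy.hasLogOn {a b : X} (hf : HasMonodromy f S T a b 0) (hS : IsClosed S)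
    (hT : IsClosed T) (hST : S ∩ T ⊆ {a, b}) : HasLogOn f (S ∪ T) := by
  obtain ⟨g, h, hg, hh, hgf, hhf, hb, ha⟩ := hf
  refine hasLogOn_union_of_eqOn (.inl ⟨hS, hT⟩) hg hh (fun x hx => ?_) hgf hhf
  rcases hST hx with rfl | rfl
  · simpa using ha
  · exact hb

end ContinuousLogarithms

section NonexistenceOfLogarithms

/-- Along a circle the logarithm of `(z - p) ^ k` grows by `2πik`. -/
lemma eq_zero_of_hasLogOn_sphere {p : ℂ} {k : ℤ} {r : ℝ} (hr : 0 < r)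
    (hlog : HasLogOn (fun z => (z - p) ^ k) (Metric.sphere p r)) : k = 0 := by
  obtain ⟨g, hg, hge⟩ := hlog
  let circle : ℝ → ℂ := fun θ => p + r * Complex.exp (θ * Complex.I)
  have hcircle : ∀ θ, circle θ ∈ Metric.sphere p r := fun θ => by simp [circle, abs_of_pos hr]
  have hconst := sub_eq_sub_of_exp_eq_s16 (isPreconnected_univ (α := ℝ)) (g := g ∘ circle)
    (h := fun θ => k * (Real.log r + θ * Complex.I))
    (hg.comp_continuous (by fun_prop) hcircle).continuousOn (by fun_prop)
    (fun θ _ => by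
      rw [Function.comp_apply, hge _ (hcircle θ), Complex.exp_int_mul, Complex.exp_add,
        ← Complex.ofReal_exp, Real.exp_log hr]
      simp only [circle, add_sub_cancel_left])
    (Set.mem_univ 0) (Set.mem_univ (2 * Real.pi))
  have hperiod : circle (2 * Real.pi) = circle 0 := by simp [circle]
  have hmul : (k : ℂ) * (2 * Real.pi * Complex.I) = 0 := by
    simp only [Function.comp_apply, hperiod] at hconst
    push_cast at hconst
    linear_combination hconst
  exact_mod_cast (mul_eq_zero.1 hmul).resolve_right Complex.two_pi_I_ne_zero

lemma HasLogOn.exists_continuousMap {X : Type*} [TopologicalSpace X] [NormalSpace X] {S : Set X}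
    {f : X → ℂ} (hf : HasLogOn f S) (hS : IsClosed S) :
    ∃ G : C(X, ℂ), ∀ x ∈ S, Complex.exp (G x) = f x := by
  obtain ⟨g, hg, hgf⟩ := hf
  obtain ⟨G, hG⟩ := ContinuousMap.exists_restrict_eq hS
    ⟨fun x : S => g x, continuousOn_iff_continuous_domRestrict.1 hg⟩
  exact ⟨G, fun x hx => by
    rw [← hgf x hx]
    exact congrArg Complex.exp (DFunLike.congr_fun hG ⟨x, hx⟩)⟩

/-- Otherwise the exponential of an extended logarithm on `U` and `(z - p) ^ k` outside `U` would
glue to a nowhere vanishing function on the plane; its logarithm contradicts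
`eq_zero_of_hasLogOn_sphere` on a large circle. -/
lemma eq_zero_of_hasLogOn_frontier {U S : Set ℂ} (hU : IsOpen U) (hbdd : Bornology.IsBounded U)
    (hS : IsClosed S) (hUS : frontier U ⊆ S) {p : ℂ} (hp : p ∈ U) {k : ℤ} {h : ℂ → ℂ}
    (hh : ContinuousOn h (closure U)) (hne : ∀ z ∈ closure U, h z ≠ 0)
    (hlog : HasLogOn (fun z => (z - p) ^ k * h z) S) : k = 0 := by
  classical
  obtain ⟨G, hG⟩ := hlog.exists_continuousMap hS
  let φ : ℂ → ℂ := (closure U).piecewise (fun z => Complex.exp (G z) / h z) fun z => (z - p) ^ k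
  have hpne : ∀ z ∈ Uᶜ, z - p ≠ 0 := fun z hz => sub_ne_zero.2 fun h => hz (h ▸ hp)
  have hφ : ContinuousOn φ (closure U ∪ Uᶜ) := by
    refine continuousOn_piecewise_union (.inl ⟨isClosed_closure, hU.isClosed_compl⟩)
      (ContinuousOn.div (by fun_prop) hh hne)
      (ContinuousOn.zpow₀ (by fun_prop) k fun z hz => .inl (hpne z hz)) fun z hz => ?_
    have hzS : z ∈ S := hUS (by rw [hU.frontier_eq]; exact hz)
    simp only [hG z hzS, mul_div_cancel_right₀ _ (hne z hz.1)]
  have hcover : closure U ∪ Uᶜ = Set.univ :=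
    Set.eq_univ_of_subset (Set.union_subset_union_left _ subset_closure) (Set.union_compl_self U)
  have hφne : ∀ z, φ z ≠ 0 := fun z => by
    by_cases hz : z ∈ closure U
    · simp [φ, hz, hne z hz]
    · simpa [φ, hz] using zpow_ne_zero k (hpne z fun h => hz (subset_closure h))
  obtain ⟨r, hr, hUr⟩ := hbdd.closure.subset_ball_lt 0 p
  have hφlog : HasLogOn φ (Metric.sphere p r) :=
    (LogSimple.of_starConvex (starConvex_univ 0) (Set.mem_univ 0) φ (hcover ▸ hφ)
      fun z _ => hφne z).mono (Set.subset_univ _)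
  refine eq_zero_of_hasLogOn_sphere hr (hφlog.congr fun z hz => Set.piecewise_eq_of_notMem _ _ _ ?_)
  exact fun hzU => (Metric.mem_ball.1 (hUr hzU)).ne hz

end NonexistenceOfLogarithms

section Regions

variable {X : Type*} [TopologicalSpace X] {C D D' R R' : Set X}

/-- `R` is a region with boundary `D`: open, connected, and with frontier `D`. -/
structure IsRegion (R D : Set X) : Prop where
  isOpen : IsOpen R
  isConnected : IsConnected R
  frontier_eq : frontier R = D

lemma subset_of_disjoint_frontier (hC : IsPreconnected C) (hR : IsOpen R)
    (hCR : Disjoint C (frontier R)) (hne : (C ∩ R).Nonempty) : C ⊆ R := by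
  refine hC.subset_of_closure_inter_subset hR hne fun z hz => ?_
  by_contra hzR
  exact Set.disjoint_left.1 hCR hz.2 (by rw [hR.frontier_eq]; exact ⟨hz.1, hzR⟩)

lemma connectedComponentIn_compl_eq (hR : IsOpen R) (hconn : IsPreconnected R)
    (hRD : Disjoint R D) (hfr : frontier R ⊆ D) {z : X} (hz : z ∈ R) :
    connectedComponentIn Dᶜ z = R := by
  have hsub : R ⊆ Dᶜ := Set.subset_compl_iff_disjoint_right.2 hRD
  refine (subset_of_disjoint_frontier isPreconnected_connectedComponentIn hR
    (Set.disjoint_left.2 fun w hw hwR => connectedComponentIn_subset Dᶜ z hw (hfr hwR))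
    ⟨z, mem_connectedComponentIn (hsub hz), hz⟩).antisymm
    (hconn.subset_connectedComponentIn hz hsub)

namespace IsRegion

lemma disjoint (h : IsRegion R D) : Disjoint R D :=
  h.frontier_eq ▸ (disjoint_frontier_iff_isOpen.2 h.isOpen).symm

lemma connectedComponentIn_eq (h : IsRegion R D) (hRD' : Disjoint R D') (hD : D ⊆ D') {z : X}
    (hz : z ∈ R) : connectedComponentIn D'ᶜ z = R :=
  connectedComponentIn_compl_eq h.isOpen h.isConnected.isPreconnected hRD' (h.frontier_eq ▸ hD) hz

lemma subset_of_isPreconnected (h : IsRegion R D) (hC : IsPreconnected C) (hCD : Disjoint C D)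
    (hne : (C ∩ R).Nonempty) : C ⊆ R :=
  subset_of_disjoint_frontier hC h.isOpen (h.frontier_eq ▸ hCD) hne

lemma disjoint_of_ne (h : IsRegion R D) (h' : IsRegion R' D') (hRD' : Disjoint R D')
    (hR'D : Disjoint R' D) (hne : D ≠ D') : Disjoint R R' := by
  by_contra hmeet
  rw [Set.not_disjoint_iff_nonempty_inter] at hmeet
  have hRR' : R = R' :=
    (h'.subset_of_isPreconnected h.isConnected.isPreconnected hRD' hmeet).antisymm
      (h.subset_of_isPreconnected h'.isConnected.isPreconnected hR'D (Set.inter_comm R R' ▸ hmeet))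
  exact hne (by rw [← h.frontier_eq, hRR', h'.frontier_eq])

end IsRegion

variable [LocallyConnectedSpace X]

lemma frontier_connectedComponentIn_compl_subset (hD : IsClosed D) (p : X) :
    frontier (connectedComponentIn Dᶜ p) ⊆ D := by
  intro z hz
  by_contra hzD
  rw [hD.isOpen_compl.connectedComponentIn.frontier_eq] at hz
  obtain ⟨w, hwz, hwp⟩ := mem_closure_iff.1 hz.1 _
    (hD.isOpen_compl.connectedComponentIn (x := z)) (mem_connectedComponentIn hzD)
  have heq := (connectedComponentIn_eq hwp).trans (connectedComponentIn_eq hwz).symm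
  exact hz.2 (heq ▸ mem_connectedComponentIn hzD)

lemma notMem_closure_connectedComponentIn {p q : X} (hD : IsClosed D) (hq : q ∉ D)
    (hpq : connectedComponentIn Dᶜ p ≠ connectedComponentIn Dᶜ q) :
    q ∉ closure (connectedComponentIn Dᶜ p) := by
  rw [closure_eq_self_union_frontier]
  rintro (h | h)
  · exact hpq (connectedComponentIn_eq h)
  · exact hq (frontier_connectedComponentIn_compl_subset hD p h)

end Regions

section UnboundedComponents

variable {E : Type*} [NormedAddCommGroup E] [NormedSpace ℝ E]

lemma isPreconnected_compl_closedBall (hE : 1 < Module.rank ℝ E) {r : ℝ} (hr : 0 ≤ r) :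
    IsPreconnected (Metric.closedBall (0 : E) r)ᶜ := by
  have hpolar : (Metric.closedBall (0 : E) r)ᶜ =
      (fun x : ℝ × E => x.1 • x.2) '' (Set.Ioi r ×ˢ Metric.sphere 0 1) := by
    ext z
    constructor
    · intro hz
      have hrz : r < ‖z‖ := by simpa using hz
      have hz0 : ‖z‖ ≠ 0 := (hr.trans_lt hrz).ne'
      exact ⟨(‖z‖, ‖z‖⁻¹ • z), ⟨hrz, by simp [norm_smul, hz0]⟩, by simp [smul_smul, hz0]⟩
    · rintro ⟨⟨t, u⟩, ⟨ht, hu⟩, rfl⟩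
      have hrt : r < t := ht
      have hu1 : ‖u‖ = 1 := by simpa using hu
      simpa [norm_smul, hu1, abs_of_pos (hr.trans_lt hrt)] using hrt
  rw [hpolar]
  exact (isPreconnected_Ioi.prod (isPreconnected_sphere hE 0 1)).image _ (by fun_prop)

lemma connectedComponentIn_eq_of_not_isBounded (hE : 1 < Module.rank ℝ E) {D : Set E}
    (hD : Bornology.IsBounded D) {p q : E}
    (hp : ¬ Bornology.IsBounded (connectedComponentIn Dᶜ p))
    (hq : ¬ Bornology.IsBounded (connectedComponentIn Dᶜ q)) :
    connectedComponentIn Dᶜ p = connectedComponentIn Dᶜ q := by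
  obtain ⟨r, hr, hDr⟩ := hD.subset_closedBall_lt 0 0
  have hfar : ∀ x : E, ¬ Bornology.IsBounded (connectedComponentIn Dᶜ x) →
      ∃ z ∈ connectedComponentIn Dᶜ x, z ∈ (Metric.closedBall (0 : E) r)ᶜ := fun x hx =>
    Set.not_subset.1 fun h => hx (Metric.isBounded_closedBall.subset h)
  obtain ⟨z, hz, hzr⟩ := hfar p hp
  obtain ⟨w, hw, hwr⟩ := hfar q hq
  rw [connectedComponentIn_eq hz, connectedComponentIn_eq hw]
  have hconn := isPreconnected_compl_closedBall hE hr.le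
  exact connectedComponentIn_eq
    (hconn.subset_connectedComponentIn hzr (Set.compl_subset_compl.2 hDr) hwr)

end UnboundedComponents

section Separation

variable {D S T U W : Set ℂ} {p q : ℂ}

lemma eq_zero_of_hasLogOn_of_isBounded (hD : IsClosed D) (hp : p ∉ D) (hq : q ∉ D)
    (hbdd : Bornology.IsBounded (connectedComponentIn Dᶜ p))
    (hpq : connectedComponentIn Dᶜ p ≠ connectedComponentIn Dᶜ q) {k l : ℤ}
    (hlog : HasLogOn (fun z => (z - p) ^ k * (z - q) ^ l) D) : k = 0 := by
  have hqne : ∀ z ∈ closure (connectedComponentIn Dᶜ p), z - q ≠ 0 := fun z hz =>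
    sub_ne_zero.2 fun h => notMem_closure_connectedComponentIn hD hq hpq (h ▸ hz)
  exact eq_zero_of_hasLogOn_frontier hD.isOpen_compl.connectedComponentIn hbdd hD
    (frontier_connectedComponentIn_compl_subset hD p) (mem_connectedComponentIn hp)
    (ContinuousOn.zpow₀ (by fun_prop) l fun z hz => .inl (hqne z hz))
    (fun z hz => zpow_ne_zero l (hqne z hz)) hlog

lemma connectedComponentIn_eq_of_hasLogOn (hD : IsCompact D) (hp : p ∉ D) (hq : q ∉ D)
    (hlog : HasLogOn (fun z => (z - p) / (z - q)) D) :
    connectedComponentIn Dᶜ p = connectedComponentIn Dᶜ q := by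
  by_contra hpq
  by_cases hbdd : Bornology.IsBounded (connectedComponentIn Dᶜ p)
  · exact one_ne_zero (eq_zero_of_hasLogOn_of_isBounded (k := 1) (l := -1) hD.isClosed hp hq hbdd
      hpq (hlog.congr fun z _ => by simp [div_eq_mul_inv]))
  · have hbdd' : Bornology.IsBounded (connectedComponentIn Dᶜ q) := by
      by_contra hbdd'
      exact hpq (connectedComponentIn_eq_of_not_isBounded
        (by simp [Complex.rank_real_complex]) hD.isBounded hbdd hbdd')
    have hk := eq_zero_of_hasLogOn_of_isBounded (k := -1) (l := 1) hD.isClosed hq hp hbdd'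
      (Ne.symm hpq) (hlog.congr fun z _ => by simp [div_eq_inv_mul])
    norm_num at hk

lemma LogSimple.connectedComponentIn_eq (hS : LogSimple S) (hSc : IsCompact S) (hp : p ∉ S)
    (hq : q ∉ S) : connectedComponentIn Sᶜ p = connectedComponentIn Sᶜ q := by
  have hne : ∀ {x : ℂ}, x ∉ S → ∀ z ∈ S, z - x ≠ 0 := fun hx z hz =>
    sub_ne_zero.2 fun h => hx (h ▸ hz)
  exact connectedComponentIn_eq_of_hasLogOn hSc hp hq
    (hS _ (ContinuousOn.div (by fun_prop) (by fun_prop) (hne hq))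
      fun z hz => div_ne_zero (hne hp z hz) (hne hq z hz))

lemma hasLogOn_div_of_path {γ : ℝ → ℂ} (hγ : ContinuousOn γ (Set.Icc 0 1))
    (hS : ∀ t ∈ Set.Icc (0 : ℝ) 1, γ t ∉ S) :
    HasLogOn (fun z => (z - γ 1) / (z - γ 0)) S := by
  have hne : ∀ t ∈ Set.Icc (0 : ℝ) 1, ∀ z ∈ S, z - γ t ≠ 0 := fun t ht z hz =>
    sub_ne_zero.2 fun h => hS t ht (h ▸ hz)
  have h0 : (0 : ℝ) ∈ Set.Icc (0 : ℝ) 1 := by simp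
  refine hasLogOn_of_homotopy (fun t z => (z - γ t) / (z - γ 0)) ?_
    (fun t ht z hz => div_ne_zero (hne t ht z hz) (hne 0 h0 z hz))
    ⟨fun _ => 0, continuousOn_const, fun z hz => by simp [div_self (hne 0 h0 z hz)]⟩
  exact ContinuousOn.div (continuousOn_snd.sub (hγ.comp continuousOn_fst fun x hx => hx.1))
    (by fun_prop) fun x hx => hne 0 h0 _ hx.2

lemma hasLogOn_div_of_isPreconnected (hU : IsOpen U) (hUc : IsPreconnected U)
    (hUS : Disjoint U S) (hp : p ∈ U) (hq : q ∈ U) :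
    HasLogOn (fun z => (z - p) / (z - q)) S := by
  have hpath : IsPathConnected U := hU.isConnected_iff_isPathConnected.1 ⟨⟨p, hp⟩, hUc⟩
  obtain ⟨γ, hγ⟩ := hpath.joinedIn q hq p hp
  simpa using hasLogOn_div_of_path (S := S) (γ := γ.extend) γ.continuous_extend.continuousOn
    fun t ht h => Set.disjoint_left.1 hUS (by rw [Path.extend_apply _ ht]; exact hγ _) h

/-- **Janiszewski's theorem** -/
lemma connectedComponentIn_union_eq (hS : IsCompact S) (hT : IsCompact T)
    (hST : IsPreconnected (S ∩ T)) (hU : IsOpen U) (hUc : IsPreconnected U) (hUS : Disjoint U S)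
    (hW : IsOpen W) (hWc : IsPreconnected W) (hWT : Disjoint W T) (hp : p ∈ U ∩ W)
    (hq : q ∈ U ∩ W) : connectedComponentIn (S ∪ T)ᶜ p = connectedComponentIn (S ∪ T)ᶜ q := by
  have hnotMem : ∀ {x}, x ∈ U ∩ W → x ∉ S ∪ T := fun hx hxST =>
    hxST.elim (Set.disjoint_left.1 hUS hx.1) (Set.disjoint_left.1 hWT hx.2)
  exact connectedComponentIn_eq_of_hasLogOn (hS.union hT) (hnotMem hp) (hnotMem hq)
    (HasLogOn.union (.inl ⟨hS.isClosed, hT.isClosed⟩) hST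
      (hasLogOn_div_of_isPreconnected hU hUc hUS hp.1 hq.1)
      (hasLogOn_div_of_isPreconnected hW hWc hWT hp.2 hq.2))

end Separation

section Arcs

variable {X : Type*}

lemma image_Icc_diff_endpoints {γ : ℝ → X} (hinj : Set.InjOn γ (Set.Icc 0 1)) :
    γ '' Set.Icc 0 1 \ {γ 0, γ 1} = γ '' Set.Ioo 0 1 := by
  rw [← Set.image_pair, ← hinj.image_sdiff_subset (Set.pair_subset (by simp) (by simp)),
    Set.Icc_sdiff_both]

lemma injOn_Icc_of_image_inter_image_subset {γ : ℝ → X} {u v w : ℝ} (huv : u ≤ v) (hvw : v ≤ w)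
    (h₁ : Set.InjOn γ (Set.Icc u v)) (h₂ : Set.InjOn γ (Set.Icc v w))
    (h : γ '' Set.Icc u v ∩ γ '' Set.Icc v w ⊆ {γ v}) : Set.InjOn γ (Set.Icc u w) := by
  rw [← Set.Icc_union_Ioc_eq_Icc huv hvw, Set.injOn_union
    (Set.disjoint_left.2 fun t ht ht' => ht'.1.not_ge ht.2)]
  refine ⟨h₁, h₂.mono Set.Ioc_subset_Icc_self, fun s hs t ht hst => ?_⟩
  have ht' := Set.Ioc_subset_Icc_self ht
  have hend : γ t = γ v := h ⟨⟨s, hs, hst⟩, ⟨t, ht', rfl⟩⟩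
  exact ht.1.ne' (h₂ ht' (Set.left_mem_Icc.2 hvw) hend)

variable [TopologicalSpace X] {a b c : X} {A B S T : Set X}

/-- `S` is a simple arc from `a` to `b`, parametrized as the edges of a `PlaneEmbedding` are. -/
def IsArc (a b : X) (S : Set X) : Prop :=
  ∃ γ : ℝ → X, ContinuousOn γ (Set.Icc 0 1) ∧ Set.InjOn γ (Set.Icc 0 1) ∧
    γ 0 = a ∧ γ 1 = b ∧ S = γ '' Set.Icc 0 1

/-- `A` and `B` are simple arcs with common endpoints `a` and `b` that are otherwise disjoint, so
that `A ∪ B` is a simple closed curve. -/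
structure IsJordanPair (a b : X) (A B : Set X) : Prop where
  left : IsArc a b A
  right : IsArc a b B
  inter_subset : A ∩ B ⊆ {a, b}

lemma isArc_image_Icc {γ : ℝ → X} {u v : ℝ} (huv : u < v) (hγ : ContinuousOn γ (Set.Icc u v))
    (hinj : Set.InjOn γ (Set.Icc u v)) : IsArc (γ u) (γ v) (γ '' Set.Icc u v) := by
  have himage : AffineMap.lineMap u v '' Set.Icc (0 : ℝ) 1 = Set.Icc u v := by
    rw [← segment_eq_image_lineMap, segment_eq_Icc huv.le]
  have hmaps : Set.MapsTo (AffineMap.lineMap u v) (Set.Icc (0 : ℝ) 1) (Set.Icc u v) :=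
    Set.mapsTo_iff_image_subset.2 himage.le
  exact ⟨γ ∘ AffineMap.lineMap u v, hγ.comp AffineMap.lineMap_continuous.continuousOn hmaps,
    hinj.comp (AffineMap.lineMap_injective ℝ huv.ne).injOn hmaps, by simp, by simp,
    by rw [Set.image_comp, himage]⟩

lemma logSimple_image_Icc [T2Space X] {γ : ℝ → X} {u v : ℝ} (huv : u ≤ v)
    (hγ : ContinuousOn γ (Set.Icc u v)) (hinj : Set.InjOn γ (Set.Icc u v)) :
    LogSimple (γ '' Set.Icc u v) :=
  (LogSimple.of_starConvex ((convex_Icc u v).starConvex (Set.left_mem_Icc.2 huv))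
    (Set.left_mem_Icc.2 huv)).image isCompact_Icc hγ hinj

namespace IsArc

lemma left_mem (h : IsArc a b S) : a ∈ S := by
  obtain ⟨γ, -, -, rfl, rfl, rfl⟩ := h
  exact Set.mem_image_of_mem γ (by simp)

lemma right_mem (h : IsArc a b S) : b ∈ S := by
  obtain ⟨γ, -, -, rfl, rfl, rfl⟩ := h
  exact Set.mem_image_of_mem γ (by simp)

lemma ne (h : IsArc a b S) : a ≠ b := by
  obtain ⟨γ, -, hinj, rfl, rfl, rfl⟩ := h
  exact fun hab => zero_ne_one (hinj (by simp) (by simp) hab)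

lemma isCompact (h : IsArc a b S) : IsCompact S := by
  obtain ⟨γ, hγ, -, -, -, rfl⟩ := h
  exact isCompact_Icc.image_of_continuousOn hγ

lemma isClosed [T2Space X] (h : IsArc a b S) : IsClosed S :=
  h.isCompact.isClosed

lemma isPreconnected (h : IsArc a b S) : IsPreconnected S := by
  obtain ⟨γ, hγ, -, -, -, rfl⟩ := h
  exact isPreconnected_Icc.image _ hγ

lemma trans (h : IsArc a b S) (h' : IsArc b c T) (hST : S ∩ T ⊆ {b}) : IsArc a c (S ∪ T) := by
  classical
  obtain ⟨γ, hγ, hγi, rfl, rfl, rfl⟩ := h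
  obtain ⟨δ, hδ, hδi, hδ0, rfl, rfl⟩ := h'
  let η : ℝ → X := (Set.Icc 0 1).piecewise γ fun t => δ (t - 1)
  have hshift : Set.MapsTo (fun t : ℝ => t - 1) (Set.Icc 1 2) (Set.Icc 0 1) := fun t ht =>
    ⟨by linarith [ht.1], by linarith [ht.2]⟩
  have hunion : Set.Icc (0 : ℝ) 2 = Set.Icc 0 1 ∪ Set.Icc 1 2 :=
    (Set.Icc_union_Icc_eq_Icc (by norm_num) (by norm_num)).symm
  have hagree : Set.EqOn γ (fun t => δ (t - 1)) (Set.Icc 0 1 ∩ Set.Icc 1 2) := fun t ht => by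
    obtain rfl : t = 1 := le_antisymm ht.1.2 ht.2.1
    simp [hδ0]
  have hηγ : Set.EqOn η γ (Set.Icc 0 1) := Set.piecewise_eqOn _ _ _
  have hηδ : Set.EqOn η (fun t => δ (t - 1)) (Set.Icc 1 2) := fun t ht => by
    by_cases ht' : t ∈ Set.Icc (0 : ℝ) 1
    · exact (hηγ ht').trans (hagree ⟨ht', ht⟩)
    · exact Set.piecewise_eq_of_notMem _ _ _ ht'
  have hη : ContinuousOn η (Set.Icc 0 2) := hunion ▸ continuousOn_piecewise_union
    (.inl ⟨isClosed_Icc, isClosed_Icc⟩) hγ (hδ.comp (by fun_prop) hshift) hagree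
  have himage₁ : η '' Set.Icc 0 1 = γ '' Set.Icc 0 1 := hηγ.image_eq
  have himage₂ : η '' Set.Icc 1 2 = δ '' Set.Icc 0 1 := by
    rw [hηδ.image_eq, ← Set.image_image δ]
    norm_num
  have hηi : Set.InjOn η (Set.Icc 0 2) :=
    injOn_Icc_of_image_inter_image_subset zero_le_one one_le_two (hηγ.injOn_iff.2 hγi)
      (hηδ.injOn_iff.2 (hδi.comp sub_left_injective.injOn hshift))
      (by rwa [himage₁, himage₂, hηγ (by simp)])
  have harc := isArc_image_Icc two_pos hη hηi
  have hend : η 2 = δ 1 := (hηδ (by simp)).trans (congrArg δ (by norm_num))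
  rwa [hηγ (by simp), hend, hunion, Set.image_union, himage₁, himage₂] at harc

lemma isPreconnected_diff (h : IsArc a b S) : IsPreconnected (S \ {a, b}) := by
  obtain ⟨γ, hγ, hinj, rfl, rfl, rfl⟩ := h
  rw [image_Icc_diff_endpoints hinj]
  exact isPreconnected_Ioo.image _ (hγ.mono Set.Ioo_subset_Icc_self)

lemma subset_closure_diff (h : IsArc a b S) : S ⊆ closure (S \ {a, b}) := by
  obtain ⟨γ, hγ, hinj, rfl, rfl, rfl⟩ := h
  rw [image_Icc_diff_endpoints hinj]
  rintro _ ⟨t, ht, rfl⟩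
  exact ((hγ t ht).mono Set.Ioo_subset_Icc_self).mem_closure_image
    (by rwa [closure_Ioo zero_ne_one])

lemma nonempty_diff (h : IsArc a b S) : (S \ {a, b}).Nonempty :=
  closure_nonempty_iff.1 ⟨_, h.subset_closure_diff h.left_mem⟩

lemma isPreconnected_diff_right (h : IsArc a b S) : IsPreconnected (S \ {b}) :=
  h.isPreconnected_diff.subset_closure (Set.sdiff_subset_sdiff_right (by simp))
    (Set.sdiff_subset.trans h.subset_closure_diff)

lemma logSimple [T2Space X] (h : IsArc a b S) : LogSimple S := by
  obtain ⟨γ, hγ, hinj, -, -, rfl⟩ := h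
  exact logSimple_image_Icc zero_le_one hγ hinj

lemma exists_split [T2Space X] (h : IsArc a b S) {O : Set X} (hO : IsOpen O)
    (hne : (S ∩ O).Nonempty) :
    ∃ S₁ S₂ : Set X, (IsCompact S₁ ∧ LogSimple S₁ ∧ a ∈ S₁) ∧
      (IsCompact S₂ ∧ LogSimple S₂ ∧ b ∈ S₂) ∧ Disjoint S₁ S₂ ∧ S₁ ∪ S₂ ⊂ S ∧ S ⊆ S₁ ∪ S₂ ∪ O := by
  obtain ⟨w, hwS, hwO⟩ := hne
  obtain ⟨z, hzO, hz⟩ := mem_closure_iff.1 (h.subset_closure_diff hwS) O hO hwO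
  obtain ⟨γ, hγ, hinj, rfl, rfl, rfl⟩ := h
  rw [image_Icc_diff_endpoints hinj] at hz
  obtain ⟨t, ht, rfl⟩ := hz
  have hopen : IsOpen (Set.Ioo 0 1 ∩ γ ⁻¹' O) :=
    (hγ.mono Set.Ioo_subset_Icc_self).isOpen_inter_preimage isOpen_Ioo hO
  obtain ⟨u, v, htuv, huv⟩ := mem_nhds_iff_exists_Ioo_subset.1 (hopen.mem_nhds ⟨ht, hzO⟩)
  obtain ⟨hu, hv⟩ := (Set.Ioo_subset_Ioo_iff (htuv.1.trans htuv.2)).1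
    (huv.trans Set.inter_subset_left)
  have hsub₁ : Set.Icc 0 u ⊆ Set.Icc (0 : ℝ) 1 := Set.Icc_subset_Icc_right (htuv.1.trans ht.2).le
  have hsub₂ : Set.Icc v 1 ⊆ Set.Icc (0 : ℝ) 1 := Set.Icc_subset_Icc_left (ht.1.trans htuv.2).le
  have hpiece : ∀ {l r : ℝ}, l ≤ r → Set.Icc l r ⊆ Set.Icc 0 1 →
      IsCompact (γ '' Set.Icc l r) ∧ LogSimple (γ '' Set.Icc l r) := fun hlr hsub =>
    ⟨isCompact_Icc.image_of_continuousOn (hγ.mono hsub),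
      logSimple_image_Icc hlr (hγ.mono hsub) (hinj.mono hsub)⟩
  refine ⟨γ '' Set.Icc 0 u, γ '' Set.Icc v 1,
    ⟨(hpiece hu hsub₁).1, (hpiece hu hsub₁).2, ⟨0, by simpa using hu, rfl⟩⟩,
    ⟨(hpiece hv hsub₂).1, (hpiece hv hsub₂).2, ⟨1, by simpa using hv, rfl⟩⟩, ?_, ?_, ?_⟩
  · refine (Set.disjoint_left.2 fun x hx hx' => ?_ : Disjoint _ _).image hinj hsub₁ hsub₂
    linarith [hx.2, hx'.1, htuv.1, htuv.2]
  · rw [← Set.image_union]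
    refine (Set.image_mono (Set.union_subset hsub₁ hsub₂)).ssubset_of_mem_notMem
      (Set.mem_image_of_mem γ (Set.Ioo_subset_Icc_self ht)) fun hmem => ?_
    rw [hinj.mem_image_iff (Set.union_subset hsub₁ hsub₂) (Set.Ioo_subset_Icc_self ht)] at hmem
    exact hmem.elim (fun h => htuv.1.not_ge h.2) fun h => htuv.2.not_ge h.1
  · rintro _ ⟨x, hx, rfl⟩
    by_cases hxu : x ≤ u
    · exact .inl (.inl ⟨x, ⟨hx.1, hxu⟩, rfl⟩)
    by_cases hxv : v ≤ x
    · exact .inl (.inr ⟨x, ⟨hxv, hx.2⟩, rfl⟩)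
    · exact .inr (huv ⟨not_le.1 hxu, not_le.1 hxv⟩).2

end IsArc

namespace IsJordanPair

lemma symm (h : IsJordanPair a b A B) : IsJordanPair a b B A :=
  ⟨h.right, h.left, Set.inter_comm A B ▸ h.inter_subset⟩

lemma isCompact (h : IsJordanPair a b A B) : IsCompact (A ∪ B) :=
  h.left.isCompact.union h.right.isCompact

variable [T2Space X]

lemma isClosed (h : IsJordanPair a b A B) : IsClosed (A ∪ B) :=
  h.isCompact.isClosed

lemma exists_logSimple_of_left (h : IsJordanPair a b A B) {O : Set X} (hO : IsOpen O)
    (hne : (A ∩ O).Nonempty) :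
    ∃ D, IsCompact D ∧ LogSimple D ∧ D ⊂ A ∪ B ∧ A ∪ B ⊆ D ∪ O := by
  obtain ⟨S, T, ⟨hSc, hS, haS⟩, ⟨hTc, hT, hbT⟩, hST, hss, hcover⟩ := h.left.exists_split hO hne
  have hBS : B ∩ S = {a} := by
    refine Set.Subset.antisymm (fun z hz => ?_) (by simp [h.right.left_mem, haS])
    refine (h.inter_subset ⟨hss.1 (.inl hz.2), hz.1⟩).resolve_right fun hzb => ?_
    exact Set.disjoint_left.1 hST hz.2 (hzb ▸ hbT)
  have hBST : (B ∪ S) ∩ T = {b} := by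
    refine Set.Subset.antisymm (fun z hz => ?_) (by simp [h.right.right_mem, hbT])
    have hzB : z ∈ B := hz.1.resolve_right fun hzS => Set.disjoint_left.1 hST hzS hz.2
    refine (h.inter_subset ⟨hss.1 (.inr hz.2), hzB⟩).resolve_left fun hza => ?_
    exact Set.disjoint_left.1 hST haS (hza ▸ hz.2)
  have hBSc := h.right.isCompact.union hSc
  refine ⟨B ∪ S ∪ T, hBSc.union hTc,
    (h.right.logSimple.union hS h.right.isClosed hSc.isClosed
      (hBS ▸ isPreconnected_singleton)).union hT hBSc.isClosed hTc.isClosed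
      (hBST ▸ isPreconnected_singleton), ?_, ?_⟩
  · obtain ⟨v, hvA, hv⟩ := Set.exists_of_ssubset hss
    rw [Set.union_assoc, Set.union_comm A]
    refine (Set.union_subset_union_right B hss.1).ssubset_of_mem_notMem (.inr hvA) ?_
    rintro (hvB | hvST)
    · rcases h.inter_subset ⟨hvA, hvB⟩ with rfl | rfl
      exacts [hv (.inl haS), hv (.inr hbT)]
    · exact hv hvST
  · rintro z (hz | hz)
    · rcases hcover hz with (hz | hz) | hz
      exacts [.inl (.inl (.inr hz)), .inl (.inr hz), .inr hz]
    · exact .inl (.inl (.inl hz))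

lemma exists_logSimple (h : IsJordanPair a b A B) {O : Set X} (hO : IsOpen O)
    (hne : ((A ∪ B) ∩ O).Nonempty) :
    ∃ D, IsCompact D ∧ LogSimple D ∧ D ⊂ A ∪ B ∧ A ∪ B ⊆ D ∪ O := by
  rw [Set.union_inter_distrib_right, Set.union_nonempty] at hne
  rcases hne with hA | hB
  · exact h.exists_logSimple_of_left hO hA
  · rw [Set.union_comm]
    exact h.symm.exists_logSimple_of_left hO hB

end IsJordanPair

end Arcs

section JordanCurves

variable {a b p q r : ℂ} {A B P G H R U : Set ℂ}

namespace IsJordanPair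

lemma not_isPreconnected_compl (h : IsJordanPair a b A B) : ¬ IsPreconnected (A ∪ B)ᶜ := by
  intro hconn
  have harc : ∀ {S : Set ℂ}, IsArc a b S → HasLogOn (fun z => (z - b) / (z - a)) Sᶜ := by
    rintro S ⟨γ, hγ, -, rfl, rfl, rfl⟩
    exact hasLogOn_div_of_path hγ fun t ht h => h ⟨t, ht, rfl⟩
  have hlog : HasLogOn (fun z => (z - b) / (z - a)) (Aᶜ ∪ Bᶜ) :=
    HasLogOn.union (.inr ⟨h.left.isClosed.isOpen_compl, h.right.isClosed.isOpen_compl⟩)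
      (by rwa [← Set.compl_union]) (harc h.left) (harc h.right)
  let ρ := dist a b / 2
  have hρ : 0 < ρ := half_pos (dist_pos.2 h.left.ne)
  have hb : ∀ z ∈ Metric.closedBall a ρ, z ≠ b := by
    rintro z hz rfl
    have hz' : dist a z ≤ dist a z / 2 := Metric.mem_closedBall'.1 hz
    exact (half_lt_self (dist_pos.2 h.left.ne)).not_ge hz'
  have hsphere : Metric.sphere a ρ ⊆ Aᶜ ∪ Bᶜ := fun z hz => by
    rw [← Set.compl_inter]
    intro hzAB
    rcases h.inter_subset hzAB with rfl | hzb
    · exact hρ.ne (by simpa using hz)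
    · exact hb z (Metric.sphere_subset_closedBall hz) hzb
  have hk := eq_zero_of_hasLogOn_frontier (k := -1) (h := fun z => z - b) Metric.isOpen_ball
    Metric.isBounded_ball Metric.isClosed_sphere Metric.frontier_ball_subset_sphere
    (Metric.mem_ball_self hρ) (by fun_prop)
    (fun z hz => sub_ne_zero.2 (hb z (Metric.closure_ball_subset_closedBall hz)))
    ((hlog.mono hsphere).congr fun z _ => by
      simp only [zpow_neg_one, div_eq_inv_mul])
  norm_num at hk

lemma frontier_eq (h : IsJordanPair a b A B) (hU : IsOpen U) (hUc : IsConnected U)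
    (hUAB : Disjoint U (A ∪ B)) (hfr : frontier U ⊆ A ∪ B) : frontier U = A ∪ B := by
  by_contra hne
  obtain ⟨w, hw, hwU⟩ := Set.exists_of_ssubset (hfr.ssubset_of_ne hne)
  obtain ⟨D, hDc, hD, hDs, hcover⟩ :=
    h.exists_logSimple isClosed_frontier.isOpen_compl ⟨w, hw, hwU⟩
  obtain ⟨v, hv, hvD⟩ := Set.exists_of_ssubset hDs
  obtain ⟨p, hp⟩ := hUc.nonempty
  have hUD : Disjoint U D := hUAB.mono_right hDs.1
  have hUp : connectedComponentIn Dᶜ p = U := connectedComponentIn_compl_eq hU hUc.isPreconnected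
    hUD (fun z hz => (hcover (hfr hz)).resolve_right fun h => h hz) hp
  have hvU : v ∈ U := by
    rw [← hUp, hD.connectedComponentIn_eq hDc (Set.disjoint_left.1 hUD hp) hvD]
    exact mem_connectedComponentIn hvD
  exact Set.disjoint_left.1 hUAB hvU hv

lemma isRegion_connectedComponentIn (h : IsJordanPair a b A B) (hp : p ∉ A ∪ B) :
    IsRegion (connectedComponentIn (A ∪ B)ᶜ p) (A ∪ B) := by
  have hopen : IsOpen (connectedComponentIn (A ∪ B)ᶜ p) :=
    h.isClosed.isOpen_compl.connectedComponentIn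
  have hconn := isConnected_connectedComponentIn_iff.2 (Set.mem_compl hp)
  exact ⟨hopen, hconn, h.frontier_eq hopen hconn
    (Set.disjoint_left.2 (connectedComponentIn_subset _ p))
    (frontier_connectedComponentIn_compl_subset h.isClosed p)⟩

/-- If `z - p` and `z - q` have monodromies `m` and `n` around the curve, then
`(z - p) ^ n * (z - q) ^ (-m)` has a logarithm on it. -/
lemma connectedComponentIn_eq_of_isBounded (h : IsJordanPair a b A B) (hp : p ∉ A ∪ B)
    (hq : q ∉ A ∪ B) (hpb : Bornology.IsBounded (connectedComponentIn (A ∪ B)ᶜ p))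
    (hqb : Bornology.IsBounded (connectedComponentIn (A ∪ B)ᶜ q)) :
    connectedComponentIn (A ∪ B)ᶜ p = connectedComponentIn (A ∪ B)ᶜ q := by
  by_contra hpq
  have hmono : ∀ {x}, x ∉ A ∪ B → ∃ n, HasMonodromy (fun z => z - x) A B a b n := fun hx =>
    exists_hasMonodromy h.left.logSimple h.right.logSimple ⟨h.left.left_mem, h.right.left_mem⟩
      ⟨h.left.right_mem, h.right.right_mem⟩ (by fun_prop)
      fun z hz => sub_ne_zero.2 fun hzx => hx (hzx ▸ hz)
  obtain ⟨m, hm⟩ := hmono hp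
  obtain ⟨n, hn⟩ := hmono hq
  have hlog : ∀ {k l : ℤ}, k * m + l * n = 0 →
      HasLogOn (fun z => (z - p) ^ k * (z - q) ^ l) (A ∪ B) := fun {k l} hkl =>
    HasMonodromy.hasLogOn (hkl ▸ hm.zpow_mul_zpow hn k l) h.left.isClosed h.right.isClosed
      h.inter_subset
  have hm0 : -m = 0 := eq_zero_of_hasLogOn_of_isBounded h.isClosed hq hp hqb (Ne.symm hpq)
    ((hlog (k := n) (l := -m) (by ring)).congr fun z _ => mul_comm _ _)
  exact one_ne_zero (eq_zero_of_hasLogOn_of_isBounded h.isClosed hp hq hpb hpq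
    (hlog (k := 1) (l := 0) (by linarith)))

lemma connectedComponentIn_eq_or_eq (h : IsJordanPair a b A B) (hp : p ∉ A ∪ B) (hq : q ∉ A ∪ B)
    (hr : r ∉ A ∪ B)
    (hpq : connectedComponentIn (A ∪ B)ᶜ p ≠ connectedComponentIn (A ∪ B)ᶜ q) :
    connectedComponentIn (A ∪ B)ᶜ r = connectedComponentIn (A ∪ B)ᶜ p ∨
      connectedComponentIn (A ∪ B)ᶜ r = connectedComponentIn (A ∪ B)ᶜ q := by
  have hsame : ∀ {x y}, x ∉ A ∪ B → y ∉ A ∪ B →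
      (Bornology.IsBounded (connectedComponentIn (A ∪ B)ᶜ x) ↔
        Bornology.IsBounded (connectedComponentIn (A ∪ B)ᶜ y)) →
      connectedComponentIn (A ∪ B)ᶜ x = connectedComponentIn (A ∪ B)ᶜ y := fun {x y} hx hy hxy => by
    by_cases hb : Bornology.IsBounded (connectedComponentIn (A ∪ B)ᶜ x)
    · exact h.connectedComponentIn_eq_of_isBounded hx hy hb (hxy.1 hb)
    · exact connectedComponentIn_eq_of_not_isBounded (by simp [Complex.rank_real_complex])
        h.isCompact.isBounded hb (hb ∘ hxy.2)
  have hpq' := mt (hsame hp hq) hpq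
  by_cases hrp : Bornology.IsBounded (connectedComponentIn (A ∪ B)ᶜ r) ↔
    Bornology.IsBounded (connectedComponentIn (A ∪ B)ᶜ p)
  · exact .inl (hsame hr hp hrp)
  · exact .inr (hsame hr hq (by tauto))

lemma exists_isRegion_compl (h : IsJordanPair a b A B) (hR : IsRegion R (A ∪ B)) :
    ∃ R', IsRegion R' (A ∪ B) ∧ Disjoint R R' ∧ R ∪ R' = (A ∪ B)ᶜ := by
  have hRsub : R ⊆ (A ∪ B)ᶜ := Set.subset_compl_iff_disjoint_right.2 hR.disjoint
  obtain ⟨q, hq, hqR⟩ : ∃ q ∈ (A ∪ B)ᶜ, q ∉ R := Set.not_subset.1 fun hsub =>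
    h.not_isPreconnected_compl (hsub.antisymm hRsub ▸ hR.isConnected.isPreconnected)
  obtain ⟨p, hp⟩ := hR.isConnected.nonempty
  have hRp := hR.connectedComponentIn_eq hR.disjoint subset_rfl hp
  refine ⟨connectedComponentIn (A ∪ B)ᶜ q, h.isRegion_connectedComponentIn hq, ?_,
    (Set.union_subset hRsub (connectedComponentIn_subset _ q)).antisymm fun r hr => ?_⟩
  · refine Set.disjoint_left.2 fun z hz hzq => hqR ?_
    rw [← hR.connectedComponentIn_eq hR.disjoint subset_rfl hz, ← connectedComponentIn_eq hzq]
    exact mem_connectedComponentIn hq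
  · have hpq : connectedComponentIn (A ∪ B)ᶜ p ≠ connectedComponentIn (A ∪ B)ᶜ q := fun hpq =>
      hqR (hRp ▸ hpq ▸ mem_connectedComponentIn hq)
    rw [← hRp]
    have hmem := mem_connectedComponentIn hr
    rcases h.connectedComponentIn_eq_or_eq (hRsub hp) hq hr hpq with heq | heq
    exacts [.inl (heq ▸ hmem), .inr (heq ▸ hmem)]

end IsJordanPair

section Crosscuts

lemma exists_isRegion_disjoint (hAB : IsJordanPair a b A B) (hAP : IsJordanPair a b A P)
    (hBP : IsJordanPair a b B P) : ∃ G, IsRegion G (A ∪ P) ∧ Disjoint G B := by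
  obtain ⟨z, hz⟩ := hAB.right.nonempty_diff
  have hdisj : Disjoint (B \ {a, b}) (A ∪ P) := Set.disjoint_left.2 fun w hw hw' =>
    hw.2 (hw'.elim (fun hA => hAB.inter_subset ⟨hA, hw.1⟩) fun hP => hBP.inter_subset ⟨hw.1, hP⟩)
  have hzAP : z ∉ A ∪ P := Set.disjoint_left.1 hdisj hz
  have hR := hAP.isRegion_connectedComponentIn hzAP
  have hBR : B \ {a, b} ⊆ connectedComponentIn (A ∪ P)ᶜ z :=
    hR.subset_of_isPreconnected hAB.right.isPreconnected_diff hdisj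
      ⟨z, hz, mem_connectedComponentIn hzAP⟩
  obtain ⟨G, hG, hRG, -⟩ := hAP.exists_isRegion_compl hR
  have hends : ({a, b} : Set ℂ) ⊆ A ∪ P :=
    Set.pair_subset (.inl hAB.left.left_mem) (.inl hAB.left.right_mem)
  refine ⟨G, hG, Set.disjoint_left.2 fun w hw hwB => ?_⟩
  exact Set.disjoint_left.1 hRG
    (hBR ⟨hwB, fun hwe => Set.disjoint_left.1 hG.disjoint hw (hends hwe)⟩) hw

lemma IsRegion.subset_of_crosscut (hR : IsRegion R (A ∪ B)) (hG : IsRegion G (A ∪ P))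
    (hGB : Disjoint G B) (hP : IsArc a b P) (hPR : P \ {a, b} ⊆ R) : G ⊆ R := by
  obtain ⟨z, hz⟩ := hP.nonempty_diff
  have hzG : z ∈ closure G := frontier_subset_closure (hG.frontier_eq ▸ .inr hz.1)
  refine hR.subset_of_isPreconnected hG.isConnected.isPreconnected
    (Set.disjoint_union_right.2 ⟨hG.disjoint.mono_right Set.subset_union_left, hGB⟩) ?_
  rw [Set.inter_comm]
  exact mem_closure_iff.1 hzG R hR.isOpen (hPR hz)

/-- The closed curves `A ∪ B` and `B ∪ P` meet in the connected set `B`, and two points of `R`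
outside `H` are separated by neither of them. -/
lemma IsRegion.diff_subset_union_of_crosscut (hBP : IsJordanPair a b B P) (hA : IsCompact A)
    (hAP : A ∩ P ⊆ {a, b}) (hR : IsRegion R (A ∪ B)) (hG : IsRegion G (A ∪ P))
    (hH : IsRegion H (B ∪ P)) (hGB : Disjoint G B) (hGH : Disjoint G H) (hGR : G ⊆ R) :
    R \ P ⊆ G ∪ H := by
  intro z hz
  refine or_iff_not_imp_right.2 fun hzH => ?_
  obtain ⟨W, hW, -, hHW⟩ := hBP.exists_isRegion_compl hH
  obtain ⟨q, hq⟩ := hG.isConnected.nonempty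
  have hGAP := Set.disjoint_union_right.1 hG.disjoint
  have hRAB := Set.disjoint_union_right.1 hR.disjoint
  have hmemW : ∀ {w}, w ∉ H → w ∉ B ∪ P → w ∈ W := fun hwH hw =>
    (hHW.ge hw).resolve_left hwH
  have hqW : q ∈ W := hmemW (Set.disjoint_left.1 hGH hq)
    (Set.disjoint_left.1 (Set.disjoint_union_right.2 ⟨hGB, hGAP.2⟩) hq)
  have hzBP : z ∉ B ∪ P := fun h => h.elim (Set.disjoint_left.1 hRAB.2 hz.1) hz.2
  have hinter : (A ∪ B) ∩ (B ∪ P) = B := by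
    rw [Set.union_comm A, ← Set.union_inter_distrib_left, Set.union_eq_left]
    exact hAP.trans (Set.pair_subset hBP.left.left_mem hBP.left.right_mem)
  have hcomp := connectedComponentIn_union_eq (hA.union hBP.left.isCompact) hBP.isCompact
    (by rw [hinter]; exact hBP.left.isPreconnected)
    hR.isOpen hR.isConnected.isPreconnected hR.disjoint
    hW.isOpen hW.isConnected.isPreconnected hW.disjoint ⟨hz.1, hmemW hzH hzBP⟩ ⟨hGR hq, hqW⟩
  have hdisj : Disjoint G (A ∪ B ∪ (B ∪ P)) := by
    simp only [Set.disjoint_union_right]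
    exact ⟨⟨hGAP.1, hGB⟩, hGB, hGAP.2⟩
  rw [← hG.connectedComponentIn_eq hdisj (Set.union_subset_union Set.subset_union_left
    Set.subset_union_right) hq, ← hcomp]
  exact mem_connectedComponentIn fun h => h.elim (Set.disjoint_left.1 hR.disjoint hz.1) hzBP

lemma IsRegion.exists_crosscut (hAB : IsJordanPair a b A B) (hR : IsRegion R (A ∪ B))
    (hP : IsArc a b P) (hPR : P \ {a, b} ⊆ R) :
    ∃ G H, IsRegion G (A ∪ P) ∧ IsRegion H (B ∪ P) ∧ Disjoint G H ∧ R \ P = G ∪ H := by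
  have hdisj : ∀ z ∈ A ∪ B, z ∈ P → z ∈ ({a, b} : Set ℂ) := fun z hz hzP => by
    by_contra hze
    exact Set.disjoint_left.1 hR.disjoint (hPR ⟨hzP, hze⟩) hz
  have hAP : IsJordanPair a b A P := ⟨hAB.left, hP, fun z hz => hdisj z (.inl hz.1) hz.2⟩
  have hBP : IsJordanPair a b B P := ⟨hAB.right, hP, fun z hz => hdisj z (.inr hz.1) hz.2⟩
  obtain ⟨G, hG, hGB⟩ := exists_isRegion_disjoint hAB hAP hBP
  obtain ⟨H, hH, hHA⟩ := exists_isRegion_disjoint hAB.symm hBP hAP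
  have hGR : G ⊆ R := hR.subset_of_crosscut hG hGB hP hPR
  have hHR : H ⊆ R := (Set.union_comm A B ▸ hR).subset_of_crosscut hH hHA hP hPR
  have hGAP := Set.disjoint_union_right.1 hG.disjoint
  have hHBP := Set.disjoint_union_right.1 hH.disjoint
  have hne : A ∪ P ≠ B ∪ P := fun heq => by
    obtain ⟨w, hw⟩ := hAB.left.nonempty_diff
    exact hw.2 ((heq.le (.inl hw.1)).elim (fun hB => hAB.inter_subset ⟨hw.1, hB⟩)
      (hdisj w (.inl hw.1)))
  have hGH : Disjoint G H := hG.disjoint_of_ne hH (Set.disjoint_union_right.2 ⟨hGB, hGAP.2⟩)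
    (Set.disjoint_union_right.2 ⟨hHA, hHBP.2⟩) hne
  refine ⟨G, H, hG, hH, hGH, (hR.diff_subset_union_of_crosscut hBP hAB.left.isCompact
    hAP.inter_subset hG hH hGB hGH hGR).antisymm (Set.subset_sdiff.2
      ⟨Set.union_subset hGR hHR, Set.disjoint_union_left.2 ⟨hGAP.2, hHBP.2⟩⟩)⟩

end Crosscuts

end JordanCurves

namespace PlaneEmbedding

variable {G : SimpleGraph V} (E : PlaneEmbedding G)

lemma isArc {u v : V} (h : G.Adj u v) : IsArc (E.vtx u) (E.vtx v) (E.arc u v) := E.arc_curve h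

lemma mem_triBoundary {t : Finset V} {z : ℂ} :
    z ∈ E.triBoundary t ↔ ∃ u ∈ t, ∃ v ∈ t, G.Adj u v ∧ z ∈ E.arc u v := by
  simp only [triBoundary, Set.mem_iUnion, exists_prop]

lemma arc_subset_triBoundary {t : Finset V} {u v : V} (hu : u ∈ t) (hv : v ∈ t)
    (h : G.Adj u v) : E.arc u v ⊆ E.triBoundary t :=
  fun _ hz => E.mem_triBoundary.2 ⟨u, hu, v, hv, h, hz⟩

lemma triBoundary_subset_drawing (t : Finset V) : E.triBoundary t ⊆ E.drawing := by
  intro z hz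
  obtain ⟨u, -, v, -, huv, hz⟩ := E.mem_triBoundary.1 hz
  exact .inr (Set.mem_iUnion₂.2 ⟨u, v, Set.mem_iUnion.2 ⟨huv, hz⟩⟩)

lemma vtx_mem_triBoundary_of_mem {t : Finset V} (ht : G.IsClique t) (hnt : t.Nontrivial) {v : V}
    (hv : v ∈ t) : E.vtx v ∈ E.triBoundary t := by
  obtain ⟨w, hw, hne⟩ := hnt.exists_ne v
  have hadj : G.Adj v w := ht hv hw hne.symm
  exact E.arc_subset_triBoundary hv hw hadj (E.isArc hadj).left_mem

lemma vtx_mem_triBoundary {t : Finset V} (ht : G.IsNClique 3 t) {v : V} :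
    E.vtx v ∈ E.triBoundary t ↔ v ∈ t := by
  refine ⟨fun h => ?_, E.vtx_mem_triBoundary_of_mem ht.isClique
    (Finset.one_lt_card_iff_nontrivial.1 (by rw [ht.card_eq]; norm_num))⟩
  obtain ⟨u, hu, w, hw, huw, hz⟩ := E.mem_triBoundary.1 h
  rcases E.arc_vtx huw v hz with rfl | rfl
  exacts [hu, hw]

lemma triBoundary_injOn : Set.InjOn E.triBoundary {t | G.IsNClique 3 t} := by
  intro s hs t ht h
  ext v
  rw [← E.vtx_mem_triBoundary hs, h, E.vtx_mem_triBoundary ht]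

lemma arc_inter_triBoundary_subset {t : Finset V} {u v : V} (h : G.Adj u v)
    (hn : ¬ (u ∈ t ∧ v ∈ t)) : E.arc u v ∩ E.triBoundary t ⊆ {E.vtx u, E.vtx v} := by
  rintro z ⟨hz, hz'⟩
  obtain ⟨x, hx, y, hy, hxy, hz'⟩ := E.mem_triBoundary.1 hz'
  refine (E.arc_inter h hxy (fun he => hn ?_) ⟨hz, hz'⟩).1
  rcases Sym2.eq_iff.1 he with ⟨rfl, rfl⟩ | ⟨rfl, rfl⟩
  exacts [⟨hx, hy⟩, ⟨hy, hx⟩]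

lemma triBoundary_triple [DecidableEq V] {p q r : V} (hpq : G.Adj p q) (hqr : G.Adj q r)
    (hrp : G.Adj r p) : E.triBoundary {p, q, r} = E.arc p q ∪ E.arc q r ∪ E.arc r p := by
  refine Set.Subset.antisymm (fun z hz => ?_) (Set.union_subset (Set.union_subset ?_ ?_) ?_)
  · obtain ⟨u, hu, v, hv, huv, hz⟩ := E.mem_triBoundary.1 hz
    simp only [Finset.mem_insert, Finset.mem_singleton] at hu hv
    have := E.arc_symm u v
    have := huv.ne
    grind
  · exact E.arc_subset_triBoundary (by simp) (by simp) hpq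
  · exact E.arc_subset_triBoundary (by simp) (by simp) hqr
  · exact E.arc_subset_triBoundary (by simp) (by simp) hrp

lemma arc_inter_arc_subset {u v w : V} (huv : G.Adj u v) (hvw : G.Adj v w) (hne : u ≠ w) :
    E.arc u v ∩ E.arc v w ⊆ {E.vtx v} := by
  intro z hz
  have h := E.arc_inter huv hvw (by grind [huv.ne]) hz
  grind [E.vtx_inj.ne huv.ne, E.vtx_inj.ne hvw.ne, E.vtx_inj.ne hne]

lemma disjoint_arc_s16 {u v w x : V} (huv : G.Adj u v) (hwx : G.Adj w x) (huw : u ≠ w)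
    (hux : u ≠ x) (hvw : v ≠ w) (hvx : v ≠ x) : Disjoint (E.arc u v) (E.arc w x) := by
  refine Set.disjoint_left.2 fun z hz hz' => ?_
  have h := E.arc_inter huv hwx (by grind) ⟨hz, hz'⟩
  grind [E.vtx_inj.ne huw, E.vtx_inj.ne hux, E.vtx_inj.ne hvw, E.vtx_inj.ne hvx]

lemma isArc_union {u v w : V} (huv : G.Adj u v) (hvw : G.Adj v w) (hne : u ≠ w) :
    IsArc (E.vtx u) (E.vtx w) (E.arc u v ∪ E.arc v w) :=
  (E.isArc huv).trans (E.isArc hvw) (E.arc_inter_arc_subset huv hvw hne)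

lemma isJordanPair_triangle {p q r : V} (hpq : G.Adj p q) (hqr : G.Adj q r)
    (hrp : G.Adj r p) :
    IsJordanPair (E.vtx p) (E.vtx q) (E.arc p q) (E.arc p r ∪ E.arc r q) where
  left := E.isArc hpq
  right := E.isArc_union hrp.symm hqr.symm hpq.ne
  inter_subset := by
    have hp := E.arc_inter_arc_subset hpq.symm hrp.symm hqr.ne
    have hq := E.arc_inter_arc_subset hpq hqr hrp.ne'
    rw [E.arc_symm q p] at hp
    rw [E.arc_symm q r] at hq
    rintro z ⟨hz, hz' | hz'⟩
    exacts [.inl (hp ⟨hz, hz'⟩), .inr (hq ⟨hz, hz'⟩)]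

lemma isJordanPair_four_cycle {x p r q : V} (hxp : G.Adj x p) (hpr : G.Adj p r)
    (hxq : G.Adj x q) (hqr : G.Adj q r) (hxr : x ≠ r) (hpq : p ≠ q) :
    IsJordanPair (E.vtx x) (E.vtx r) (E.arc x p ∪ E.arc p r) (E.arc x q ∪ E.arc q r) where
  left := E.isArc_union hxp hpr hxr
  right := E.isArc_union hxq hqr hxr
  inter_subset := by
    have hx := E.arc_inter_arc_subset hxp.symm hxq hpq
    have hr := E.arc_inter_arc_subset hpr hqr.symm hpq
    have hxp_qr := Set.disjoint_left.1 (E.disjoint_arc_s16 hxp hqr hxq.ne hxr hpq hpr.ne)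
    have hpr_xq := Set.disjoint_left.1 (E.disjoint_arc_s16 hpr hxq hxp.ne' hpq hxr.symm hqr.ne')
    rw [E.arc_symm p x] at hx
    rw [E.arc_symm r q] at hr
    rintro z ⟨hz | hz, hz' | hz'⟩
    exacts [.inl (hx ⟨hz, hz'⟩), (hxp_qr hz hz').elim, (hpr_xq hz hz').elim, .inr (hr ⟨hz, hz'⟩)]

/-- `R` is a plane region bounded by the drawing of the triangle `t` of `G`; both sides of the
triangle are allowed. -/
structure IsTriRegion (R : Set ℂ) (t : Finset V) : Prop where
  isNClique : G.IsNClique 3 t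
  isRegion : IsRegion R (E.triBoundary t)

variable {E} {R : Set ℂ} {t : Finset V}

namespace IsTriRegion

lemma notMem (h : E.IsTriRegion R t) {v : V} (hv : E.vtx v ∈ R) : v ∉ t := fun hvt =>
  Set.disjoint_left.1 h.isRegion.disjoint hv ((E.vtx_mem_triBoundary h.isNClique).2 hvt)

lemma mem_of_mem_closure (h : E.IsTriRegion R t) {v : V} (hv : E.vtx v ∉ R)
    (hvR : E.vtx v ∈ closure R) : v ∈ t := by
  rw [← E.vtx_mem_triBoundary h.isNClique, ← h.isRegion.frontier_eq,
    h.isRegion.isOpen.frontier_eq]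
  exact ⟨hvR, hv⟩

lemma arc_diff_subset (h : E.IsTriRegion R t) {x v : V} (hx : E.vtx x ∈ R)
    (hxv : G.Adj x v) : E.arc x v \ {E.vtx v} ⊆ R := by
  refine h.isRegion.subset_of_isPreconnected (E.isArc hxv).isPreconnected_diff_right
    (Set.disjoint_left.2 fun z hz hz' => ?_)
    ⟨E.vtx x, ⟨(E.isArc hxv).left_mem, (E.isArc hxv).ne⟩, hx⟩
  rcases E.arc_inter_triBoundary_subset hxv (fun h' => h.notMem hx h'.1) ⟨hz.1, hz'⟩ with rfl | h'
  · exact Set.disjoint_left.1 h.isRegion.disjoint hx hz'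
  · exact hz.2 h'

lemma mem_or_mem_of_adj (h : E.IsTriRegion R t) {x v : V} (hx : E.vtx x ∈ R)
    (hxv : G.Adj x v) : E.vtx v ∈ R ∨ v ∈ t := by
  by_contra! hn
  have hsub : E.arc x v \ {E.vtx x, E.vtx v} ⊆ R :=
    (Set.sdiff_subset_sdiff_right (by simp)).trans (h.arc_diff_subset hx hxv)
  exact hn.2 <| h.mem_of_mem_closure hn.1 <|
    closure_mono hsub ((E.isArc hxv).subset_closure_diff (E.isArc hxv).right_mem)

lemma disjoint_drawing (h : E.IsTriRegion R t) (hv : ∀ v, E.vtx v ∉ R) :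
    Disjoint R E.drawing := by
  rw [Set.disjoint_left]
  rintro z hz (⟨v, rfl⟩ | hz')
  · exact hv v hz
  simp only [Set.mem_iUnion] at hz'
  obtain ⟨u, v, huv, hz'⟩ := hz'
  by_cases hn : u ∈ t ∧ v ∈ t
  · exact Set.disjoint_left.1 h.isRegion.disjoint hz (E.arc_subset_triBoundary hn.1 hn.2 huv hz')
  have ha := E.isArc huv
  have hsub : E.arc u v \ {E.vtx u, E.vtx v} ⊆ R := by
    refine h.isRegion.subset_of_isPreconnected ha.isPreconnected_diff
      (Set.disjoint_left.2 fun w hw hw' => hw.2 (E.arc_inter_triBoundary_subset huv hn ⟨hw.1, hw'⟩))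
      ⟨z, ⟨hz', ?_⟩, hz⟩
    rintro (rfl | rfl)
    exacts [hv u hz, hv v hz]
  exact hn ⟨h.mem_of_mem_closure (hv u) (closure_mono hsub (ha.subset_closure_diff ha.left_mem)),
    h.mem_of_mem_closure (hv v) (closure_mono hsub (ha.subset_closure_diff ha.right_mem))⟩

lemma isFace (h : E.IsTriRegion R t) (hv : ∀ v, E.vtx v ∉ R) : E.IsFace R := by
  obtain ⟨z, hz⟩ := h.isRegion.isConnected.nonempty
  have hd := h.disjoint_drawing hv
  exact ⟨z, Set.disjoint_left.1 hd hz,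
    (h.isRegion.connectedComponentIn_eq hd (E.triBoundary_subset_drawing t) hz).symm⟩

lemma isFacialTriangle (h : E.IsTriRegion R t) (hv : ∀ v, E.vtx v ∉ R) :
    E.IsFacialTriangle t :=
  ⟨h.isNClique, R, h.isFace hv, h.isRegion.frontier_eq⟩

end IsTriRegion

variable [DecidableEq V] {p q r x : V}

/-- The edges from a vertex `x` in the region `R` to the corners of its triangle `p q r` cut `R`
into the triangular regions `R₁`, `R₂`, `R₃`, where `R₁` lies at the side `p q`, `R₂` at `q r` and
`R₃` at `r p`. -/
structure IsSplit (E : PlaneEmbedding G) (R : Set ℂ) (p q r x : V) (R₁ R₂ R₃ : Set ℂ) :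
    Prop where
  region : E.IsTriRegion R {p, q, r}
  mem : E.vtx x ∈ R
  adj₁ : G.Adj x p
  adj₂ : G.Adj x q
  adj₃ : G.Adj x r
  region₁ : E.IsTriRegion R₁ {x, p, q}
  region₂ : E.IsTriRegion R₂ {x, q, r}
  region₃ : E.IsTriRegion R₃ {x, r, p}
  disjoint₁₂ : Disjoint R₁ R₂
  disjoint₂₃ : Disjoint R₂ R₃
  disjoint₁₃ : Disjoint R₁ R₃
  diff_eq : R \ (E.arc x p ∪ E.arc x q ∪ E.arc x r) = R₁ ∪ R₂ ∪ R₃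

namespace IsTriRegion

lemma exists_cut (h : E.IsTriRegion R {p, q, r}) (hx : E.vtx x ∈ R) (hp : G.Adj x p)
    (hq : G.Adj x q) :
    ∃ R₁ H, E.IsTriRegion R₁ {x, p, q} ∧
      IsRegion H (E.arc x p ∪ E.arc p r ∪ (E.arc x q ∪ E.arc q r)) ∧
      Disjoint R₁ H ∧ R \ (E.arc x p ∪ E.arc x q) = R₁ ∪ H := by
  obtain ⟨hpq, hpr, hqr⟩ := is3Clique_triple_iff.1 h.isNClique
  have hJ := E.isJordanPair_triangle hpq hqr hpr.symm
  have hR : IsRegion R (E.arc p q ∪ (E.arc p r ∪ E.arc r q)) := by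
    convert h.isRegion using 1
    rw [E.triBoundary_triple hpq hqr hpr.symm, E.arc_symm r q, E.arc_symm r p]
    ac_rfl
  have hPR : (E.arc p x ∪ E.arc x q) \ {E.vtx p, E.vtx q} ⊆ R := by
    have hxp := h.arc_diff_subset hx hp
    have hxq := h.arc_diff_subset hx hq
    rw [E.arc_symm p x]
    grind
  obtain ⟨R₁, H, hR₁, hH, hdisj, hun⟩ := hR.exists_crosscut hJ
    (E.isArc_union hp.symm hq hpq.ne) hPR
  refine ⟨R₁, H, ⟨is3Clique_triple_iff.2 ⟨hp, hq, hpq⟩, ?_⟩, ?_, hdisj, E.arc_symm p x ▸ hun⟩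
  · convert hR₁ using 1
    rw [E.triBoundary_triple hp hpq hq.symm, E.arc_symm p x, E.arc_symm q x]
    ac_rfl
  · convert hH using 1
    rw [E.arc_symm p x, E.arc_symm r q]
    ac_rfl

lemma arc_diff_subset_of_cut {R₁ H D : Set ℂ} (h : E.IsTriRegion R {p, q, r})
    (hx : E.vtx x ∈ R) (hp : G.Adj x p) (hq : G.Adj x q) (hr : G.Adj x r)
    (h₁ : E.IsTriRegion R₁ {x, p, q}) (hH : IsRegion H D) (hdisj : Disjoint R₁ H)
    (hun : R \ (E.arc x p ∪ E.arc x q) = R₁ ∪ H) :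
    E.arc x r \ {E.vtx x, E.vtx r} ⊆ H := by
  obtain ⟨-, hpr, hqr⟩ := is3Clique_triple_iff.1 h.isNClique
  have ha := E.isArc hr
  have hcut : E.arc x r \ {E.vtx x, E.vtx r} ⊆ R₁ ∪ H := by
    have hxr := h.arc_diff_subset hx hr
    have hxp := E.arc_inter_arc_subset hp.symm hr hpr.ne
    have hxq := E.arc_inter_arc_subset hq.symm hr hqr.ne
    rw [E.arc_symm p x] at hxp
    rw [E.arc_symm q x] at hxq
    rw [← hun]
    rintro z ⟨hz, hzxr⟩
    refine ⟨hxr ⟨hz, fun h => hzxr (.inr h)⟩, ?_⟩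
    rintro (hz' | hz')
    exacts [hzxr (.inl (hxp ⟨hz', hz⟩)), hzxr (.inl (hxq ⟨hz', hz⟩))]
  have hrR : E.vtx r ∉ R₁ := fun h' => h.notMem
    (hun.symm.subset (.inl h') : E.vtx r ∈ R \ (E.arc x p ∪ E.arc x q)).1 (by simp)
  by_contra hn
  obtain ⟨z, hz, hzH⟩ := Set.not_subset.1 hn
  have hsub : E.arc x r \ {E.vtx x, E.vtx r} ⊆ R₁ :=
    ha.isPreconnected_diff.subset_left_of_subset_union h₁.isRegion.isOpen hH.isOpen hdisj hcut
      ⟨z, hz, (hcut hz).resolve_right hzH⟩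
  have hr₁ : r ∈ ({x, p, q} : Finset V) := h₁.mem_of_mem_closure hrR
    (closure_mono hsub (ha.subset_closure_diff ha.right_mem))
  simp [hr.ne', hpr.ne', hqr.ne'] at hr₁

lemma exists_isSplit (h : E.IsTriRegion R {p, q, r}) (hx : E.vtx x ∈ R) (hp : G.Adj x p)
    (hq : G.Adj x q) (hr : G.Adj x r) : ∃ R₁ R₂ R₃, E.IsSplit R p q r x R₁ R₂ R₃ := by
  obtain ⟨hpq, hpr, hqr⟩ := is3Clique_triple_iff.1 h.isNClique
  obtain ⟨R₁, H, h₁, hH, hdisj, hun⟩ := h.exists_cut hx hp hq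
  have hxr := h.arc_diff_subset_of_cut hx hp hq hr h₁ hH hdisj hun
  obtain ⟨R₃, R₂, h₃, h₂, hdisj', hun'⟩ := hH.exists_crosscut
    (E.isJordanPair_four_cycle hp hpr hq hqr hr.ne hpq.ne) (E.isArc hr) hxr
  have hsub : R₃ ∪ R₂ ⊆ H := hun' ▸ Set.sdiff_subset
  have hR₁ : Disjoint R₁ (E.arc x r) := by
    refine Set.disjoint_left.2 fun z hz hz' => ?_
    by_cases hzxr : z ∈ ({E.vtx x, E.vtx r} : Set ℂ)
    · rcases hzxr with rfl | rfl
      · exact h₁.notMem hz (by simp)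
      · exact h.notMem (hun.symm.subset (.inl hz)).1 (by simp)
    · exact Set.disjoint_left.1 hdisj hz (hxr ⟨hz', hzxr⟩)
  refine ⟨R₁, R₂, R₃, h, hx, hp, hq, hr, h₁, ⟨is3Clique_triple_iff.2 ⟨hq, hr, hqr⟩, ?_⟩,
    ⟨is3Clique_triple_iff.2 ⟨hr, hp, hpr.symm⟩, ?_⟩,
    hdisj.mono_right (Set.subset_union_right.trans hsub), hdisj'.symm,
    hdisj.mono_right (Set.subset_union_left.trans hsub), ?_⟩
  · convert h₂ using 1
    rw [E.triBoundary_triple hq hqr hr.symm, E.arc_symm r x]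
  · convert h₃ using 1
    rw [E.triBoundary_triple hr hpr.symm hp.symm, E.arc_symm p x, E.arc_symm r p]
    ac_rfl
  · rw [← Set.sdiff_sdiff, hun, Set.union_sdiff_distrib, hun', hR₁.sdiff_eq_left,
      Set.union_assoc, Set.union_comm R₃]

end IsTriRegion

end PlaneEmbedding

section ThreeTrees

variable {G : SimpleGraph V} {f : V → ℕ}

/-- `f` ranks the vertices of a 3-tree `G` in an order of construction: the vertices of rank at
least three are those added to the initial triangle. -/
structure IsConstructionRank (G : SimpleGraph V) (f : V → ℕ) : Prop where
  injective : Function.Injective f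
  exists_triangle : ∀ v, 3 ≤ f v → ∃ s : Finset V, G.IsNClique 3 s ∧ (∀ u ∈ s, f u < f v) ∧
    ∀ u, f u < f v → (G.Adj v u ↔ u ∈ s)

lemma Is3Tree.exists_isConstructionRank (h : Is3Tree G) :
    ∃ f : V → ℕ, IsConstructionRank G f := by
  obtain ⟨n, e, -, hstep⟩ := h
  refine ⟨fun v => e.symm v, Fin.val_injective.comp e.symm.injective, fun v hv => ?_⟩
  obtain ⟨s, hs, hlt, hadj⟩ := hstep (e.symm v) hv
  refine ⟨s, hs, fun u hu => ?_, fun u hu => by simpa using hadj (e.symm u) hu⟩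
  obtain ⟨i, hi, rfl⟩ := hlt u hu
  simpa using hi

lemma Is3Tree.finite (h : Is3Tree G) : Finite V := by
  obtain ⟨n, e, -⟩ := h
  exact Finite.of_equiv _ e

namespace IsConstructionRank

lemma exists_three_le (hf : IsConstructionRank G f) {t : Finset V} (ht : t.card = 3) {x : V}
    (hx : x ∉ t) (hfx : f x < 3) : ∃ v ∈ t, 3 ≤ f v := by
  by_contra! h
  have himage : t.image f = Finset.range 3 :=
    Finset.eq_of_subset_of_card_le (by simpa [Finset.subset_iff] using h)
      (by rw [Finset.card_image_of_injective t hf.injective, ht, Finset.card_range])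
  obtain ⟨v, hv, hvx⟩ := Finset.mem_image.1 (himage.symm.subset (Finset.mem_range.2 hfx))
  exact hx (hf.injective hvx ▸ hv)

lemma exists_exchange [DecidableEq V] (hf : IsConstructionRank G f) {t : Finset V}
    (ht : G.IsNClique 3 t) (hlarge : ∃ v ∈ t, 3 ≤ f v) :
    ∃ v ∈ t, ∃ w ∉ t, (∀ u ∈ t, G.Adj w u) ∧ G.IsNClique 3 (insert w (t.erase v)) ∧
      3 ≤ f v ∧ ∀ u ∈ insert w (t.erase v), f u < f v := by
  obtain ⟨v, hv, hmax⟩ := t.exists_max_image f (hlarge.imp fun _ h => h.1)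
  have hv3 : 3 ≤ f v := hlarge.elim fun u hu => hu.2.trans (hmax u hu.1)
  obtain ⟨s, hs, hlt, hadj⟩ := hf.exists_triangle v hv3
  have hts : t.erase v ⊆ s := fun u hu => by
    obtain ⟨huv, hut⟩ := Finset.mem_erase.1 hu
    exact (hadj u ((hmax u hut).lt_of_ne (hf.injective.ne huv))).1 (ht.isClique hv hut huv.symm)
  have hcard : (t.erase v).card = 2 := by rw [Finset.card_erase_of_mem hv, ht.card_eq]
  obtain ⟨w, hws, hwt⟩ := Finset.exists_mem_notMem_of_card_lt_card
    (s := t.erase v) (t := s) (by rw [hcard, hs.card_eq]; norm_num)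
  obtain rfl : insert w (t.erase v) = s :=
    Finset.eq_of_subset_of_card_le (Finset.insert_subset hws hts)
      (by rw [Finset.card_insert_of_notMem hwt, hcard, hs.card_eq])
  have hwv : w ≠ v := fun h => (hlt w hws).ne (h ▸ rfl)
  refine ⟨v, hv, w, fun h => hwt (Finset.mem_erase.2 ⟨hwv, h⟩), fun u hu => ?_, hs, hv3, hlt⟩
  by_cases huv : u = v
  · exact huv ▸ ((hadj w (hlt w hws)).2 hws).symm
  · have hut := Finset.mem_erase.2 ⟨huv, hu⟩
    exact hs.isClique hws (hts hut) fun h => hwt (h ▸ hut)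

/-- Either the vertex of `X` of least rank works, or the triangle `t` is exchanged for one of
smaller rank. -/
lemma exists_adj_forall_mem (hf : IsConstructionRank G f) (k : ℕ) :
    ∀ {t : Finset V} {X : Set V}, G.IsNClique 3 t → (∀ v ∈ t, f v < k) → X.Nonempty →
      (∀ v ∈ X, f v < k) → (∀ v ∈ X, v ∉ t) →
      (∀ x ∈ X, ∀ v, f v < k → G.Adj x v → v ∈ X ∨ v ∈ t) → ∃ x ∈ X, ∀ v ∈ t, G.Adj x v := by
  classical
  induction k using Nat.strong_induction_on with
  | _ k ih =>
    intro t X ht htk hX hXk hXt hcl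
    obtain ⟨x, hx, hmin⟩ := (InvImage.wf f wellFounded_lt).has_min X hX
    rcases lt_or_ge (f x) 3 with hx3 | hx3
    · obtain ⟨v, hv, w, hwt, hadj, hs, hv3, hlt⟩ :=
        hf.exists_exchange ht (hf.exists_three_le ht.card_eq (hXt x hx) hx3)
      by_cases hwX : w ∈ X
      · exact ⟨w, hwX, hadj⟩
      obtain ⟨y, hy, hys⟩ := ih (f v) (htk v hv) hs hlt (X := {u ∈ X | f u < f v})
        ⟨x, hx, hx3.trans_le hv3⟩ (fun u hu => hu.2)
        (fun u hu hus => (Finset.mem_insert.1 hus).elim (fun h => hwX (h ▸ hu.1))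
          fun h => hXt u hu.1 (Finset.mem_of_mem_erase h))
        fun y hy u hu hyu => (hcl y hy.1 u (hu.trans (htk v hv)) hyu).imp (⟨·, hu⟩) fun h =>
          Finset.mem_insert_of_mem (Finset.mem_erase.2 ⟨fun huv => hu.ne (huv ▸ rfl), h⟩)
      have hw : w ∈ insert w (t.erase v) := Finset.mem_insert_self _ _
      exact ((hcl y hy.1 w ((hlt w hw).trans (htk v hv)) (hys w hw)).elim hwX hwt).elim
    · obtain ⟨s, hs, hlt, hadj⟩ := hf.exists_triangle x hx3
      have hst : s ⊆ t := fun u hu =>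
        (hcl x hx u ((hlt u hu).trans (hXk x hx)) ((hadj u (hlt u hu)).2 hu)).resolve_left
          fun huX => hmin u huX (hlt u hu)
      obtain rfl := Finset.eq_of_subset_of_card_le hst (by rw [hs.card_eq, ht.card_eq])
      exact ⟨x, hx, fun u hu => (hadj u (hlt u hu)).2 hu⟩

end IsConstructionRank

lemma Is3Tree.exists_adj_forall_mem (h : Is3Tree G) {t : Finset V} {X : Set V}
    (ht : G.IsNClique 3 t) (hX : X.Nonempty) (hXt : ∀ v ∈ X, v ∉ t)
    (hcl : ∀ x ∈ X, ∀ v, G.Adj x v → v ∈ X ∨ v ∈ t) : ∃ x ∈ X, ∀ v ∈ t, G.Adj x v := by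
  have := h.finite
  obtain ⟨f, hf⟩ := h.exists_isConstructionRank
  obtain ⟨k, hk⟩ := (Set.finite_range f).bddAbove
  have hlt : ∀ v, f v < k + 1 := fun v => Nat.lt_succ_of_le (hk ⟨v, rfl⟩)
  exact hf.exists_adj_forall_mem (k + 1) ht (fun v _ => hlt v) hX (fun v _ => hlt v) hXt
    fun x hx v _ => hcl x hx v

end ThreeTrees

lemma isFaceOf_iff_mem {D S : Set ℂ} {𝓕 : Set (Set ℂ)} (hcover : ⋃₀ 𝓕 = Dᶜ)
    (h : ∀ T ∈ 𝓕, ∃ B ⊆ D, IsRegion T B) : IsFaceOf D S ↔ S ∈ 𝓕 := by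
  have hcomp : ∀ T ∈ 𝓕, ∀ z ∈ T, connectedComponentIn Dᶜ z = T := fun T hT z hz => by
    obtain ⟨B, hBD, hB⟩ := h T hT
    have hTD : T ⊆ Dᶜ := hcover ▸ Set.subset_sUnion_of_mem hT
    exact hB.connectedComponentIn_eq (Set.subset_compl_iff_disjoint_right.1 hTD) hBD hz
  constructor
  · rintro ⟨z, hz, rfl⟩
    obtain ⟨T, hT, hzT⟩ := hcover.symm.subset hz
    exact (hcomp T hT z hzT).symm ▸ hT
  · intro hS
    obtain ⟨B, -, hB⟩ := h S hS
    obtain ⟨z, hz⟩ := hB.isConnected.nonempty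
    exact ⟨z, hcover.subset ⟨S, hS, hz⟩, (hcomp S hS z hz).symm⟩

namespace PlaneEmbedding

variable {G : SimpleGraph V} {E : PlaneEmbedding G} {F R : Set ℂ} {s t : Finset V}

lemma arc_subset_drawing {u v : V} (h : G.Adj u v) : E.arc u v ⊆ E.drawing := fun _ hz =>
  .inr (by simpa only [Set.mem_iUnion] using ⟨u, v, h, hz⟩)

lemma triBoundary_mono (h : s ⊆ t) : E.triBoundary s ⊆ E.triBoundary t := fun _ hz =>
  let ⟨_, hu, _, hv, huv, hz⟩ := E.mem_triBoundary.1 hz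
  E.arc_subset_triBoundary (h hu) (h hv) huv hz

lemma subDrawing_eq_triBoundary {K : Finset V} (hK : G.IsClique K) (hnt : K.Nontrivial) :
    E.subDrawing K = E.triBoundary K := by
  refine Set.union_eq_right.2 ?_
  rintro _ ⟨v, hv, rfl⟩
  exact E.vtx_mem_triBoundary_of_mem hK hnt hv

lemma triBoundary_insert [DecidableEq V] {x : V} (h : ∀ v ∈ t, G.Adj x v) :
    E.triBoundary (insert x t) = E.triBoundary t ∪ ⋃ v ∈ t, E.arc x v := by
  refine Set.Subset.antisymm (fun z hz => ?_) (Set.union_subset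
    (triBoundary_mono (Finset.subset_insert x t)) (Set.iUnion₂_subset fun v hv =>
      E.arc_subset_triBoundary (Finset.mem_insert_self x t) (Finset.mem_insert_of_mem hv) (h v hv)))
  obtain ⟨u, hu, v, hv, huv, hz'⟩ := E.mem_triBoundary.1 hz
  rcases Finset.mem_insert.1 hu with rfl | hut
  · exact .inr (Set.mem_biUnion (Finset.mem_of_mem_insert_of_ne hv huv.ne') hz')
  rcases Finset.mem_insert.1 hv with rfl | hvt
  · exact .inr (Set.mem_biUnion hut (E.arc_symm u _ ▸ hz'))
  · exact .inl (E.arc_subset_triBoundary hut hvt huv hz')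

lemma isClosed_drawing [Finite V] : IsClosed E.drawing :=
  (Set.finite_range _).isClosed.union <| isClosed_iUnion_of_finite fun _ =>
    isClosed_iUnion_of_finite fun _ => isClosed_iUnion_of_finite fun h =>
      (E.isArc h).isCompact.isClosed

lemma insideCount_eq_zero_iff [Finite V] : E.insideCount R = 0 ↔ ∀ v, E.vtx v ∉ R := by
  rw [insideCount, Set.ncard_eq_zero (Set.toFinite _), Set.eq_empty_iff_forall_notMem]
  rfl

lemma insideCount_ne_zero_iff [Finite V] : E.insideCount R ≠ 0 ↔ ∃ v, E.vtx v ∈ R := by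
  simp [insideCount_eq_zero_iff]

namespace IsFace

lemma subset_compl (h : E.IsFace F) : F ⊆ E.drawingᶜ := by
  obtain ⟨z, -, rfl⟩ := h
  exact connectedComponentIn_subset _ _

lemma isConnected (h : E.IsFace F) : IsConnected F := by
  obtain ⟨z, hz, rfl⟩ := h
  exact isConnected_connectedComponentIn_iff.2 hz

lemma vtx_notMem (h : E.IsFace F) (v : V) : E.vtx v ∉ F := fun hv =>
  h.subset_compl hv (.inl ⟨v, rfl⟩)

lemma isTriRegion [Finite V] (h : E.IsFace F) (ht : G.IsNClique 3 t)
    (hf : frontier F = E.triBoundary t) : E.IsTriRegion F t := by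
  refine ⟨ht, ?_, h.isConnected, hf⟩
  obtain ⟨z, -, rfl⟩ := h
  exact isClosed_drawing.isOpen_compl.connectedComponentIn

lemma subset_triRegion (hF : E.IsFace F) (hR : E.IsTriRegion R t) (hne : (F ∩ R).Nonempty) :
    F ⊆ R :=
  hR.isRegion.subset_of_isPreconnected hF.isConnected.isPreconnected
    (Set.disjoint_left.2 fun _ hz hz' =>
      hF.subset_compl hz (E.triBoundary_subset_drawing t hz')) hne

end IsFace

/-- The triangles of `G` bounding a face of `E` that lies inside the region `R`. -/
def facialIn (E : PlaneEmbedding G) (R : Set ℂ) : Set (Finset V) :=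
  {s | G.IsNClique 3 s ∧ ∃ F, E.IsFace F ∧ F ⊆ R ∧ frontier F = E.triBoundary s}

lemma IsTriRegion.facialIn_subset (h : E.IsTriRegion R t) (hv : ∀ v, E.vtx v ∉ R) :
    E.facialIn R ⊆ {t} := by
  rintro s ⟨hs, F, hF, hFR, hfr⟩
  obtain ⟨z, hz, rfl⟩ := hF
  rw [h.isRegion.connectedComponentIn_eq (h.disjoint_drawing hv) (E.triBoundary_subset_drawing t)
    (hFR (mem_connectedComponentIn hz)), h.isRegion.frontier_eq] at hfr
  exact E.triBoundary_injOn hs h.isNClique hfr.symm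

lemma IsTriRegion.mem_facialIn (hR : E.IsTriRegion R t) (hs : G.IsNClique 3 s) (hF : E.IsFace F)
    (hfr : frontier F = E.triBoundary s) (hne : (F ∩ R).Nonempty) : s ∈ E.facialIn R :=
  ⟨hs, F, hF, hF.subset_triRegion hR hne, hfr⟩

section Split

variable [DecidableEq V] {p q r x : V} {R₁ R₂ R₃ : Set ℂ}

namespace IsSplit

lemma rotate (h : E.IsSplit R p q r x R₁ R₂ R₃) : E.IsSplit R q r p x R₂ R₃ R₁ where
  region := (by grind : ({p, q, r} : Finset V) = {q, r, p}) ▸ h.region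
  mem := h.mem
  adj₁ := h.adj₂
  adj₂ := h.adj₃
  adj₃ := h.adj₁
  region₁ := h.region₂
  region₂ := h.region₃
  region₃ := h.region₁
  disjoint₁₂ := h.disjoint₂₃
  disjoint₂₃ := h.disjoint₁₃.symm
  disjoint₁₃ := h.disjoint₁₂.symm
  diff_eq := by
    convert h.diff_eq using 1
    · rw [Set.union_assoc (E.arc x p), Set.union_comm (E.arc x p)]
    · rw [Set.union_assoc R₁, Set.union_comm R₁]

lemma union_subset (h : E.IsSplit R p q r x R₁ R₂ R₃) : R₁ ∪ R₂ ∪ R₃ ⊆ R :=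
  h.diff_eq ▸ Set.sdiff_subset

lemma vtx_mem_iff (h : E.IsSplit R p q r x R₁ R₂ R₃) {v : V} :
    E.vtx v ∈ R ↔ v = x ∨ E.vtx v ∈ R₁ ∪ R₂ ∪ R₃ := by
  refine ⟨fun hv => or_iff_not_imp_left.2 fun hvx => ?_, ?_⟩
  · have hnot : ∀ w ∈ ({p, q, r} : Finset V), G.Adj x w → E.vtx v ∉ E.arc x w :=
      fun w hw hxw hvw => h.region.notMem hv <|
        ((E.arc_vtx hxw v hvw).resolve_left hvx).symm ▸ hw
    rw [← h.diff_eq]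
    exact ⟨hv, by simp [hnot, h.adj₁, h.adj₂, h.adj₃]⟩
  · rintro (rfl | hv)
    exacts [h.mem, h.union_subset hv]

lemma insideCount_eq [Finite V] (h : E.IsSplit R p q r x R₁ R₂ R₃) :
    E.insideCount R = E.insideCount R₁ + E.insideCount R₂ + E.insideCount R₃ + 1 := by
  have hset : E.vtx ⁻¹' R = insert x (E.vtx ⁻¹' R₁ ∪ E.vtx ⁻¹' R₂ ∪ E.vtx ⁻¹' R₃) := by
    ext v
    exact h.vtx_mem_iff
  have hx : x ∉ E.vtx ⁻¹' R₁ ∪ E.vtx ⁻¹' R₂ ∪ E.vtx ⁻¹' R₃ := by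
    rintro ((hx | hx) | hx)
    exacts [h.region₁.notMem hx (by simp), h.region₂.notMem hx (by simp),
      h.region₃.notMem hx (by simp)]
  change (E.vtx ⁻¹' R).ncard = (E.vtx ⁻¹' R₁).ncard + (E.vtx ⁻¹' R₂).ncard +
    (E.vtx ⁻¹' R₃).ncard + 1
  rw [hset, Set.ncard_insert_of_notMem hx, Set.ncard_union_eq, Set.ncard_union_eq]
  · exact h.disjoint₁₂.preimage _
  · exact (h.disjoint₁₃.preimage _).union_left (h.disjoint₂₃.preimage _)

lemma facialIn_subset (h : E.IsSplit R p q r x R₁ R₂ R₃) :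
    E.facialIn R ⊆ E.facialIn R₁ ∪ E.facialIn R₂ ∪ E.facialIn R₃ := by
  rintro s ⟨hs, F, hF, hFR, hfr⟩
  obtain ⟨z, hz⟩ := hF.isConnected.nonempty
  have hnot : ∀ v, G.Adj x v → z ∉ E.arc x v := fun v hv hz' =>
    hF.subset_compl hz (arc_subset_drawing hv hz')
  have hz' : z ∈ R₁ ∪ R₂ ∪ R₃ := h.diff_eq ▸
    ⟨hFR hz, by simp [hnot, h.adj₁, h.adj₂, h.adj₃]⟩
  exact hz'.imp (Or.imp (fun hz' => h.region₁.mem_facialIn hs hF hfr ⟨z, hz, hz'⟩)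
    fun hz' => h.region₂.mem_facialIn hs hF hfr ⟨z, hz, hz'⟩)
    fun hz' => h.region₃.mem_facialIn hs hF hfr ⟨z, hz, hz'⟩

end IsSplit

lemma IsTriRegion.exists_isSplit_of_is3Tree (h : E.IsTriRegion R {p, q, r}) (h3 : Is3Tree G)
    (hne : ∃ v, E.vtx v ∈ R) : ∃ x R₁ R₂ R₃, E.IsSplit R p q r x R₁ R₂ R₃ := by
  obtain ⟨x, hx, hadj⟩ := h3.exists_adj_forall_mem (X := {v | E.vtx v ∈ R}) h.isNClique hne
    (fun _ => h.notMem) fun _ hx _ => h.mem_or_mem_of_adj hx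
  exact ⟨x, h.exists_isSplit hx (hadj p (by simp)) (hadj q (by simp)) (hadj r (by simp))⟩

lemma IsSplit.isFaceOf_iff (h : E.IsSplit R p q r x R₁ R₂ R₃) (hF : E.IsTriRegion F {p, q, r})
    (hd : Disjoint F R) (hu : F ∪ R = (E.triBoundary {p, q, r})ᶜ) {S : Set ℂ} :
    IsFaceOf (E.subDrawing (insert x {p, q, r})) S ↔ S = F ∨ S = R₁ ∨ S = R₂ ∨ S = R₃ := by
  have hadj : ∀ v ∈ ({p, q, r} : Finset V), G.Adj x v := by simp [h.adj₁, h.adj₂, h.adj₃]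
  have hK := h.region.isNClique.insert hadj
  rw [subDrawing_eq_triBoundary hK.isClique (Finset.one_lt_card_iff_nontrivial.1
    (by rw [hK.card_eq]; norm_num))]
  have harc : Disjoint F (⋃ v ∈ ({p, q, r} : Finset V), E.arc x v) := by
    simp only [Set.disjoint_iUnion_right]
    refine fun v hv => Set.disjoint_left.2 fun z hz hz' => ?_
    by_cases hzv : z = E.vtx v
    · exact hF.notMem (hzv ▸ hz) hv
    · exact Set.disjoint_left.1 hd hz (h.region.arc_diff_subset h.mem (hadj v hv) ⟨hz', hzv⟩)
  refine isFaceOf_iff_mem (𝓕 := {F, R₁, R₂, R₃}) ?_ ?_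
  · rw [triBoundary_insert hadj, Set.compl_union, ← hu, ← Set.sdiff_eq, Set.union_sdiff_distrib,
      harc.sdiff_eq_left]
    simp [← h.diff_eq, Set.sUnion_insert, ← Set.union_assoc]
  · rintro T (rfl | rfl | rfl | rfl)
    exacts [⟨_, triBoundary_mono (by simp), hF.isRegion⟩,
      ⟨_, triBoundary_mono (by grind), h.region₁.isRegion⟩,
      ⟨_, triBoundary_mono (by grind), h.region₂.isRegion⟩,
      ⟨_, triBoundary_mono (by grind), h.region₃.isRegion⟩]

end Split

namespace IsTriRegion

lemma ncard_facialIn_le (h : E.IsTriRegion R t) (h3 : Is3Tree G) :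
    (E.facialIn R).ncard ≤ 2 * E.insideCount R + 1 := by
  classical
  have := h3.finite
  induction hm : E.insideCount R using Nat.strong_induction_on generalizing R t with
  | _ m ih =>
    by_cases hne : ∃ v, E.vtx v ∈ R
    · obtain ⟨p, q, r, -, -, -, rfl⟩ := is3Clique_iff.1 h.isNClique
      obtain ⟨x, R₁, R₂, R₃, hs⟩ := h.exists_isSplit_of_is3Tree h3 hne
      have hc := hs.insideCount_eq
      have h₁ := ih _ (by lia) hs.region₁ rfl
      have h₂ := ih _ (by lia) hs.region₂ rfl
      have h₃ := ih _ (by lia) hs.region₃ rfl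
      have hle := Set.ncard_le_ncard hs.facialIn_subset
      have hu := Set.ncard_union_le (E.facialIn R₁ ∪ E.facialIn R₂) (E.facialIn R₃)
      have hu' := Set.ncard_union_le (E.facialIn R₁) (E.facialIn R₂)
      lia
    · have hle := Set.ncard_le_ncard (h.facialIn_subset (not_exists.1 hne))
      rw [Set.ncard_singleton] at hle
      lia

lemma exists_compl (h : E.IsTriRegion F t) :
    ∃ R, E.IsTriRegion R t ∧ Disjoint F R ∧ F ∪ R = (E.triBoundary t)ᶜ := by
  classical
  obtain ⟨p, q, r, hpq, hpr, hqr, rfl⟩ := is3Clique_iff.1 h.isNClique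
  have hb : E.arc p q ∪ (E.arc p r ∪ E.arc r q) = E.triBoundary {p, q, r} := by
    rw [E.triBoundary_triple hpq hqr hpr.symm, E.arc_symm r q, E.arc_symm r p]
    ac_rfl
  obtain ⟨R, hR, hd, hu⟩ :=
    (E.isJordanPair_triangle hpq hqr hpr.symm).exists_isRegion_compl (hb ▸ h.isRegion)
  rw [hb] at hR hu
  exact ⟨R, ⟨h.isNClique, hR⟩, hd, hu⟩

end IsTriRegion

lemma IsFace.ncard_isFacialTriangle_le (hF : E.IsFace F) (h3 : Is3Tree G)
    (hFt : E.IsTriRegion F t) (hR : E.IsTriRegion R t) (hu : F ∪ R = (E.triBoundary t)ᶜ) :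
    {s : Finset V | E.IsFacialTriangle s}.ncard ≤ 2 * E.insideCount R + 2 := by
  have := h3.finite
  have hsub : {s : Finset V | E.IsFacialTriangle s} ⊆ {t} ∪ E.facialIn R := by
    rintro s ⟨hs, S, hS, hfr⟩
    obtain ⟨z, hz⟩ := hS.isConnected.nonempty
    have hzFR : z ∈ F ∪ R := hu.symm ▸ fun hzt =>
      hS.subset_compl hz (E.triBoundary_subset_drawing t hzt)
    exact hzFR.imp
      (fun hz' => hFt.facialIn_subset hF.vtx_notMem (hFt.mem_facialIn hs hS hfr ⟨z, hz, hz'⟩))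
      fun hz' => hR.mem_facialIn hs hS hfr ⟨z, hz, hz'⟩
  have hle := Set.ncard_le_ncard hsub
  have hadd := Set.ncard_union_le {t} (E.facialIn R)
  have hR' := hR.ncard_facialIn_le h3
  rw [Set.ncard_singleton] at hadd
  lia

end PlaneEmbedding

section EdgeDisjoint

variable {s s' : Finset V}

/-- Edge-disjointness of cliques: no two distinct vertices are common to `s` and `s'`. -/
def EdgeDisjoint (s s' : Finset V) : Prop := ((s : Set V) ∩ s').Subsingleton

lemma EdgeDisjoint.symm (h : EdgeDisjoint s s') : EdgeDisjoint s' s := by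
  rwa [EdgeDisjoint, Set.inter_comm]

instance : Std.Symm (EdgeDisjoint (V := V)) := ⟨fun _ _ => EdgeDisjoint.symm⟩

lemma EdgeDisjoint.ne (h : EdgeDisjoint s s') (hs : 1 < s.card) : s ≠ s' := by
  rintro rfl
  rw [EdgeDisjoint, Set.inter_self] at h
  exact hs.not_ge (Finset.card_le_one_iff_subsingleton.2 h)

end EdgeDisjoint

namespace PlaneEmbedding

variable {G : SimpleGraph V} {E : PlaneEmbedding G} {R : Set ℂ} {s s' t : Finset V}
  {P Q : Finset (Finset V)} {e e' : Set V} {k : ℕ}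

/-- A set of pairwise edge-disjoint facial triangles. -/
structure IsFacialPacking (E : PlaneEmbedding G) (P : Finset (Finset V)) : Prop where
  isFacialTriangle : ∀ s ∈ P, E.IsFacialTriangle s
  pairwise : (P : Set (Finset V)).Pairwise EdgeDisjoint

namespace IsFacialPacking

lemma isTrianglePacking (h : E.IsFacialPacking P) : IsTrianglePacking G P := by
  refine ⟨fun s hs => (h.isFacialTriangle s hs).1, fun s hs s' hs' hne e => ?_⟩
  induction e using Sym2.ind with
  | _ u v =>
    rintro huv ⟨hes, hes'⟩
    exact (G.mem_edgeSet.1 huv).ne (h.pairwise hs hs' hne ⟨hes u (by simp), hes' u (by simp)⟩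
      ⟨hes v (by simp), hes' v (by simp)⟩)

lemma empty : E.IsFacialPacking ∅ := ⟨by simp, by simp⟩

lemma singleton (hs : E.IsFacialTriangle s) : E.IsFacialPacking {s} :=
  ⟨by simpa using hs, by simp⟩

lemma union [DecidableEq V] (hP : E.IsFacialPacking P) (hQ : E.IsFacialPacking Q)
    (h : ∀ s ∈ P, ∀ s' ∈ Q, EdgeDisjoint s s') :
    E.IsFacialPacking (P ∪ Q) ∧ (P ∪ Q).card = P.card + Q.card := by
  refine ⟨⟨fun s hs => (Finset.mem_union.1 hs).elim (hP.1 s) (hQ.1 s), ?_⟩,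
    Finset.card_union_of_disjoint (Finset.disjoint_left.2 fun s hs hs' => ?_)⟩
  · rw [Finset.coe_union, Set.pairwise_union_of_symm]
    exact ⟨hP.pairwise, hQ.pairwise, fun s hs s' hs' _ => h s hs s' hs'⟩
  · refine (h s hs s hs').ne ?_ rfl
    rw [(hP.isFacialTriangle s hs).1.card_eq]
    norm_num

end IsFacialPacking

/-- The vertices of `s` lie in the region `R` or on its triangle `t`, and any edge that `s` shares
with `t` joins vertices of `e`. -/
structure IsInner (E : PlaneEmbedding G) (R : Set ℂ) (t : Finset V) (e : Set V)
    (s : Finset V) : Prop where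
  mem_or_mem : ∀ v ∈ s, E.vtx v ∈ R ∨ v ∈ t
  edgeDisjoint_or_subset : EdgeDisjoint s t ∨ (s : Set V) ∩ t ⊆ e

/-- There are `k` pairwise edge-disjoint facial triangles in the region `R` of the triangle `t` that
use no side of `t` other than one joining vertices of `e`. -/
def Offers (E : PlaneEmbedding G) (R : Set ℂ) (t : Finset V) (e : Set V) (k : ℕ) : Prop :=
  ∃ P : Finset (Finset V), E.IsFacialPacking P ∧ P.card = k ∧ ∀ s ∈ P, E.IsInner R t e s

lemma Offers.mono (h : E.Offers R t e k) (he : e ⊆ e') : E.Offers R t e' k :=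
  let ⟨P, hP, hk, hin⟩ := h
  ⟨P, hP, hk, fun s hs => ⟨(hin s hs).1, (hin s hs).2.imp_right (·.trans he)⟩⟩

lemma Offers.zero : E.Offers R t e 0 := ⟨∅, .empty, rfl, by simp⟩

lemma Offers.one (hs : E.IsFacialTriangle s) (hin : E.IsInner R t e s) : E.Offers R t e 1 :=
  ⟨{s}, .singleton hs, rfl, by simpa using hin⟩

lemma Offers.two (hs : E.IsFacialTriangle s) (hs' : E.IsFacialTriangle s')
    (hd : EdgeDisjoint s s') (hin : E.IsInner R t e s) (hin' : E.IsInner R t e s') :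
    E.Offers R t e 2 := by
  classical
  obtain ⟨hP, hcard⟩ := (IsFacialPacking.singleton hs).union (.singleton hs') (by simpa using hd)
  exact ⟨_, hP, hcard, by simpa using ⟨hin, hin'⟩⟩

variable {p q r x y u v a b c : V} {R₁ R₂ R₃ : Set ℂ}

namespace IsTriRegion

section DecidableEq

variable [DecidableEq V]

lemma isInner_of_mem (h : E.IsTriRegion R t) (hx : E.vtx x ∈ R) (hu : u ∈ t) (hv : v ∈ t) :
    E.IsInner R t {u, v} {x, u, v} := by
  have hxt := h.notMem hx
  refine ⟨by simp [hx, hu, hv], .inr fun w hw => ?_⟩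
  simp only [Finset.coe_insert, Finset.coe_singleton, Set.mem_inter_iff, Set.mem_insert_iff,
    Set.mem_singleton_iff, SetLike.mem_coe] at hw ⊢
  grind

lemma isInner_of_mem_of_mem (h : E.IsTriRegion R t) (hy : E.vtx y ∈ R) (hx : E.vtx x ∈ R)
    (hv : v ∈ t) : E.IsInner R t e {y, x, v} := by
  have hxt := h.notMem hx
  have hyt := h.notMem hy
  refine ⟨by simp [hx, hy, hv], .inl fun w hw w' hw' => ?_⟩
  simp only [Finset.coe_insert, Finset.coe_singleton, Set.mem_inter_iff, Set.mem_insert_iff,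
    Set.mem_singleton_iff, SetLike.mem_coe] at hw hw'
  grind

lemma offers_two_of_isFacialTriangle (h : E.IsTriRegion R t) (hx : E.vtx x ∈ R)
    (hy : E.vtx y ∈ R) (ha : a ∈ t) (hb : b ∈ t) (hc : c ∈ t) (hca : c ≠ a) (hcb : c ≠ b)
    (hs : E.IsFacialTriangle {x, a, b}) (hs' : E.IsFacialTriangle {y, x, c}) :
    E.Offers R t {a, b} 2 := by
  have hxt := h.notMem hx
  have hyt := h.notMem hy
  have hyx := (is3Clique_triple_iff.1 hs'.1).1.ne
  refine .two hs hs' (fun w hw w' hw' => ?_) (h.isInner_of_mem hx ha hb)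
    (h.isInner_of_mem_of_mem hy hx hc)
  simp only [Finset.coe_insert, Finset.coe_singleton, Set.mem_inter_iff, Set.mem_insert_iff,
    Set.mem_singleton_iff] at hw hw'
  grind

lemma exists_isFacialTriangle_of_insideCount_eq_one (h : E.IsTriRegion R t) (h3 : Is3Tree G)
    (hc : E.insideCount R = 1) : ∃ x, E.vtx x ∈ R ∧
      ∀ u ∈ t, ∀ v ∈ t, u ≠ v → E.IsFacialTriangle {x, u, v} := by
  have := h3.finite
  obtain ⟨p, q, r, -, -, -, rfl⟩ := is3Clique_iff.1 h.isNClique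
  obtain ⟨x, R₁, R₂, R₃, hs⟩ :=
    h.exists_isSplit_of_is3Tree h3 (insideCount_ne_zero_iff.1 (by lia))
  have hsum := hs.insideCount_eq
  have h₁ := hs.region₁.isFacialTriangle (insideCount_eq_zero_iff.1 (by lia))
  have h₂ := hs.region₂.isFacialTriangle (insideCount_eq_zero_iff.1 (by lia))
  have h₃ := hs.region₃.isFacialTriangle (insideCount_eq_zero_iff.1 (by lia))
  refine ⟨x, hs.mem, fun u hu v hv huv => ?_⟩
  simp only [Finset.mem_insert, Finset.mem_singleton] at hu hv
  rcases hu with rfl | rfl | rfl <;> rcases hv with rfl | rfl | rfl <;>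
    simp_all [Finset.pair_comm]

lemma exists_isSplit_of_insideCount_eq_two (h : E.IsTriRegion R t) (h3 : Is3Tree G)
    (hc : E.insideCount R = 2) : ∃ p q r x R₁ R₂ R₃, t = {p, q, r} ∧
      E.IsSplit R p q r x R₁ R₂ R₃ ∧ E.insideCount R₁ = 1 ∧ E.insideCount R₂ = 0 ∧
      E.insideCount R₃ = 0 := by
  have := h3.finite
  obtain ⟨p, q, r, -, -, -, rfl⟩ := is3Clique_iff.1 h.isNClique
  obtain ⟨x, R₁, R₂, R₃, hs⟩ :=
    h.exists_isSplit_of_is3Tree h3 (insideCount_ne_zero_iff.1 (by lia))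
  have hsum := hs.insideCount_eq
  obtain h₁ | h₂ | h₃ :
      E.insideCount R₁ = 1 ∨ E.insideCount R₂ = 1 ∨ E.insideCount R₃ = 1 := by lia
  · exact ⟨p, q, r, x, R₁, R₂, R₃, rfl, hs, by lia⟩
  · exact ⟨q, r, p, x, R₂, R₃, R₁, by grind, hs.rotate, by lia⟩
  · exact ⟨r, p, q, x, R₃, R₁, R₂, by grind, hs.rotate.rotate, by lia⟩

end DecidableEq

lemma exists_offers_two (h : E.IsTriRegion R t) (h3 : Is3Tree G) (hc : E.insideCount R = 2) :
    E.Offers R t ∅ 1 ∧ ∀ a ∈ t, ∃ b ∈ t, b ≠ a ∧ E.Offers R t {a, b} 2 := by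
  classical
  have := h3.finite
  obtain ⟨p, q, r, x, R₁, R₂, R₃, rfl, hs, h₁, h₂, h₃⟩ :=
    h.exists_isSplit_of_insideCount_eq_two h3 hc
  obtain ⟨hpq, hpr, hqr⟩ := is3Clique_triple_iff.1 h.isNClique
  obtain ⟨y, hyR₁, hy⟩ := hs.region₁.exists_isFacialTriangle_of_insideCount_eq_one h3 h₁
  have hyR : E.vtx y ∈ R := hs.union_subset (.inl (.inl hyR₁))
  have hyp := hy x (by simp) p (by simp) hs.adj₁.ne
  have hyq := hy x (by simp) q (by simp) hs.adj₂.ne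
  have hqr₂ : E.Offers R {p, q, r} {q, r} 2 :=
    h.offers_two_of_isFacialTriangle hs.mem hyR (by simp) (by simp) (by simp) hpq.ne hpr.ne
      (hs.region₂.isFacialTriangle (insideCount_eq_zero_iff.1 h₂)) hyp
  have hrp₂ : E.Offers R {p, q, r} {r, p} 2 :=
    h.offers_two_of_isFacialTriangle hs.mem hyR (by simp) (by simp) (by simp) hqr.ne hpq.ne'
      (hs.region₃.isFacialTriangle (insideCount_eq_zero_iff.1 h₃)) hyq
  refine ⟨.one hyp (h.isInner_of_mem_of_mem hyR hs.mem (by simp)), ?_⟩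
  intro a ha
  simp only [Finset.mem_insert, Finset.mem_singleton] at ha
  rcases ha with rfl | rfl | rfl
  exacts [⟨r, by simp, hpr.ne', Set.pair_comm r _ ▸ hrp₂⟩, ⟨r, by simp, hqr.ne', hqr₂⟩,
    ⟨p, by simp, hpr.ne, hrp₂⟩]

lemma offers_one (h : E.IsTriRegion R t) (h3 : Is3Tree G) (hc : E.insideCount R = 1)
    (hu : u ∈ t) (hv : v ∈ t) (huv : u ≠ v) : E.Offers R t {u, v} 1 := by
  classical
  obtain ⟨x, hx, hfacial⟩ := h.exists_isFacialTriangle_of_insideCount_eq_one h3 hc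
  exact .one (hfacial u hu v hv huv) (h.isInner_of_mem hx hu hv)

lemma offers_min (h : E.IsTriRegion R t) (h3 : Is3Tree G) (hc : E.insideCount R ≤ 2)
    (hu : u ∈ t) (hv : v ∈ t) (huv : u ≠ v) :
    E.Offers R t {u, v} (min 1 (E.insideCount R)) := by
  obtain h₀ | h₁ | h₂ : E.insideCount R = 0 ∨ E.insideCount R = 1 ∨ E.insideCount R = 2 := by
    lia
  · rw [h₀]
    exact .zero
  · rw [h₁]
    exact h.offers_one h3 h₁ hu hv huv
  · rw [h₂]
    exact (h.exists_offers_two h3 h₂).1.mono (Set.empty_subset _)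

end IsTriRegion

variable [DecidableEq V]

namespace IsSplit

lemma mem_of_mem_of_mem (h : E.IsSplit R p q r x R₁ R₂ R₃)
    (h₁ : E.vtx v ∈ R₁ ∨ v ∈ ({x, p, q} : Finset V))
    (h₂ : E.vtx v ∈ R₂ ∨ v ∈ ({x, q, r} : Finset V)) :
    v ∈ ({x, p, q} : Finset V) ∧ v ∈ ({x, q, r} : Finset V) := by
  have hR : E.vtx v ∈ R₁ ∨ E.vtx v ∈ R₂ → v ∉ ({p, q, r} : Finset V) := fun hv =>
    h.region.notMem (h.union_subset (.inl hv))
  have hR₁ : E.vtx v ∈ R₁ → v ∉ ({x, p, q} : Finset V) := h.region₁.notMem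
  have hR₂ : E.vtx v ∈ R₂ → v ∉ ({x, q, r} : Finset V) := h.region₂.notMem
  have hR₁₂ : E.vtx v ∈ R₁ → E.vtx v ∉ R₂ := fun hv => Set.disjoint_left.1 h.disjoint₁₂ hv
  simp only [Finset.mem_insert, Finset.mem_singleton] at *
  tauto

lemma edgeDisjoint (h : E.IsSplit R p q r x R₁ R₂ R₃) (hab : a ≠ b)
    (hs : E.IsInner R₁ {x, p, q} {x, a} s) (hs' : E.IsInner R₂ {x, q, r} {x, b} s') :
    EdgeDisjoint s s' := by
  have hcommon : ∀ v ∈ s, v ∈ s' → v ∈ ({x, p, q} : Finset V) ∧ v ∈ ({x, q, r} : Finset V) :=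
    fun v hv hv' => h.mem_of_mem_of_mem (hs.mem_or_mem v hv) (hs'.mem_or_mem v hv')
  have hsub : (s : Set V) ∩ s' ⊆ s ∩ ({x, p, q} : Finset V) := fun v hv =>
    ⟨hv.1, (hcommon v hv.1 hv.2).1⟩
  have hsub' : (s : Set V) ∩ s' ⊆ s' ∩ ({x, q, r} : Finset V) := fun v hv =>
    ⟨hv.2, (hcommon v hv.1 hv.2).2⟩
  rcases hs.edgeDisjoint_or_subset with hd | he
  · exact hd.anti hsub
  rcases hs'.edgeDisjoint_or_subset with hd' | he'
  · exact hd'.anti hsub'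
  have hx : (s : Set V) ∩ s' ⊆ {x} := fun v hv => by
    rcases he (hsub hv) with hvx | hva
    · exact hvx
    · exact (he' (hsub' hv)).resolve_right fun hvb => hab (hva.symm.trans hvb)
  exact Set.subsingleton_singleton.anti hx

lemma edgeDisjoint_outer (h : E.IsSplit R p q r x R₁ R₂ R₃)
    (hs : E.IsInner R₁ {x, p, q} {x, a} s) : EdgeDisjoint s {p, q, r} := by
  have hsub : (s : Set V) ∩ ({p, q, r} : Finset V) ⊆ s ∩ ({x, p, q} : Finset V) := fun v hv =>
    ⟨hv.1, (hs.mem_or_mem v hv.1).resolve_left fun hvR =>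
      h.region.notMem (h.union_subset (.inl (.inl hvR))) hv.2⟩
  rcases hs.edgeDisjoint_or_subset with hd | he
  · exact hd.anti hsub
  · refine Set.subsingleton_singleton.anti (t := {a}) fun v hv => ?_
    exact (he (hsub hv)).resolve_left fun hvx => h.region.notMem h.mem (hvx ▸ hv.2)

end IsSplit

/-- There are `k` pairwise edge-disjoint facial triangles, one of which is `t`. -/
def HasFacialPacking (E : PlaneEmbedding G) (t : Finset V) (k : ℕ) : Prop :=
  ∃ P : Finset (Finset V), E.IsFacialPacking P ∧ t ∈ P ∧ P.card = k

namespace IsSplit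

lemma hasFacialPacking_of_offers (h : E.IsSplit R p q r x R₁ R₂ R₃)
    (ht : E.IsFacialTriangle {p, q, r}) {k₁ k₂ k₃ : ℕ} (hab : a ≠ b) (hbc : b ≠ c) (hca : c ≠ a)
    (h₁ : E.Offers R₁ {x, p, q} {x, a} k₁) (h₂ : E.Offers R₂ {x, q, r} {x, b} k₂)
    (h₃ : E.Offers R₃ {x, r, p} {x, c} k₃) :
    E.HasFacialPacking {p, q, r} (k₁ + k₂ + k₃ + 1) := by
  obtain ⟨P₁, hP₁, rfl, hin₁⟩ := h₁
  obtain ⟨P₂, hP₂, rfl, hin₂⟩ := h₂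
  obtain ⟨P₃, hP₃, rfl, hin₃⟩ := h₃
  have hrot : ({q, r, p} : Finset V) = {p, q, r} := by grind
  have hrot' : ({r, p, q} : Finset V) = {p, q, r} := by grind
  obtain ⟨hP₁₂, hcard₁₂⟩ := hP₁.union hP₂ fun s hs s' hs' =>
    h.edgeDisjoint hab (hin₁ s hs) (hin₂ s' hs')
  obtain ⟨hP₁₂₃, hcard₁₂₃⟩ := hP₁₂.union hP₃ fun s hs s' hs' =>
    (Finset.mem_union.1 hs).elim
      (fun hs => (h.rotate.rotate.edgeDisjoint hca (hin₃ s' hs') (hin₁ s hs)).symm)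
      fun hs => h.rotate.edgeDisjoint hbc (hin₂ s hs) (hin₃ s' hs')
  have houter : ∀ s ∈ P₁ ∪ P₂ ∪ P₃, EdgeDisjoint s {p, q, r} := fun s hs => by
    simp only [Finset.mem_union] at hs
    rcases hs with (hs | hs) | hs
    exacts [h.edgeDisjoint_outer (hin₁ s hs), hrot ▸ h.rotate.edgeDisjoint_outer (hin₂ s hs),
      hrot' ▸ h.rotate.rotate.edgeDisjoint_outer (hin₃ s hs)]
  obtain ⟨hP, hcard⟩ := hP₁₂₃.union (.singleton ht) (by simpa using houter)
  exact ⟨_, hP, by simp, by rw [hcard, hcard₁₂₃, hcard₁₂, Finset.card_singleton]⟩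

lemma hasFacialPacking_of_insideCount_eq_two (h : E.IsSplit R p q r x R₁ R₂ R₃) (h3 : Is3Tree G)
    (ht : E.IsFacialTriangle {p, q, r}) (h₁ : E.insideCount R₁ = 2) (h₂ : E.insideCount R₂ ≤ 2)
    (h₃ : E.insideCount R₃ ≤ 2) :
    E.HasFacialPacking {p, q, r}
      (2 + min 1 (E.insideCount R₂) + min 1 (E.insideCount R₃) + 1) := by
  obtain ⟨hpq, hpr, hqr⟩ := is3Clique_triple_iff.1 h.region.isNClique
  have hp := h.adj₁.ne
  have hq := h.adj₂.ne
  have hr := h.adj₃.ne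
  obtain ⟨a, ha, hax, hoff⟩ := (h.region₁.exists_offers_two h3 h₁).2 x (by simp)
  have hapq : a = p ∨ a = q := by grind
  rcases hapq with rfl | rfl
  · exact h.hasFacialPacking_of_offers ht hpq.ne hqr.ne hpr.ne' hoff
      (h.region₂.offers_min h3 h₂ (by simp) (by simp) hq)
      (h.region₃.offers_min h3 h₃ (by simp) (by simp) hr)
  · exact h.hasFacialPacking_of_offers ht hqr.ne hpr.ne' hpq.ne hoff
      (h.region₂.offers_min h3 h₂ (by simp) (by simp) hr)
      (h.region₃.offers_min h3 h₃ (by simp) (by simp) hp)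

lemma hasFacialPacking_six (h : E.IsSplit R p q r x R₁ R₂ R₃) (h3 : Is3Tree G)
    (ht : E.IsFacialTriangle {p, q, r}) (h₁ : E.insideCount R₁ = 2) (h₂ : E.insideCount R₂ = 2)
    (h₃ : E.insideCount R₃ = 2) : E.HasFacialPacking {p, q, r} 6 := by
  obtain ⟨hpq, hpr, hqr⟩ := is3Clique_triple_iff.1 h.region.isNClique
  obtain ⟨a, ha, hax, hoff₁⟩ := (h.region₁.exists_offers_two h3 h₁).2 x (by simp)
  obtain ⟨b, hb, hbx, hoff₂⟩ := (h.region₂.exists_offers_two h3 h₂).2 x (by simp)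
  obtain ⟨c, hc, hcx, hoff₃⟩ := (h.region₃.exists_offers_two h3 h₃).2 x (by simp)
  by_cases hab : a = b
  · have hca : c ≠ a := by
      simp only [Finset.mem_insert, Finset.mem_singleton] at ha hb hc
      have := hpq.ne
      have := hpr.ne
      have := hqr.ne
      grind
    exact h.hasFacialPacking_of_offers ht hax hcx.symm hca hoff₁
      ((h.region₂.exists_offers_two h3 h₂).1.mono (Set.empty_subset _)) hoff₃
  · exact h.hasFacialPacking_of_offers ht hab hbx hax.symm hoff₁ hoff₂
      ((h.region₃.exists_offers_two h3 h₃).1.mono (Set.empty_subset _))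

lemma exists_hasFacialPacking (h : E.IsSplit R p q r x R₁ R₂ R₃) (h3 : Is3Tree G)
    (ht : E.IsFacialTriangle {p, q, r}) (h₁ : E.insideCount R₁ = 2) (h₂ : E.insideCount R₂ ≤ 2)
    (h₃ : E.insideCount R₃ ≤ 2) :
    ∃ k, E.HasFacialPacking {p, q, r} k ∧ (2 * E.insideCount R + 4) / 3 ≤ k := by
  have := h3.finite
  have hsum := h.insideCount_eq
  by_cases h₂₃ : E.insideCount R₂ = 2 ∧ E.insideCount R₃ = 2
  · exact ⟨6, h.hasFacialPacking_six h3 ht h₁ h₂₃.1 h₂₃.2, by lia⟩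
  · exact ⟨_, h.hasFacialPacking_of_insideCount_eq_two h3 ht h₁ h₂ h₃, by lia⟩

end IsSplit

lemma IsFacialTriangle.exists_isSplit_of_isNClique_four {K : Finset V} (h3 : Is3Tree G)
    (ht : E.IsFacialTriangle t) (hK : G.IsNClique 4 K) (htK : t ⊆ K) :
    ∃ p q r x F R R₁ R₂ R₃, t = {p, q, r} ∧ E.IsSplit R p q r x R₁ R₂ R₃ ∧ E.insideCount F = 0 ∧
      {s : Finset V | E.IsFacialTriangle s}.ncard ≤ 2 * E.insideCount R + 2 ∧
      ∀ S, IsFaceOf (E.subDrawing K) S ↔ S = F ∨ S = R₁ ∨ S = R₂ ∨ S = R₃ := by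
  have := h3.finite
  obtain ⟨htc, F, hF, hfr⟩ := ht
  obtain ⟨x, hxK, hxt⟩ := Finset.exists_mem_notMem_of_card_lt_card (s := t) (t := K)
    (by rw [htc.card_eq, hK.card_eq]; norm_num)
  obtain rfl : insert x t = K := Finset.eq_of_subset_of_card_le (Finset.insert_subset hxK htK)
    (by rw [Finset.card_insert_of_notMem hxt, htc.card_eq, hK.card_eq])
  have hadj : ∀ v ∈ t, G.Adj x v := fun v hv =>
    hK.isClique hxK (htK hv) fun hxv => hxt (hxv ▸ hv)
  have hFt := hF.isTriRegion htc hfr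
  obtain ⟨R, hR, hFR, hun⟩ := hFt.exists_compl
  have hxR : E.vtx x ∈ R := by
    have hxFR : E.vtx x ∈ F ∪ R := by rwa [hun, Set.mem_compl_iff, E.vtx_mem_triBoundary htc]
    exact hxFR.resolve_left (hF.vtx_notMem x)
  obtain ⟨p, q, r, -, -, -, rfl⟩ := is3Clique_iff.1 htc
  obtain ⟨R₁, R₂, R₃, hs⟩ := hR.exists_isSplit hxR (hadj p (by simp)) (hadj q (by simp))
    (hadj r (by simp))
  exact ⟨p, q, r, x, F, R, R₁, R₂, R₃, rfl, hs, insideCount_eq_zero_iff.2 hF.vtx_notMem,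
    hF.ncard_isFacialTriangle_le h3 hFt hR hun, fun S => hs.isFaceOf_iff hFt hFR hun⟩

end PlaneEmbedding

namespace PlaneEmbedding

variable {G : SimpleGraph V} {E : PlaneEmbedding G} {K t : Finset V}

lemma IsFacialTriangle.exists_isSplit_insideCount_eq_two [DecidableEq V] (h3 : Is3Tree G)
    (ht : E.IsFacialTriangle t) (hK : G.IsNClique 4 K) (htK : t ⊆ K)
    (hr : ∃ F : Set ℂ, IsFaceOf (E.subDrawing K) F ∧ E.insideCount F = 2) :
    ∃ p q r x F R R₁ R₂ R₃, t = {p, q, r} ∧ E.IsSplit R p q r x R₁ R₂ R₃ ∧ E.insideCount F = 0 ∧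
      E.insideCount R₁ = 2 ∧ {s : Finset V | E.IsFacialTriangle s}.ncard ≤ 2 * E.insideCount R + 2 ∧
      ∀ S, IsFaceOf (E.subDrawing K) S ↔ S = F ∨ S = R₁ ∨ S = R₂ ∨ S = R₃ := by
  obtain ⟨p, q, r, x, F, R, R₁, R₂, R₃, rfl, hs, hF, hcard, hface⟩ :=
    ht.exists_isSplit_of_isNClique_four h3 hK htK
  obtain ⟨S, hS, hS₂⟩ := hr
  rcases (hface S).1 hS with rfl | rfl | rfl | rfl
  · lia
  · exact ⟨p, q, r, x, F, R, S, R₂, R₃, rfl, hs, hF, hS₂, hcard, hface⟩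
  · exact ⟨q, r, p, x, F, R, S, R₃, R₁, by grind, hs.rotate, hF, hS₂, hcard, by grind⟩
  · exact ⟨r, p, q, x, F, R, S, R₁, R₂, by grind, hs.rotate.rotate, hF, hS₂, hcard, by grind⟩

end PlaneEmbedding

theorem restricted_planar_three_tree_packing_general {G : SimpleGraph V} (h3 : Is3Tree G)
    (E : PlaneEmbedding G) {K t : Finset V} (hK : G.IsNClique 4 K) (ht : E.IsFacialTriangle t)
    (htK : t ⊆ K) (hr_le : ∀ F : Set ℂ, IsFaceOf (E.subDrawing K) F → E.insideCount F ≤ 2)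
    (hr_eq : ∃ F : Set ℂ, IsFaceOf (E.subDrawing K) F ∧ E.insideCount F = 2) :
    (∃ P : Finset (Finset V), (∀ s ∈ P, E.IsFacialTriangle s) ∧ IsTrianglePacking G P ∧ t ∈ P ∧
      ({s : Finset V | E.IsFacialTriangle s}.ncard + 2) / 3 ≤ P.card) ∧
    ((∃ F₁ F₂ : Set ℂ, F₁ ≠ F₂ ∧ IsFaceOf (E.subDrawing K) F₁ ∧ IsFaceOf (E.subDrawing K) F₂ ∧
        E.insideCount F₁ = 1 ∧ E.insideCount F₂ = 1) →
      ∃ P : Finset (Finset V), (∀ s ∈ P, E.IsFacialTriangle s) ∧ IsTrianglePacking G P ∧ t ∈ P ∧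
        P.card = 5) := by
  classical
  obtain ⟨p, q, r, x, F, R, R₁, R₂, R₃, rfl, hs, hF, h₁, hcard, hface⟩ :=
    ht.exists_isSplit_insideCount_eq_two h3 hK htK hr_eq
  have h₂ : E.insideCount R₂ ≤ 2 := hr_le R₂ ((hface R₂).2 (by simp))
  have h₃ : E.insideCount R₃ ≤ 2 := hr_le R₃ ((hface R₃).2 (by simp))
  constructor
  · obtain ⟨k, ⟨P, hP, htP, rfl⟩, hk⟩ := hs.exists_hasFacialPacking h3 ht h₁ h₂ h₃
    exact ⟨P, hP.isFacialTriangle, hP.isTrianglePacking, htP, by lia⟩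
  · rintro ⟨F₁, F₂, hne, hF₁, hF₂, hc₁, hc₂⟩
    have hmem : ∀ S, IsFaceOf (E.subDrawing K) S → E.insideCount S = 1 → S = R₂ ∨ S = R₃ := by
      intro S hS hc
      rcases (hface S).1 hS with rfl | rfl | h
      exacts [by lia, by lia, h]
    have hone : E.insideCount R₂ = 1 ∧ E.insideCount R₃ = 1 := by
      rcases hmem F₁ hF₁ hc₁, hmem F₂ hF₂ hc₂ with ⟨rfl | rfl, rfl | rfl⟩
      exacts [(hne rfl).elim, ⟨hc₁, hc₂⟩, ⟨hc₂, hc₁⟩, (hne rfl).elim]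
    obtain ⟨P, hP, htP, hPcard⟩ := hs.hasFacialPacking_of_insideCount_eq_two h3 ht h₁ h₂ h₃
    exact ⟨P, hP.isFacialTriangle, hP.isTrianglePacking, htP, by lia⟩

/-- For an arbitrary plane embedding of a restricted planar 3-tree `G` (a planar 3-tree
different from `K₃` whose root clique `K` — the `K₄` containing the external facial
triangle — has at most two vertices of `G` inside each of its faces, and exactly two
inside some face), with `f` facial triangles, there is a packing of pairwise
edge-disjoint facial triangles containing the external facial triangle of size at least
`⌈f/3⌉`; moreover if `G` is super restricted (exactly two faces of the root clique
contain precisely one vertex inside), there is such a packing of size exactly `5`. -/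
theorem restricted_planar_three_tree_packing (V : Type) [Fintype V]
    (G : SimpleGraph V) (h3 : Is3Tree G)
    (hK3 : ¬ Nonempty (G ≃g (⊤ : SimpleGraph (Fin 3))))
    (E : PlaneEmbedding G) (K : Finset V) (hK : G.IsNClique 4 K)
    (hroot : ∃ t : Finset V, E.IsExternalFacialTriangle t ∧ t ⊆ K)
    (hr_le : ∀ F : Set ℂ, IsFaceOf (E.subDrawing K) F → E.insideCount F ≤ 2)
    (hr_eq : ∃ F : Set ℂ, IsFaceOf (E.subDrawing K) F ∧ E.insideCount F = 2) :
    (∃ P : Finset (Finset V),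
      (∀ t ∈ P, E.IsFacialTriangle t) ∧ IsTrianglePacking G P ∧
      (∃ t ∈ P, E.IsExternalFacialTriangle t) ∧
      ({t : Finset V | E.IsFacialTriangle t}.ncard + 2) / 3 ≤ P.card) ∧
    ((∃ F₁ F₂ : Set ℂ, F₁ ≠ F₂ ∧
        IsFaceOf (E.subDrawing K) F₁ ∧ IsFaceOf (E.subDrawing K) F₂ ∧
        E.insideCount F₁ = 1 ∧ E.insideCount F₂ = 1 ∧
        ∀ F : Set ℂ, IsFaceOf (E.subDrawing K) F → E.insideCount F = 1 →
          F = F₁ ∨ F = F₂) →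
      ∃ P : Finset (Finset V),
        (∀ t ∈ P, E.IsFacialTriangle t) ∧ IsTrianglePacking G P ∧
        (∃ t ∈ P, E.IsExternalFacialTriangle t) ∧ P.card = 5) := by
  obtain ⟨t, ht, htK⟩ := hroot
  have hfacial : E.IsFacialTriangle t := ht.imp_right fun ⟨F, hF, _, hfr⟩ => ⟨F, hF, hfr⟩
  obtain ⟨⟨P, hP, hpack, htP, hcard⟩, hfive⟩ :=
    restricted_planar_three_tree_packing_general h3 E hK hfacial htK hr_le hr_eq
  refine ⟨⟨P, hP, hpack, ⟨t, htP, ht⟩, hcard⟩, fun ⟨F₁, F₂, hne, hF₁, hF₂, hc₁, hc₂, _⟩ => ?_⟩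
  obtain ⟨P, hP, hpack, htP, hcard⟩ := hfive ⟨F₁, F₂, hne, hF₁, hF₂, hc₁, hc₂⟩
  exact ⟨P, hP, hpack, ⟨t, htP, ht⟩, hcard⟩
end

section
/- In any planar embedding of a planar 3-tree G on n ≥ 4 vertices, every facial triangle of G is contained in a subgraph of G isomorphic to K4. -/
open SimpleGraph

variable {V : Type*}

/-!
Consider the last vertex of a clique in a construction ordering of the 3-tree. If it was attached
to a triangle, then the clique lies in the `K₄` formed by this vertex and that triangle. Otherwise
the clique lies among the first three vertices, and the fourth vertex can only have been attached
to exactly these three.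
-/

section CliqueOrdering

variable {G : SimpleGraph V} {k m : ℕ} {e : Fin m ≃ V}

/-- A construction ordering in the sense of `k`-trees, for arbitrary `k`: from index `k` on, the
neighbours of a vertex among the earlier vertices form a `k`-clique. The first `k` vertices get
no clause of their own: if there is a next vertex, they are the clique it is attached to. -/
def IsKTreeOrdering (G : SimpleGraph V) (k : ℕ) {m : ℕ} (e : Fin m ≃ V) : Prop :=
  ∀ j : Fin m, k ≤ j →
    ∃ s : Finset V, G.IsNClique k s ∧ (s : Set V) = G.neighborSet (e j) ∩ e '' Set.Iio j

theorem Is3Tree.exists_isKTreeOrdering (h : Is3Tree G) :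
    ∃ (n : ℕ) (e : Fin (n + 3) ≃ V), IsKTreeOrdering G 3 e := by
  obtain ⟨n, e, -, attach⟩ := h
  refine ⟨n, e, fun j hj => ?_⟩
  obtain ⟨s, hs, earlier, adj_iff⟩ := attach j hj
  refine ⟨s, hs, Set.Subset.antisymm (fun v hv => ?_) ?_⟩
  · obtain ⟨i, hij, rfl⟩ := earlier v hv
    exact ⟨(adj_iff i hij).2 hv, i, hij, rfl⟩
  · rintro _ ⟨hadj, i, hij, rfl⟩
    exact (adj_iff i hij).1 hadj

theorem subset_insert_neighborSet_inter_of_isClique {t A : Set V} {v : V} (ht : G.IsClique t)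
    (hv : v ∈ t) (htA : t ⊆ insert v A) : t ⊆ insert v (G.neighborSet v ∩ A) := by
  intro w hw
  rcases eq_or_ne w v with rfl | hne
  · exact Set.mem_insert w _
  · exact Or.inr ⟨ht hv hw hne.symm, (htA hw).resolve_left hne⟩

theorem ncard_image_Iio {f : Fin m → V} (hf : f.Injective) (j : Fin m) :
    (f '' Set.Iio j).ncard = j := by
  rw [Set.ncard_image_of_injective _ hf, Set.ncard_eq_toFinset_card', Set.toFinset_Iio,
    Fin.card_Iio]

theorem coe_eq_image_Iio_of_subset {f : Fin m → V} (hf : f.Injective) {s : Finset V} {j : Fin m}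
    (hcard : s.card = j) (hs : (s : Set V) ⊆ f '' Set.Iio j) : (s : Set V) = f '' Set.Iio j :=
  Set.eq_of_subset_of_ncard_le hs (by rw [ncard_image_Iio hf, Set.ncard_coe_finset, hcard])
    (Set.toFinite _)

theorem exists_mem_and_subset_image_Iic {ι : Type*} [LinearOrder ι] [Finite ι] {f : ι → V}
    (hf : f.Surjective) {t : Set V} (ht : t.Nonempty) : ∃ j, f j ∈ t ∧ t ⊆ f '' Set.Iic j := by
  obtain ⟨j, hj, hmax⟩ := Set.exists_max_image (f ⁻¹' t) id (Set.toFinite _) (ht.preimage hf)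
  refine ⟨j, hj, fun w hw => ?_⟩
  obtain ⟨i, rfl⟩ := hf w
  exact ⟨i, hmax i hw, rfl⟩

theorem IsKTreeOrdering.exists_subset_insert (he : IsKTreeOrdering G k e) (hkm : k < m)
    {t : Set V} (ht : G.IsClique t) :
    ∃ (v : V) (s : Finset V), G.IsNClique k s ∧ (s : Set V) ⊆ G.neighborSet v ∧
      t ⊆ insert v (s : Set V) := by
  by_cases initial : t ⊆ e '' Set.Iio ⟨k, hkm⟩
  · obtain ⟨s, hs, hsN⟩ := he ⟨k, hkm⟩ le_rfl
    have hs_initial : (s : Set V) = e '' Set.Iio ⟨k, hkm⟩ :=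
      coe_eq_image_Iio_of_subset e.injective hs.card_eq (hsN.subset.trans Set.inter_subset_right)
    exact ⟨_, s, hs, hsN.subset.trans Set.inter_subset_left,
      (initial.trans hs_initial.superset).trans (Set.subset_insert _ _)⟩
  · have ht_nonempty : t.Nonempty :=
      Set.nonempty_iff_ne_empty.2 fun h => initial (h ▸ Set.empty_subset _)
    obtain ⟨j, hjt, htj⟩ := exists_mem_and_subset_image_Iic e.surjective ht_nonempty
    have hkj : k ≤ j := by
      by_contra! hjk
      exact initial (htj.trans (Set.image_mono (Set.Iic_subset_Iio.2 hjk)))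
    obtain ⟨s, hs, hsN⟩ := he j hkj
    rw [← Set.Iio_insert, Set.image_insert_eq] at htj
    exact ⟨e j, s, hs, hsN.subset.trans Set.inter_subset_left,
      hsN ▸ subset_insert_neighborSet_inter_of_isClique ht hjt htj⟩

theorem IsKTreeOrdering.exists_isNClique_succ (he : IsKTreeOrdering G k e) (hkm : k < m)
    {t : Set V} (ht : G.IsClique t) : ∃ s : Finset V, t ⊆ s ∧ G.IsNClique (k + 1) s := by
  classical
  obtain ⟨v, s, hs, hadj, hts⟩ := he.exists_subset_insert hkm ht
  exact ⟨insert v s, by rwa [Finset.coe_insert], hs.insert fun _ hw => hadj hw⟩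

theorem facial_triangle_in_K4_general (h3 : Is3Tree G) (hn : 4 ≤ Nat.card V) {t : Set V}
    (ht : G.IsClique t) : ∃ s : Finset V, t ⊆ s ∧ G.IsNClique 4 s := by
  obtain ⟨n, e, he⟩ := h3.exists_isKTreeOrdering
  have hcard : n + 3 = Nat.card V := by rw [← Nat.card_congr e, Nat.card_fin]
  exact he.exists_isNClique_succ (by lia) ht

end CliqueOrdering

/-- In any plane embedding of a planar 3-tree on at least four vertices, every facial
triangle is contained in a copy of `K₄`. -/
theorem facial_triangle_in_K4 (V : Type) [Fintype V] (G : SimpleGraph V)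
    (h3 : Is3Tree G) (hn : 4 ≤ Fintype.card V) (E : PlaneEmbedding G)
    (t : Finset V) (ht : E.IsFacialTriangle t) :
    ∃ s : Finset V, t ⊆ s ∧ G.IsNClique 4 s := by
  rw [← Nat.card_eq_fintype_card] at hn
  exact mod_cast facial_triangle_in_K4_general h3 hn ht.1.isClique
end
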